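/- arXiv:1708.03257 — 8 statements merged into one kernel-verified Lean document; each statement's English description precedes it below -/
import Mathlib

section
/- There is a universal constant C such that the following holds. Let α < 1/2, let d be a positive integer, σ ≥ 0, let p be a polynomial of degree at most d, and let m ≥ C·d/(1−2α) be a positive integer. Suppose the samples (x_1,y_1),…,(x_n,y_n) ∈ [-1,1]×ℝ are α-good for the size-m Chebyshev partition with respect to p and σ. Then any polynomial p̂ of degree at most d minimizing the ℓ1-regression objective Σ_{j=1}^m |I_j| · (mean over i with x_i ∈ I_j of |y_i − q(x_i)|) over degree-d polynomials q satisfies ‖p̂ − p‖_1 ≤ 4σ/(1−2α). -/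
open Polynomial

/-- The `j`-th interval of the size-`m` Chebyshev partition of `[-1,1]`. -/
noncomputable def chebInterval (m j : ℕ) : Set ℝ :=
  Set.Icc (Real.cos (Real.pi * j / m)) (Real.cos (Real.pi * ((j : ℝ) - 1) / m))

/-- The length `|I_j|` of the `j`-th interval of the size-`m` Chebyshev partition. -/
noncomputable def chebLen (m j : ℕ) : ℝ :=
  Real.cos (Real.pi * ((j : ℝ) - 1) / m) - Real.cos (Real.pi * j / m)

open Classical in
/-- The set `S_j` of indices of samples falling in the interval `I_j`. -/
noncomputable def sampleSet {n : ℕ} (m j : ℕ) (x : Fin n → ℝ) : Finset (Fin n) :=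
  Finset.univ.filter (fun i => x i ∈ chebInterval m j)

open Classical in
/-- The samples `(x_i, y_i)` are `α`-good for the size-`m` Chebyshev partition with respect to
the polynomial `p` and the noise level `σ`: every interval contains a sample point and strictly
fewer than an `α` fraction of the samples in each interval are outliers
(i.e. have `|y_i - p(x_i)| > σ`). -/
def AlphaGood {n : ℕ} (m : ℕ) (x y : Fin n → ℝ) (p : Polynomial ℝ) (σ α : ℝ) : Prop :=
  ∀ j ∈ Finset.Icc 1 m, (sampleSet m j x).Nonempty ∧
    (((sampleSet m j x).filter (fun i => σ < |y i - p.eval (x i)|)).card : ℝ) <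
      α * ((sampleSet m j x).card : ℝ)

/-- The `ℓ1` regression objective
`∑_j |I_j| · (mean over i with x_i ∈ I_j of |y_i − q(x_i)|)`. -/
noncomputable def l1Obj {n : ℕ} (m : ℕ) (x y : Fin n → ℝ) (q : Polynomial ℝ) : ℝ :=
  ∑ j ∈ Finset.Icc 1 m, chebLen m j *
    ((∑ i ∈ sampleSet m j x, |y i - q.eval (x i)|) / ((sampleSet m j x).card : ℝ))


namespace L1Reg

/-- Sum of powers of a root of unity. -/
lemma root_sum {M : ℕ} (ω : ℂ) (h : IsPrimitiveRoot ω M) (t : ℤ) :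
    ∑ k ∈ Finset.range M, (ω ^ t) ^ k = if (M : ℤ) ∣ t then (M : ℂ) else 0 := by
  split_ifs with hd
  · have : ω ^ t = 1 := (h.zpow_eq_one_iff_dvd t).2 hd
    simp [this]
  · have h1 : ω ^ t ≠ 1 := fun hh => hd ((h.zpow_eq_one_iff_dvd t).1 hh)
    have h2 : (ω ^ t) ^ M = 1 := by
      rw [← zpow_natCast, ← zpow_mul, mul_comm, zpow_mul, zpow_natCast, h.pow_eq_one, one_zpow]
    have h3 := mul_geom_sum (ω ^ t) M
    rw [h2, sub_self] at h3
    exact (mul_eq_zero.1 h3).resolve_left (sub_ne_zero.2 h1)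

lemma count_pairs (N j : ℕ) (hj : j ≤ N) :
    ∑ a ∈ Finset.range N, ∑ b ∈ Finset.range N, (if a + b + 1 = j then (1 : ℂ) else 0) = j := by
  have : ∀ a ∈ Finset.range N, ∑ b ∈ Finset.range N, (if a + b + 1 = j then (1 : ℂ) else 0)
      = if a < j then 1 else 0 := by
    intro a ha
    split_ifs with h
    · rw [Finset.sum_eq_single (j - 1 - a)]
      · rw [if_pos (by omega)]
      · intro b _ hb
        rw [if_neg (by omega)]
      · intro hb
        exfalso; apply hb; rw [Finset.mem_range]; omega
    · apply Finset.sum_eq_zero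
      intro b _
      rw [if_neg (by omega)]
  rw [Finset.sum_congr rfl this, ← Finset.sum_filter]
  have h2 : (Finset.range N).filter (fun a => a < j) = Finset.range j := by
    ext a; simp only [Finset.mem_filter, Finset.mem_range]; omega
  rw [h2]; simp

/-- the Dirichlet type sum -/
noncomputable def DD (N : ℕ) (w : ℂ) : ℂ := ∑ l ∈ Finset.range N, w ^ l

lemma mono_formula {N : ℕ} (hN : 0 < N) (ω : ℂ) (h : IsPrimitiveRoot ω (2 * N)) (j : ℕ)
    (hj : j ≤ N) :
    ∑ k ∈ Finset.range (2 * N), (ω ^ k) ^ j * ((ω ^ k)⁻¹ * DD N ((ω ^ k)⁻¹) ^ 2)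
      = (2 * N : ℕ) * (j : ℂ) := by
  have hω : ω ≠ 0 := h.ne_zero (by omega)
  have e1 : ∀ k : ℕ, (ω ^ k) ^ j * ((ω ^ k)⁻¹ * DD N ((ω ^ k)⁻¹) ^ 2)
      = ∑ a ∈ Finset.range N, ∑ b ∈ Finset.range N, (ω ^ ((j : ℤ) - (a + b + 1))) ^ k := by
    intro k
    have hk : ω ^ k ≠ 0 := pow_ne_zero _ hω
    unfold DD
    rw [pow_two, Finset.sum_mul_sum, Finset.mul_sum, Finset.mul_sum]
    apply Finset.sum_congr rfl; intro a _
    rw [Finset.mul_sum, Finset.mul_sum]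
    apply Finset.sum_congr rfl; intro b _
    rw [← zpow_natCast (ω ^ ((j : ℤ) - (a + b + 1))) k, ← zpow_mul, mul_comm _ (k : ℤ), zpow_mul,
      zpow_natCast, zpow_sub₀ hk, zpow_natCast]
    have : (ω ^ k) ^ ((a : ℤ) + b + 1) = (ω ^ k) ^ (a + b + 1) := by
      rw [← zpow_natCast]; rfl
    rw [this]
    generalize ω ^ k = u at *
    simp only [inv_pow]
    field_simp
    ring
  rw [Finset.sum_congr rfl (fun k _ => e1 k), Finset.sum_comm]
  have e2 : ∀ a ∈ Finset.range N, ∑ k ∈ Finset.range (2 * N), ∑ b ∈ Finset.range N,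
      (ω ^ ((j : ℤ) - (a + b + 1))) ^ k
      = ∑ b ∈ Finset.range N, ((2 * N : ℕ) : ℂ) * (if a + b + 1 = j then (1 : ℂ) else 0) := by
    intro a ha
    rw [Finset.sum_comm]
    apply Finset.sum_congr rfl; intro b hb
    rw [root_sum ω h]
    rw [Finset.mem_range] at ha hb
    by_cases hc : a + b + 1 = j
    · have : (j : ℤ) - (a + b + 1) = 0 := by omega
      rw [this]; simp [hc]
    · rw [if_neg hc, if_neg, mul_zero]
      rintro ⟨c, hc'⟩
      push_cast at hc'
      have : c = 0 := by
        by_contra hne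
        rcases lt_or_gt_of_ne hne with h1 | h1
        · nlinarith
        · nlinarith
      subst this
      omega
  rw [Finset.sum_congr rfl e2]
  simp only [← Finset.mul_sum]
  rw [count_pairs N j hj]

lemma norm_DD {N : ℕ} (hN : 0 < N) (ω : ℂ) (h : IsPrimitiveRoot ω (2 * N)) :
    ∑ k ∈ Finset.range (2 * N), ‖DD N ((ω ^ k)⁻¹)‖ ^ 2 = (2 * N : ℕ) * (N : ℝ) := by
  have hω : ω ≠ 0 := h.ne_zero (by omega)
  have hn : ‖ω‖ = 1 := h.norm'_eq_one (by omega)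
  have hconj : (starRingEnd ℂ) ω = ω⁻¹ := by
    rw [Complex.inv_def, Complex.normSq_eq_norm_sq, hn]; simp
  have e1 : ∀ k : ℕ, ((‖DD N ((ω ^ k)⁻¹)‖ ^ 2 : ℝ) : ℂ)
      = ∑ a ∈ Finset.range N, ∑ b ∈ Finset.range N, (ω ^ ((b : ℤ) - a)) ^ k := by
    intro k
    have hk : ω ^ k ≠ 0 := pow_ne_zero _ hω
    push_cast
    rw [← Complex.mul_conj']
    unfold DD
    rw [map_sum, Finset.sum_mul_sum]
    apply Finset.sum_congr rfl; intro a _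
    apply Finset.sum_congr rfl; intro b _
    rw [← zpow_natCast (ω ^ ((b : ℤ) - a)) k, ← zpow_mul, mul_comm _ (k : ℤ), zpow_mul,
      zpow_natCast, zpow_sub₀ hk, zpow_natCast, zpow_natCast]
    simp only [map_pow, map_inv₀, hconj]
    have : ((ω⁻¹ ^ k)⁻¹) = ω ^ k := by simp
    rw [this]
    generalize ω ^ k = u at *
    simp only [inv_pow]
    field_simp
  have : ((∑ k ∈ Finset.range (2 * N), ‖DD N ((ω ^ k)⁻¹)‖ ^ 2 : ℝ) : ℂ)
      = (((2 * N : ℕ) * (N : ℝ) : ℝ) : ℂ) := by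
    rw [Complex.ofReal_sum, Finset.sum_congr rfl (fun k _ => e1 k), Finset.sum_comm]
    have e2 : ∀ a ∈ Finset.range N, ∑ k ∈ Finset.range (2 * N), ∑ b ∈ Finset.range N,
      (ω ^ ((b : ℤ) - a)) ^ k = ((2 * N : ℕ) : ℂ) := by
      intro a ha
      rw [Finset.sum_comm, Finset.sum_eq_single a]
      · rw [root_sum ω h]; simp
      · intro b hb hba
        rw [Finset.mem_range] at ha hb
        rw [root_sum ω h, if_neg]
        rintro ⟨c, hc'⟩
        push_cast at hc'
        have : c = 0 := by
          by_contra hne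
          rcases lt_or_gt_of_ne hne with h1 | h1
          · nlinarith
          · nlinarith
        subst this
        omega
      · intro hh; exact absurd ha hh
    rw [Finset.sum_congr rfl e2]
    simp; ring
  exact_mod_cast this

lemma poly_formula {N : ℕ} (hN : 0 < N) (ω : ℂ) (h : IsPrimitiveRoot ω (2 * N)) (Q : ℂ[X])
    (hQ : Q.natDegree ≤ N) (z : ℂ) :
    ((2 * N : ℕ) : ℂ) * (X * derivative Q).eval z =
    ∑ k ∈ Finset.range (2 * N), Q.eval (z * ω ^ k) * ((ω ^ k)⁻¹ * DD N ((ω ^ k)⁻¹) ^ 2) := by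
  have hs : ∀ x, Q.eval x = ∑ j ∈ Finset.range (N + 1), Q.coeff j * x ^ j :=
    fun x => Polynomial.eval_eq_sum_range' (by omega) x
  have hd : (X * derivative Q).eval z = ∑ j ∈ Finset.range (N + 1), Q.coeff j * (j * z ^ j) := by
    conv_lhs => rw [Q.as_sum_range' (N + 1) (by omega)]
    rw [derivative_sum, Finset.mul_sum, eval_finsetSum]
    apply Finset.sum_congr rfl; intro j _
    rw [derivative_monomial, eval_mul, eval_X, eval_monomial]
    rcases j with _ | j
    · simp
    · simp; ring
  rw [hd]
  simp only [hs, Finset.sum_mul, Finset.mul_sum]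
  rw [Finset.sum_comm]
  apply Finset.sum_congr rfl; intro j hj
  rw [Finset.mem_range] at hj
  have := mono_formula hN ω h j (by omega)
  calc _ = Q.coeff j * z ^ j * (((2 * N : ℕ) : ℂ) * j) := by ring
    _ = _ := by
      rw [← this, Finset.mul_sum]
      apply Finset.sum_congr rfl; intro k _
      rw [mul_pow]; ring

/-- shift invariance -/
lemma shift_int (f : ℝ → ℝ) (hf : Function.Periodic f (2 * Real.pi)) (a : ℝ) :
    ∫ θ in (-Real.pi)..Real.pi, f (θ + a) = ∫ θ in (-Real.pi)..Real.pi, f θ := by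
  rw [intervalIntegral.integral_comp_add_right (fun x => f x)]
  have := hf.intervalIntegral_add_eq (-Real.pi + a) (-Real.pi)
  rw [show -Real.pi + a + 2 * Real.pi = Real.pi + a by ring,
    show -Real.pi + 2 * Real.pi = Real.pi by ring] at this
  exact this

lemma bern_poly (N : ℕ) (Q : ℂ[X]) (hQ : Q.natDegree ≤ N) :
    ∫ θ in (-Real.pi)..Real.pi, ‖(X * derivative Q).eval (Complex.exp (θ * Complex.I))‖
      ≤ N * ∫ θ in (-Real.pi)..Real.pi, ‖Q.eval (Complex.exp (θ * Complex.I))‖ := by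
  rcases Nat.eq_zero_or_pos N with hN | hN
  · subst hN
    have : derivative Q = 0 := by
      rw [Polynomial.eq_C_of_natDegree_le_zero hQ]; simp
    simp [this]
  have h := Complex.isPrimitiveRoot_exp (2 * N) (by omega)
  set ω := Complex.exp (2 * Real.pi * Complex.I / ((2 * N : ℕ) : ℂ)) with hω
  have hcont : ∀ P : ℂ[X], Continuous fun θ : ℝ => ‖P.eval (Complex.exp (θ * Complex.I))‖ := by
    intro P
    have := P.continuous
    fun_prop
  set f : ℝ → ℝ := fun θ => ‖Q.eval (Complex.exp (θ * Complex.I))‖ with hf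
  have hper : Function.Periodic f (2 * Real.pi) := by
    intro θ
    simp only [hf]
    congr 2
    push_cast
    rw [add_mul, Complex.exp_add, Complex.exp_two_pi_mul_I, mul_one]
  have hn : ‖ω‖ = 1 := h.norm'_eq_one (by omega)
  have hshift : ∀ (θ : ℝ) (k : ℕ), ‖Q.eval (Complex.exp (θ * Complex.I) * ω ^ k)‖
      = f (θ + 2 * Real.pi * k / (2 * N : ℕ)) := by
    intro θ k
    simp only [hf, hω]
    rw [← Complex.exp_nat_mul, ← Complex.exp_add]
    congr 3
    push_cast; ring
  have hpt : ∀ θ : ℝ, ((2 * N : ℕ) : ℝ) * ‖(X * derivative Q).eval (Complex.exp (θ * Complex.I))‖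
      ≤ ∑ k ∈ Finset.range (2 * N), f (θ + 2 * Real.pi * k / (2 * N : ℕ)) *
        ‖DD N ((ω ^ k)⁻¹)‖ ^ 2 := by
    intro θ
    have e := poly_formula hN ω h Q hQ (Complex.exp (θ * Complex.I))
    calc _ = ‖((2 * N : ℕ) : ℂ) * (X * derivative Q).eval (Complex.exp (θ * Complex.I))‖ := by
          rw [norm_mul, Complex.norm_natCast]
      _ ≤ _ := by
          rw [e]
          refine (norm_sum_le _ _).trans (Finset.sum_le_sum fun k _ => ?_)
          rw [norm_mul, norm_mul, norm_inv, norm_pow ω, hn, norm_pow, hshift]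
          simp
  have hfc : Continuous f := hcont Q
  have hinteq : ∫ θ in (-Real.pi)..Real.pi,
      ((2 * N : ℕ) : ℝ) * ‖(X * derivative Q).eval (Complex.exp (θ * Complex.I))‖
      ≤ ∫ θ in (-Real.pi)..Real.pi, ∑ k ∈ Finset.range (2 * N),
        f (θ + 2 * Real.pi * k / (2 * N : ℕ)) * ‖DD N ((ω ^ k)⁻¹)‖ ^ 2 := by
    apply intervalIntegral.integral_mono (by linarith [Real.pi_pos])
    · exact (continuous_const.mul (hcont _)).intervalIntegrable _ _
    · apply Continuous.intervalIntegrable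
      fun_prop
    · exact hpt
  rw [intervalIntegral.integral_const_mul, intervalIntegral.integral_finsetSum] at hinteq
  · simp only [intervalIntegral.integral_mul_const] at hinteq
    rw [Finset.sum_congr rfl (fun k _ => by rw [shift_int f hper]), ← Finset.mul_sum,
      norm_DD hN ω h] at hinteq
    have hM : (0 : ℝ) < ((2 * N : ℕ) : ℝ) := by exact_mod_cast (by omega : 0 < 2 * N)
    have := le_of_mul_le_mul_left (hinteq.trans_eq (by ring :
      _ = ((2 * N : ℕ) : ℝ) * (N * ∫ θ in (-Real.pi)..Real.pi, f θ))) hM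
    exact this
  · intro k _
    apply Continuous.intervalIntegrable
    fun_prop

end L1Reg

namespace L1Reg

/-- Real trigonometric polynomial of degree at most `n`. -/
def IsTrig (n : ℕ) (f : ℝ → ℝ) : Prop :=
  ∃ Q : ℂ[X], Q.natDegree ≤ 2 * n ∧
    ∀ θ : ℝ, (f θ : ℂ) * Complex.exp (θ * Complex.I) ^ n = Q.eval (Complex.exp (θ * Complex.I))

lemma IsTrig.mono {n k : ℕ} {f : ℝ → ℝ} (h : IsTrig n f) (hk : n ≤ k) : IsTrig k f := by
  obtain ⟨Q, hQ, hf⟩ := h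
  refine ⟨Q * X ^ (k - n), ?_, ?_⟩
  · refine natDegree_mul_le.trans ?_
    rw [natDegree_X_pow]; omega
  · intro θ
    rw [eval_mul, ← hf, eval_pow, eval_X, mul_assoc, ← pow_add]
    congr 2; omega

lemma IsTrig.add {n : ℕ} {f g : ℝ → ℝ} (hf : IsTrig n f) (hg : IsTrig n g) :
    IsTrig n (fun θ => f θ + g θ) := by
  obtain ⟨Q, hQ, hf⟩ := hf
  obtain ⟨P, hP, hg⟩ := hg
  refine ⟨Q + P, (natDegree_add_le _ _).trans (max_le hQ hP), fun θ => ?_⟩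
  rw [eval_add, ← hf, ← hg]; push_cast; ring

lemma IsTrig.mul {n k : ℕ} {f g : ℝ → ℝ} (hf : IsTrig n f) (hg : IsTrig k g) :
    IsTrig (n + k) (fun θ => f θ * g θ) := by
  obtain ⟨Q, hQ, hf⟩ := hf
  obtain ⟨P, hP, hg⟩ := hg
  refine ⟨Q * P, natDegree_mul_le.trans (by omega), fun θ => ?_⟩
  rw [eval_mul, ← hf, ← hg]; push_cast; ring

lemma isTrig_const (a : ℝ) : IsTrig 0 (fun _ => a) :=
  ⟨C (a : ℂ), by simp, fun θ => by simp⟩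

lemma isTrig_cos : IsTrig 1 Real.cos := by
  refine ⟨C (1/2) * (X ^ 2 + 1), ?_, ?_⟩
  · compute_degree
  · intro θ
    simp only [eval_mul, eval_C, eval_add, eval_pow, eval_X, eval_one, pow_one]
    rw [Complex.ofReal_cos, Complex.cos]
    have : Complex.exp (-θ * Complex.I) * Complex.exp (θ * Complex.I) = 1 := by
      rw [← Complex.exp_add]; simp
    linear_combination (1/2 : ℂ) * this

lemma isTrig_sin : IsTrig 1 Real.sin := by
  refine ⟨C (Complex.I/2) * (1 - X ^ 2), ?_, ?_⟩
  · compute_degree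
  · intro θ
    simp only [eval_mul, eval_C, eval_sub, eval_pow, eval_X, eval_one, pow_one]
    rw [Complex.ofReal_sin, Complex.sin]
    have : Complex.exp (-θ * Complex.I) * Complex.exp (θ * Complex.I) = 1 := by
      rw [← Complex.exp_add]; simp
    linear_combination (Complex.I/2 : ℂ) * this

lemma isTrig_cos_pow (k : ℕ) : IsTrig k (fun θ => Real.cos θ ^ k) := by
  induction k with
  | zero => simpa using isTrig_const 1
  | succ k ih => simpa [pow_succ] using ih.mul isTrig_cos

lemma isTrig_sum {n : ℕ} (s : Finset ℕ) (F : ℕ → ℝ → ℝ) (h : ∀ i ∈ s, IsTrig n (F i)) :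
    IsTrig n (fun θ => ∑ i ∈ s, F i θ) := by
  induction s using Finset.induction_on with
  | empty => simpa using (isTrig_const 0).mono (Nat.zero_le n)
  | insert a s ha ih =>
    simp only [Finset.sum_insert ha]
    exact (h a (by simp)).add (ih (fun i hi => h i (by simp [hi])))

lemma isTrig_poly (r : ℝ[X]) (d : ℕ) (hr : r.natDegree ≤ d) :
    IsTrig d (fun θ => r.eval (Real.cos θ)) := by
  have : (fun θ => r.eval (Real.cos θ)) =
      fun θ => ∑ i ∈ Finset.range (d + 1), r.coeff i * Real.cos θ ^ i := by
    funext θ; exact eval_eq_sum_range' (by omega) _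
  rw [this]
  apply isTrig_sum
  intro i hi
  rw [Finset.mem_range] at hi
  have := (isTrig_const (r.coeff i)).mul (isTrig_cos_pow i)
  exact this.mono (by omega)

lemma IsTrig.periodic {n : ℕ} {f : ℝ → ℝ} (h : IsTrig n f) :
    Function.Periodic f (2 * Real.pi) := by
  obtain ⟨Q, hQ, hf⟩ := h
  intro θ
  have h1 := hf θ
  have h2 := hf (θ + 2 * Real.pi)
  have : Complex.exp (((θ + 2 * Real.pi : ℝ) : ℂ) * Complex.I) = Complex.exp (θ * Complex.I) := by
    push_cast
    rw [add_mul, Complex.exp_add, Complex.exp_two_pi_mul_I, mul_one]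
  rw [this, ← h1] at h2
  exact_mod_cast mul_right_cancel₀ (pow_ne_zero _ (Complex.exp_ne_zero _)) h2

lemma IsTrig.deriv {n : ℕ} {f f' : ℝ → ℝ} (h : IsTrig n f) (hd : ∀ θ, HasDerivAt f (f' θ) θ) :
    IsTrig n f' ∧ ∫ θ in (-Real.pi)..Real.pi, |f' θ| ≤
      3 * n * ∫ θ in (-Real.pi)..Real.pi, |f θ| := by
  obtain ⟨Q, hQ, hf⟩ := h
  have key : ∀ θ : ℝ, (f' θ : ℂ) * Complex.exp (θ * Complex.I) ^ n =
      (C Complex.I * (X * derivative Q - C (n : ℂ) * Q)).eval (Complex.exp (θ * Complex.I)) := by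
    intro θ
    have hE : HasDerivAt (fun θ : ℝ => Complex.exp (θ * Complex.I))
        (Complex.exp (θ * Complex.I) * Complex.I) θ := by
      have h1 : HasDerivAt (fun t : ℝ => (t : ℂ) * Complex.I) (1 * Complex.I) θ :=
        (Complex.ofRealCLM.hasDerivAt (x := θ)).mul_const Complex.I
      simpa using h1.cexp
    have h1 := (hd θ).ofReal_comp.mul (hE.fun_pow n)
    have h2 := (Q.hasDerivAt (Complex.exp (θ * Complex.I))).comp θ hE
    have h3 : ((fun y : ℝ => (f y : ℂ)) * fun θ : ℝ => Complex.exp (θ * Complex.I) ^ n)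
        = (fun x => Q.eval x) ∘ fun θ : ℝ => Complex.exp (θ * Complex.I) := by
      funext t; exact hf t
    rw [h3] at h1
    have h4 := h1.unique h2
    have h5 := hf θ
    simp only [eval_mul, eval_C, eval_sub, eval_X]
    rcases n with _ | n
    · simp at h4 h5 ⊢
      rw [h4]; ring
    · simp only [Nat.add_sub_cancel] at h4
      rw [← h5]
      linear_combination h4
  refine ⟨⟨_, ?_, key⟩, ?_⟩
  · refine (natDegree_C_mul_le _ _).trans ((natDegree_sub_le _ _).trans (max_le ?_ ?_))
    · rcases Nat.eq_zero_or_pos Q.natDegree with h0 | h0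
      · rw [eq_C_of_natDegree_eq_zero h0]; simp
      · refine natDegree_mul_le.trans ?_
        have := natDegree_derivative_le Q
        have h1 : (X : ℂ[X]).natDegree ≤ 1 := natDegree_X_le
        omega
    · exact (natDegree_C_mul_le _ _).trans hQ
  · have hn1 : ∀ θ : ℝ, ‖Complex.exp (θ * Complex.I)‖ = 1 := Complex.norm_exp_ofReal_mul_I
    have a1 : ∀ θ : ℝ, |f θ| = ‖Q.eval (Complex.exp (θ * Complex.I))‖ := by
      intro θ; rw [← hf, norm_mul, norm_pow, hn1]; simp
    have hcont : ∀ P : ℂ[X], Continuous fun θ : ℝ => ‖P.eval (Complex.exp (θ * Complex.I))‖ := by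
      intro P
      have := P.continuous
      fun_prop
    have a2 : ∀ θ : ℝ, |f' θ| ≤ ‖(X * derivative Q).eval (Complex.exp (θ * Complex.I))‖
        + n * ‖Q.eval (Complex.exp (θ * Complex.I))‖ := by
      intro θ
      have : |f' θ| = ‖(f' θ : ℂ) * Complex.exp (θ * Complex.I) ^ n‖ := by
        rw [norm_mul, norm_pow, hn1]; simp
      rw [this, key, eval_mul, eval_C, norm_mul, Complex.norm_I, one_mul, eval_sub]
      refine (norm_sub_le _ _).trans ?_
      rw [eval_mul (p := C (n : ℂ)), eval_C, norm_mul]; simp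
    have a3 : ∀ θ : ℝ, |f' θ| = ‖(C Complex.I * (X * derivative Q - C (n : ℂ) * Q)).eval (Complex.exp (θ * Complex.I))‖ := by
      intro θ; rw [← key, norm_mul, norm_pow, hn1]; simp
    have hb := bern_poly (2 * n) Q hQ
    have : ∫ θ in (-Real.pi)..Real.pi, |f' θ| ≤ ∫ θ in (-Real.pi)..Real.pi,
        (‖(X * derivative Q).eval (Complex.exp (θ * Complex.I))‖
        + n * ‖Q.eval (Complex.exp (θ * Complex.I))‖) := by
      apply intervalIntegral.integral_mono (by linarith [Real.pi_pos])
      · simp only [a3]; exact (hcont _).intervalIntegrable _ _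
      · exact ((hcont _).add (continuous_const.mul (hcont _))).intervalIntegrable _ _
      · exact a2
    rw [intervalIntegral.integral_add ((hcont _).intervalIntegrable _ _)
      (((hcont _).intervalIntegrable _ _).const_mul _),
      intervalIntegral.integral_const_mul] at this
    simp only [a1]
    push_cast at hb
    linarith

end L1Reg

namespace L1Reg

lemma even_int (f : ℝ → ℝ) (hf : Continuous f) (he : ∀ x, f (-x) = f x) (a : ℝ) :
    ∫ θ in (-a)..a, f θ = 2 * ∫ θ in (0:ℝ)..a, f θ := by
  rw [← intervalIntegral.integral_add_adjacent_intervals (hf.intervalIntegrable (-a) 0)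
    (hf.intervalIntegrable 0 a)]
  have : ∫ θ in (-a)..0, f θ = ∫ θ in (0:ℝ)..a, f θ := by
    have := intervalIntegral.integral_comp_neg (a := 0) (b := a) (fun x => f x)
    simp only [he, neg_zero] at this
    exact this.symm
  rw [this]; ring

lemma int_nonneg (f : ℝ → ℝ) (h : ∀ x, 0 ≤ f x) {a b : ℝ} (hab : a ≤ b) :
    0 ≤ ∫ θ in a..b, f θ :=
  intervalIntegral.integral_nonneg hab (fun x _ => h x)

lemma int_sub_le (f : ℝ → ℝ) (hf : Continuous f) (h : ∀ x, 0 ≤ f x) {a b c e : ℝ} (h1 : a ≤ c)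
    (h2 : c ≤ e) (h3 : e ≤ b) : ∫ θ in c..e, f θ ≤ ∫ θ in a..b, f θ :=
  intervalIntegral.integral_mono_interval h1 h2 h3 (Filter.Eventually.of_forall fun x => h x)
    (hf.intervalIntegrable _ _)

lemma ftc_bound (f f' : ℝ → ℝ) (hd : ∀ θ, HasDerivAt f (f' θ) θ) (hf' : Continuous f')
    {a b : ℝ} (hab : a ≤ b) : |f b - f a| ≤ ∫ θ in a..b, |f' θ| := by
  rw [← intervalIntegral.integral_eq_sub_of_hasDerivAt (fun x _ => hd x)
    (hf'.intervalIntegrable _ _)]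
  exact intervalIntegral.abs_integral_le_integral_abs hab

lemma ftc_bound' (f f' : ℝ → ℝ) (hd : ∀ θ, HasDerivAt f (f' θ) θ) (hf' : Continuous f')
    {a b x y : ℝ} (hx : x ∈ Set.Icc a b) (hy : y ∈ Set.Icc a b) :
    |f x - f y| ≤ ∫ θ in a..b, |f' θ| := by
  rcases le_total x y with h | h
  · rw [abs_sub_comm]
    exact (ftc_bound f f' hd hf' h).trans
      (int_sub_le _ hf'.abs (fun x => abs_nonneg _) hx.1 h hy.2)
  · exact (ftc_bound f f' hd hf' h).trans
      (int_sub_le _ hf'.abs (fun x => abs_nonneg _) hy.1 h hx.2)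

lemma nikolskii {n : ℕ} (hn : 1 ≤ n) {f f' : ℝ → ℝ} (h : IsTrig n f)
    (hd : ∀ θ, HasDerivAt f (f' θ) θ) (hf' : Continuous f') {x : ℝ}
    (hx : x ∈ Set.Icc (-Real.pi) Real.pi) :
    |f x| ≤ 4 * n * ∫ θ in (-Real.pi)..Real.pi, |f θ| := by
  have hpi := Real.pi_gt_three
  have hfc : Continuous f := continuous_iff_continuousAt.2 fun x => (hd x).continuousAt
  have h1 := (h.deriv hd).2
  set J := ∫ θ in (-Real.pi)..Real.pi, |f θ| with hJ
  have hJ0 : 0 ≤ J := int_nonneg _ (fun x => abs_nonneg _) (by linarith)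
  set J' := ∫ θ in (-Real.pi)..Real.pi, |f' θ| with hJ'
  have h2 : ∀ y ∈ Set.Icc (-Real.pi) Real.pi, |f x| - J' ≤ |f y| := by
    intro y hy
    have := ftc_bound' f f' hd hf' hx hy
    have h3 := abs_sub_abs_le_abs_sub (f x) (f y)
    linarith
  have h3 : ∫ y in (-Real.pi)..Real.pi, (|f x| - J') ≤ J := by
    apply intervalIntegral.integral_mono_on (by linarith) (by simp)
      (hfc.abs.intervalIntegrable _ _) h2
  rw [intervalIntegral.integral_const, smul_eq_mul] at h3
  have h4 : 2 * Real.pi * (|f x| - J') ≤ J := by linarith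
  have hn' : (1 : ℝ) ≤ n := by exact_mod_cast hn
  have h5 : |f x| - J' ≤ J := by
    by_cases hc : 0 ≤ |f x| - J'
    · nlinarith
    · linarith
  nlinarith

lemma near_zero_bound {g : ℝ → ℝ} (hg : Continuous g) (hg0 : ∀ x, 0 ≤ g x)
    {M : ℝ} (hM : ∀ x ∈ Set.Icc (-Real.pi) Real.pi, g x ≤ M) {δ : ℝ} (hδ : 0 < δ) (hδ1 : δ ≤ 1) :
    ∫ θ in (0:ℝ)..Real.pi, g θ ≤
      2 * δ * M + (2 / δ) * ∫ θ in (0:ℝ)..Real.pi, g θ * |Real.sin θ| := by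
  have hpi := Real.pi_gt_three
  have hgi := fun a b => hg.intervalIntegrable (μ := MeasureTheory.volume) a b
  have hgsc : Continuous fun θ => g θ * |Real.sin θ| := by fun_prop
  rw [← intervalIntegral.integral_add_adjacent_intervals (hgi 0 δ) (hgi δ Real.pi),
    ← intervalIntegral.integral_add_adjacent_intervals (hgi δ (Real.pi - δ))
      (hgi (Real.pi - δ) Real.pi)]
  have h1 : ∫ θ in (0:ℝ)..δ, g θ ≤ δ * M := by
    have : ∫ θ in (0:ℝ)..δ, g θ ≤ ∫ θ in (0:ℝ)..δ, M :=
      intervalIntegral.integral_mono_on hδ.le (hgi _ _) (by simp)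
        (fun x hx => hM x ⟨by linarith [hx.1], by linarith [hx.2]⟩)
    simpa using this
  have h2 : ∫ θ in (Real.pi - δ)..Real.pi, g θ ≤ δ * M := by
    have : ∫ θ in (Real.pi - δ)..Real.pi, g θ ≤ ∫ θ in (Real.pi - δ)..Real.pi, M :=
      intervalIntegral.integral_mono_on (by linarith) (hgi _ _) (by simp)
        (fun x hx => hM x ⟨by linarith [hx.1], by linarith [hx.2]⟩)
    simpa using this
  have h3 : ∫ θ in δ..(Real.pi - δ), g θ ≤ (2 / δ) * ∫ θ in (0:ℝ)..Real.pi, g θ * |Real.sin θ| := by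
    have : ∫ θ in δ..(Real.pi - δ), g θ ≤
        ∫ θ in δ..(Real.pi - δ), (2 / δ) * (g θ * |Real.sin θ|) := by
      apply intervalIntegral.integral_mono_on (by linarith) (hgi _ _)
        ((continuous_const.mul hgsc).intervalIntegrable _ _)
      intro x hx
      have hs : δ / 2 ≤ |Real.sin x| := by
        refine le_trans ?_ (le_abs_self _)
        have key : ∀ y, δ ≤ y → y ≤ Real.pi / 2 → δ / 2 ≤ Real.sin y := by
          intro y h1 h2
          have := Real.mul_le_sin (by linarith : 0 ≤ y) h2
          have h4 : 2 / Real.pi * y ≥ 1 / 2 * y := by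
            apply mul_le_mul_of_nonneg_right _ (by linarith)
            rw [div_le_div_iff₀ (by norm_num) (by linarith)]
            linarith [Real.pi_le_four]
          linarith
        rcases le_total x (Real.pi / 2) with h | h
        · exact key x hx.1 h
        · rw [← Real.sin_pi_sub]
          exact key _ (by linarith [hx.2]) (by linarith)
      have h0 := hg0 x
      calc g x = (2 / δ) * (g x * (δ / 2)) := by field_simp
        _ ≤ _ := mul_le_mul_of_nonneg_left (mul_le_mul_of_nonneg_left hs h0) (by positivity)
    rw [intervalIntegral.integral_const_mul] at this
    refine this.trans ?_
    gcongr
    exact int_sub_le _ hgsc (fun x => mul_nonneg (hg0 x) (abs_nonneg _)) hδ.le (by linarith)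
      (by linarith)
  linarith

lemma A0 {n : ℕ} (hn : 1 ≤ n) {f f' : ℝ → ℝ} (h : IsTrig n f)
    (hd : ∀ θ, HasDerivAt f (f' θ) θ) (hf' : Continuous f') (he : ∀ x, f (-x) = f x) :
    ∫ θ in (-Real.pi)..Real.pi, |f θ| ≤
      128 * n * ∫ θ in (-Real.pi)..Real.pi, |f θ| * |Real.sin θ| := by
  have hfc : Continuous f := continuous_iff_continuousAt.2 fun x => (hd x).continuousAt
  have hn' : (1 : ℝ) ≤ n := by exact_mod_cast hn
  have h1 := near_zero_bound hfc.abs (fun x => abs_nonneg _)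
    (fun x hx => nikolskii hn h hd hf' hx) (δ := 1 / (32 * n)) (by positivity)
    (by rw [div_le_one (by positivity)]; linarith)
  have e1 := even_int (fun θ => |f θ|) hfc.abs (fun x => by simp [he]) Real.pi
  have e2 := even_int (fun θ => |f θ| * |Real.sin θ|) (by fun_prop)
    (fun x => by simp [he]) Real.pi
  set J := ∫ θ in (-Real.pi)..Real.pi, |f θ|
  have e3 : 2 * (1 / (32 * (n:ℝ))) * (4 * n * J) = J / 4 := by field_simp; norm_num
  have e4 : 2 / (1 / (32 * (n:ℝ))) = 64 * n := by field_simp; norm_num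
  rw [e3, e4] at h1
  rw [e2]
  linarith

noncomputable def R0 (r : ℝ[X]) (θ : ℝ) : ℝ := r.eval (Real.cos θ)
noncomputable def R1 (r : ℝ[X]) (θ : ℝ) : ℝ := -Real.sin θ * (derivative r).eval (Real.cos θ)
noncomputable def R2 (r : ℝ[X]) (θ : ℝ) : ℝ := -Real.cos θ * (derivative r).eval (Real.cos θ) +
  Real.sin θ ^ 2 * (derivative (derivative r)).eval (Real.cos θ)

lemma R0_cont (r : ℝ[X]) : Continuous (R0 r) := by
  unfold R0; have := r.continuous; fun_prop
lemma R1_cont (r : ℝ[X]) : Continuous (R1 r) := by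
  unfold R1; have := (derivative r).continuous; fun_prop
lemma R2_cont (r : ℝ[X]) : Continuous (R2 r) := by
  unfold R2; have := (derivative r).continuous; have := (derivative (derivative r)).continuous
  fun_prop

lemma R0_deriv (r : ℝ[X]) (θ : ℝ) : HasDerivAt (R0 r) (R1 r θ) θ := by
  have := (r.hasDerivAt (Real.cos θ)).comp θ (Real.hasDerivAt_cos θ)
  rw [mul_comm] at this
  exact this

lemma R1_deriv (r : ℝ[X]) (θ : ℝ) : HasDerivAt (R1 r) (R2 r θ) θ := by
  have h1 := ((derivative r).hasDerivAt (Real.cos θ)).comp θ (Real.hasDerivAt_cos θ)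
  have h2 := ((Real.hasDerivAt_sin θ).neg).mul h1
  have h3 : R1 r = -Real.sin * ((fun x => (derivative r).eval x) ∘ Real.cos) := by
    funext t; rfl
  rw [h3]
  refine h2.congr_deriv ?_
  simp only [R2, Function.comp, Pi.neg_apply]; ring

lemma R0_even (r : ℝ[X]) (θ : ℝ) : R0 r (-θ) = R0 r θ := by simp [R0]

/-- J-integral -/
noncomputable def J (f : ℝ → ℝ) : ℝ := ∫ θ in (-Real.pi)..Real.pi, f θ

lemma J_mono {f g : ℝ → ℝ} (hf : Continuous f) (hg : Continuous g) (h : ∀ x, f x ≤ g x) :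
    J f ≤ J g :=
  intervalIntegral.integral_mono (by linarith [Real.pi_pos]) (hf.intervalIntegrable _ _)
    (hg.intervalIntegrable _ _) h

lemma J_add {f g : ℝ → ℝ} (hf : Continuous f) (hg : Continuous g) :
    J (fun x => f x + g x) = J f + J g :=
  intervalIntegral.integral_add (hf.intervalIntegrable _ _) (hg.intervalIntegrable _ _)

lemma J_const_mul (c : ℝ) (f : ℝ → ℝ) : J (fun x => c * f x) = c * J f :=
  intervalIntegral.integral_const_mul _ _

lemma J_nonneg {f : ℝ → ℝ} (h : ∀ x, 0 ≤ f x) : 0 ≤ J f :=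
  int_nonneg f h (by linarith [Real.pi_pos])

lemma sin_step {n : ℕ} {f f' : ℝ → ℝ} (h : IsTrig n f)
    (hd : ∀ θ, HasDerivAt f (f' θ) θ) (hf' : Continuous f') :
    J (fun θ => |f' θ| * |Real.sin θ|) ≤
      3 * (n + 1) * J (fun θ => |f θ| * |Real.sin θ|) + J (fun θ => |f θ|) := by
  have hfc : Continuous f := continuous_iff_continuousAt.2 fun x => (hd x).continuousAt
  have h1 := (h.mul isTrig_sin).deriv (f' := fun θ => f' θ * Real.sin θ + f θ * Real.cos θ)
    (fun θ => (hd θ).mul (Real.hasDerivAt_sin θ))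
  have h2 := h1.2
  have h3 : J (fun θ => |f' θ| * |Real.sin θ|) ≤
      J (fun θ => |f' θ * Real.sin θ + f θ * Real.cos θ| + |f θ|) := by
    apply J_mono (by fun_prop) (by fun_prop)
    intro θ
    rw [← abs_mul]
    have a1 : |f θ * Real.cos θ| ≤ |f θ| := by
      rw [abs_mul]
      exact mul_le_of_le_one_right (abs_nonneg _) (Real.abs_cos_le_one θ)
    have a2 := abs_sub (f' θ * Real.sin θ + f θ * Real.cos θ) (f θ * Real.cos θ)
    rw [add_sub_cancel_right] at a2
    linarith
  rw [J_add (by fun_prop) (by fun_prop)] at h3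
  simp only [abs_mul] at h2
  push_cast at h2
  have h4 : J (fun θ => |f' θ * Real.sin θ + f θ * Real.cos θ|) ≤
    3 * (n + 1) * J (fun θ => |f θ| * |Real.sin θ|) := h2
  linarith

/-- All Bernstein type bounds together. -/
lemma bounds (d : ℕ) (hd : 1 ≤ d) (r : ℝ[X]) (hr : r.natDegree ≤ d) :
    J (fun θ => |R1 r θ|) ≤ 1200 * d ^ 2 * J (fun θ => |R0 r θ| * |Real.sin θ|) ∧
    J (fun θ => |R2 r θ|) ≤ 1200 * d ^ 3 * J (fun θ => |R0 r θ| * |Real.sin θ|) ∧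
    J (fun θ => |R1 r θ| * |Real.sin θ|) ≤ 1200 * d * J (fun θ => |R0 r θ| * |Real.sin θ|) ∧
    J (fun θ => |R2 r θ| * |Real.sin θ|) ≤ 1200 * d ^ 2 * J (fun θ => |R0 r θ| * |Real.sin θ|) := by
  have t0 : IsTrig d (R0 r) := isTrig_poly r d hr
  have t1 := t0.deriv (R0_deriv r)
  have t2 := t1.1.deriv (R1_deriv r)
  have a0 := A0 hd t0 (R0_deriv r) (R1_cont r) (R0_even r)
  have b1 := sin_step t0 (R0_deriv r) (R1_cont r)
  have b2 := sin_step t1.1 (R1_deriv r) (R2_cont r)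
  have a1 := t1.2
  have a2 := t2.2
  change J (fun θ => |R0 r θ|) ≤ 128 * d * J (fun θ => |R0 r θ| * |Real.sin θ|) at a0
  change J (fun θ => |R1 r θ|) ≤ 3 * d * J (fun θ => |R0 r θ|) at a1
  change J (fun θ => |R2 r θ|) ≤ 3 * d * J (fun θ => |R1 r θ|) at a2
  have hT : 0 ≤ J (fun θ => |R0 r θ| * |Real.sin θ|) := J_nonneg fun x => by positivity
  set T := J (fun θ => |R0 r θ| * |Real.sin θ|)
  set x0 := J (fun θ => |R0 r θ|)
  set x1 := J (fun θ => |R1 r θ|)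
  set x2 := J (fun θ => |R2 r θ|)
  set y1 := J (fun θ => |R1 r θ| * |Real.sin θ|)
  have hn : (1 : ℝ) ≤ d := by exact_mod_cast hd
  have hdT : T ≤ d * T := le_mul_of_one_le_left hT hn
  have hddT : d * T ≤ d ^ 2 * T := by
    rw [pow_two, mul_assoc]; exact mul_le_mul_of_nonneg_left hdT (by linarith)
  have c1 : x1 ≤ 384 * d ^ 2 * T := by
    calc x1 ≤ 3 * d * x0 := a1
      _ ≤ 3 * d * (128 * d * T) := by gcongr
      _ = _ := by ring
  have c2 : x2 ≤ 1152 * d ^ 3 * T := by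
    calc x2 ≤ 3 * d * x1 := a2
      _ ≤ 3 * d * (384 * d ^ 2 * T) := by gcongr
      _ = _ := by ring
  have c3 : y1 ≤ 134 * d * T := by linarith
  have hd3 : (0 : ℝ) ≤ d ^ 3 * T := by positivity
  have hd2 : (0 : ℝ) ≤ d ^ 2 * T := by positivity
  refine ⟨by linarith, by linarith, by linarith, ?_⟩
  have c4 : 3 * ((d : ℝ) + 1) * y1 ≤ 3 * (d + 1) * (134 * d * T) := by gcongr
  nlinarith

end L1Reg

namespace L1Reg

lemma J_shift (f : ℝ → ℝ) (hf : Function.Periodic f (2 * Real.pi)) (a : ℝ) :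
    J (fun θ => f (θ + a)) = J f := shift_int f hf a

lemma J_sum {ι : Type*} (s : Finset ι) (F : ι → ℝ → ℝ) (h : ∀ i, Continuous (F i)) :
    J (fun θ => ∑ i ∈ s, F i θ) = ∑ i ∈ s, J (F i) :=
  intervalIntegral.integral_finsetSum (fun i _ => (h i).intervalIntegrable _ _)

lemma J_neg (f : ℝ → ℝ) : J (fun θ => f (-θ)) = J f := by
  unfold J
  have := intervalIntegral.integral_comp_neg (a := -Real.pi) (b := Real.pi) (fun x => f x)
  rw [neg_neg] at this
  exact this

lemma J_odd (f : ℝ → ℝ) (h : ∀ x, f (-x) = - f x) : J f = 0 := by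
  have h1 := J_neg f
  simp only [h] at h1
  have : J (fun θ => - f θ) = - J f := intervalIntegral.integral_neg
  linarith

lemma J_cos (m : ℤ) : J (fun t => Real.cos (m * t)) = if m = 0 then 2 * Real.pi else 0 := by
  unfold J
  split_ifs with h
  · subst h; simp; ring
  · have hm : (m : ℝ) ≠ 0 := by exact_mod_cast h
    rw [intervalIntegral.integral_comp_mul_left (fun x => Real.cos x) hm, integral_cos]
    have : Real.sin ((m : ℝ) * Real.pi) = 0 := Real.sin_int_mul_pi m
    rw [mul_neg, Real.sin_neg, this]; simp

noncomputable def ka (n l : ℕ) : ℝ := Real.sin (((l : ℝ) + 1) * (Real.pi / (n + 2)))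

noncomputable def kA (n : ℕ) : ℝ := ∑ l ∈ Finset.range (n + 1), ka n l ^ 2

lemma kA_pos (n : ℕ) : 0 < kA n := by
  unfold kA
  apply Finset.sum_pos
  · intro l hl
    rw [Finset.mem_range] at hl
    apply pow_pos
    apply Real.sin_pos_of_pos_of_lt_pi
    · positivity
    · have : (l : ℝ) + 1 < n + 2 := by
        have : (l : ℝ) < n + 1 := by exact_mod_cast hl
        linarith
      calc _ < ((n : ℝ) + 2) * (Real.pi / (n + 2)) := by gcongr
        _ = Real.pi := by field_simp
  · simp

noncomputable def kk (n : ℕ) (t : ℝ) : ℝ :=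
  ∑ l ∈ Finset.range (n + 1), ∑ k ∈ Finset.range (n + 1),
    (ka n l * ka n k / kA n) * Real.cos (((l : ℤ) - (k : ℤ) : ℤ) * t)

lemma kk_cont (n : ℕ) : Continuous (kk n) := by
  unfold kk; fun_prop

lemma kk_nonneg (n : ℕ) (t : ℝ) : 0 ≤ kk n t := by
  have : kk n t = ((∑ l ∈ Finset.range (n + 1), ka n l * Real.cos (l * t)) ^ 2 +
      (∑ l ∈ Finset.range (n + 1), ka n l * Real.sin (l * t)) ^ 2) / kA n := by
    unfold kk
    rw [pow_two, pow_two, Finset.sum_mul_sum, Finset.sum_mul_sum, ← Finset.sum_add_distrib,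
      Finset.sum_div]
    apply Finset.sum_congr rfl; intro l _
    rw [← Finset.sum_add_distrib, Finset.sum_div]
    apply Finset.sum_congr rfl; intro k _
    push_cast
    rw [sub_mul, Real.cos_sub]; ring
  rw [this]
  have := kA_pos n
  positivity

lemma kk_even (n : ℕ) (t : ℝ) : kk n (-t) = kk n t := by
  unfold kk; simp

lemma kk_periodic (n : ℕ) : Function.Periodic (kk n) (2 * Real.pi) := by
  intro t
  unfold kk
  apply Finset.sum_congr rfl; intro l _
  apply Finset.sum_congr rfl; intro k _
  congr 1
  rw [mul_add, Real.cos_add_int_mul_two_pi]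

lemma J_kk_gen (n : ℕ) (g : ℝ → ℝ) (hg : Continuous g) :
    J (fun t => kk n t * g t) = ∑ l ∈ Finset.range (n + 1), ∑ k ∈ Finset.range (n + 1),
      (ka n l * ka n k / kA n) * J (fun t => Real.cos (((l : ℤ) - (k : ℤ) : ℤ) * t) * g t) := by
  unfold kk
  simp only [Finset.sum_mul, mul_assoc]
  rw [J_sum _ _ (fun i => by fun_prop)]
  apply Finset.sum_congr rfl; intro l _
  rw [J_sum _ _ (fun i => by fun_prop)]
  apply Finset.sum_congr rfl; intro k _
  rw [J_const_mul]

lemma J_kk (n : ℕ) : J (kk n) = 2 * Real.pi := by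
  have h := J_kk_gen n (fun _ => 1) continuous_const
  simp only [mul_one] at h
  rw [show J (kk n) = J (fun t => kk n t) from rfl, h]
  have : ∀ l ∈ Finset.range (n + 1), ∑ k ∈ Finset.range (n + 1),
      (ka n l * ka n k / kA n) * J (fun t => Real.cos (((l : ℤ) - (k : ℤ) : ℤ) * t))
      = ka n l ^ 2 * (2 * Real.pi / kA n) := by
    intro l hl
    rw [Finset.sum_eq_single l]
    · rw [J_cos, if_pos (by omega)]; ring
    · intro k _ hk
      rw [J_cos, if_neg (by omega), mul_zero]
    · intro hh; exact absurd hl hh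
  rw [Finset.sum_congr rfl this, ← Finset.sum_mul]
  have := (kA_pos n).ne'
  change kA n * _ = _
  field_simp

lemma J_cos_cos (m : ℤ) : J (fun t => Real.cos (m * t) * Real.cos t) =
    Real.pi * ((if m = -1 then 1 else 0) + (if m = 1 then 1 else 0)) := by
  have : (fun t => Real.cos (m * t) * Real.cos t) = fun t =>
      (1/2) * (Real.cos ((m + 1 : ℤ) * t) + Real.cos ((m - 1 : ℤ) * t)) := by
    funext t
    push_cast
    rw [add_mul, sub_mul, Real.cos_add, Real.cos_sub, one_mul]; ring
  rw [this, J_const_mul, J_add (by fun_prop) (by fun_prop), J_cos, J_cos]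
  by_cases h1 : m = -1
  · subst h1; simp
  by_cases h2 : m = 1
  · subst h2; simp
  rw [if_neg (by omega), if_neg (by omega), if_neg h1, if_neg h2]; simp

lemma ka_neighbors (n l : ℕ) (hl : l ∈ Finset.range (n + 1)) :
    ∑ k ∈ Finset.range (n + 1), ka n k * ((if ((l : ℤ) - k) = -1 then 1 else 0) +
      (if ((l : ℤ) - k) = 1 then 1 else 0)) = 2 * Real.cos (Real.pi / (n + 2)) * ka n l := by
  rw [Finset.mem_range] at hl
  simp only [mul_add, Finset.sum_add_distrib]
  have h1 : ∑ k ∈ Finset.range (n + 1), ka n k * (if ((l : ℤ) - k) = -1 then 1 else 0)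
      = Real.sin (((l : ℝ) + 2) * (Real.pi / (n + 2))) := by
    by_cases h : l + 1 < n + 1
    · rw [Finset.sum_eq_single (l + 1)]
      · rw [if_pos (by push_cast; ring), mul_one, ka]
        congr 2; push_cast; ring
      · intro k _ hk; rw [if_neg (by omega), mul_zero]
      · intro hh; exact absurd (Finset.mem_range.2 h) hh
    · have : l = n := by omega
      subst this
      rw [Finset.sum_eq_zero]
      · rw [show ((l : ℝ) + 2) * (Real.pi / (l + 2)) = Real.pi by field_simp]; simp
      · intro k hk; rw [Finset.mem_range] at hk; rw [if_neg (by omega), mul_zero]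
  have h2 : ∑ k ∈ Finset.range (n + 1), ka n k * (if ((l : ℤ) - k) = 1 then 1 else 0)
      = Real.sin ((l : ℝ) * (Real.pi / (n + 2))) := by
    rcases l with _ | l
    · rw [Finset.sum_eq_zero]
      · simp
      · intro k hk; rw [if_neg (by push_cast; omega), mul_zero]
    · rw [Finset.sum_eq_single l]
      · rw [if_pos (by push_cast; ring), mul_one, ka]
        congr 2; push_cast; ring
      · intro k _ hk; rw [if_neg (by push_cast; omega), mul_zero]
      · intro hh; exact absurd (Finset.mem_range.2 (by omega)) hh
  rw [h1, h2, ka]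
  generalize Real.pi / ((n : ℝ) + 2) = x
  rw [show ((l : ℝ) + 2) * x = (l + 1) * x + x by ring,
    show (l : ℝ) * x = (l + 1) * x - x by ring, Real.sin_add, Real.sin_sub]
  ring

lemma J_kk_cos (n : ℕ) : J (fun t => kk n t * Real.cos t) =
    2 * Real.pi * Real.cos (Real.pi / (n + 2)) := by
  rw [J_kk_gen n _ Real.continuous_cos]
  have : ∀ l ∈ Finset.range (n + 1), ∑ k ∈ Finset.range (n + 1),
      (ka n l * ka n k / kA n) * J (fun t => Real.cos (((l : ℤ) - (k : ℤ) : ℤ) * t) * Real.cos t)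
      = ka n l ^ 2 * (2 * Real.pi * Real.cos (Real.pi / (n + 2)) / kA n) := by
    intro l hl
    have h := ka_neighbors n l hl
    calc _ = (ka n l * Real.pi / kA n) *
        ∑ k ∈ Finset.range (n + 1), ka n k * ((if ((l : ℤ) - k) = -1 then 1 else 0) +
      (if ((l : ℤ) - k) = 1 then 1 else 0)) := by
          rw [Finset.mul_sum]
          apply Finset.sum_congr rfl; intro k _
          rw [J_cos_cos]; ring
      _ = _ := by rw [h]; ring
  rw [Finset.sum_congr rfl this, ← Finset.sum_mul]
  have := (kA_pos n).ne'
  change kA n * _ = _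
  field_simp

lemma J_kk_sq (n : ℕ) (hn : 1 ≤ n) : J (fun t => kk n t * t ^ 2) ≤ 2 * Real.pi * (25 / n ^ 2) := by
  have hpi := Real.pi_gt_three
  have hpi2 := Real.pi_lt_d2
  have hc := kk_cont n
  have h1 : J (fun t => kk n t * t ^ 2) ≤
      J (fun t => (Real.pi ^ 2 / 2) * (kk n t + (-1) * (kk n t * Real.cos t))) := by
    apply intervalIntegral.integral_mono_on (by linarith)
      (Continuous.intervalIntegrable (by fun_prop) _ _)
      (Continuous.intervalIntegrable (by fun_prop) _ _)
    intro t ht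
    have := Real.cos_le_one_sub_mul_cos_sq (abs_le.2 ht)
    have h2 : t ^ 2 ≤ (Real.pi ^ 2 / 2) * (1 - Real.cos t) := by
      have : 2 / Real.pi ^ 2 * t ^ 2 ≤ 1 - Real.cos t := by linarith
      calc t ^ 2 = (Real.pi ^ 2 / 2) * (2 / Real.pi ^ 2 * t ^ 2) := by field_simp
        _ ≤ _ := by gcongr
    have := mul_le_mul_of_nonneg_left h2 (kk_nonneg n t)
    linarith
  rw [J_const_mul, J_add (by fun_prop) (by fun_prop), J_const_mul, J_kk_cos, J_kk] at h1
  have h2 := Real.one_sub_sq_div_two_le_cos (x := Real.pi / (n + 2))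
  refine h1.trans ?_
  have hn' : (1 : ℝ) ≤ n := by exact_mod_cast hn
  have h3 : (Real.pi / (n + 2)) ^ 2 ≤ 10 / n ^ 2 := by
    rw [div_pow]
    have : Real.pi ^ 2 ≤ 10 := by nlinarith
    gcongr
    linarith
  have h4 : Real.pi ^ 2 / 2 ≤ 5 := by nlinarith
  have h5 : 1 - Real.cos (Real.pi / (n + 2)) ≤ 5 / n ^ 2 := by
    have : (5 : ℝ) / n ^ 2 = (10 / n ^ 2) / 2 := by ring
    rw [this]; linarith
  have h6 : 0 ≤ 1 - Real.cos (Real.pi / (n + 2)) := by linarith [Real.cos_le_one (Real.pi / (n + 2))]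
  calc _ = 2 * Real.pi * (Real.pi ^ 2 / 2 * (1 - Real.cos (Real.pi / (n + 2)))) := by ring
    _ ≤ 2 * Real.pi * (5 * (5 / n ^ 2)) := by gcongr
    _ = _ := by ring

/-- The kernel-smoothing of `c` is a polynomial. -/
lemma smooth_poly (n : ℕ) (c : ℝ → ℝ) (hc : Continuous c) :
    ∃ q : ℝ[X], q.natDegree ≤ n ∧ ∀ θ, q.eval (Real.cos θ) =
      (1 / (2 * Real.pi)) * J (fun h => kk n h * c (Real.cos (θ + h))) := by
  refine ⟨∑ l ∈ Finset.range (n + 1), ∑ k ∈ Finset.range (n + 1),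
    C ((1 / (2 * Real.pi)) * (ka n l * ka n k / kA n) *
      J (fun t => Real.cos (((l : ℤ) - (k : ℤ) : ℤ) * t) * c (Real.cos t))) *
      Chebyshev.T ℝ ((l : ℤ) - (k : ℤ)), ?_, ?_⟩
  · apply natDegree_sum_le_of_forall_le
    intro l hl
    apply natDegree_sum_le_of_forall_le
    intro k hk
    rw [Finset.mem_range] at hl hk
    refine (natDegree_C_mul_le _ _).trans ?_
    rw [Chebyshev.natDegree_T]
    omega
  · intro θ
    have e1 : J (fun h => kk n h * c (Real.cos (θ + h)))
        = J (fun t => kk n (t + -θ) * c (Real.cos t)) := by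
      rw [← J_shift (fun t => kk n (t + -θ) * c (Real.cos t)) _ θ]
      · congr 1; funext h; simp [add_comm]
      · intro t
        simp only [Real.cos_add_two_pi]
        rw [show t + 2 * Real.pi + -θ = (t + -θ) + 2 * Real.pi by ring, kk_periodic n]
    rw [e1]
    unfold kk
    simp only [Finset.sum_mul, mul_assoc]
    rw [J_sum _ _ (fun i => by fun_prop), Finset.mul_sum, eval_finsetSum]
    apply Finset.sum_congr rfl; intro l _
    rw [J_sum _ _ (fun i => by fun_prop), Finset.mul_sum, eval_finsetSum]
    apply Finset.sum_congr rfl; intro k _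
    rw [J_const_mul, eval_mul, eval_C, Chebyshev.T_real_cos]
    have hodd : J (fun t => Real.sin (((l : ℤ) - (k : ℤ) : ℤ) * t) * c (Real.cos t)) = 0 := by
      apply J_odd
      intro x; simp
    have e2 : (fun t => Real.cos (((l : ℤ) - (k : ℤ) : ℤ) * (t + -θ)) * c (Real.cos t)) = fun t =>
        Real.cos (((l : ℤ) - (k : ℤ) : ℤ) * θ) * (Real.cos (((l : ℤ) - (k : ℤ) : ℤ) * t) * c (Real.cos t))
        + Real.sin (((l : ℤ) - (k : ℤ) : ℤ) * θ) * (Real.sin (((l : ℤ) - (k : ℤ) : ℤ) * t) * c (Real.cos t)) := by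
      funext t
      rw [mul_add, mul_neg, ← sub_eq_add_neg, Real.cos_sub]; ring
    rw [e2, J_add (by fun_prop) (by fun_prop), J_const_mul, J_const_mul, hodd]
    ring

end L1Reg

namespace L1Reg

lemma int_swap (F : ℝ → ℝ → ℝ) (hF : Continuous (Function.uncurry F)) {a b c e : ℝ}
    (hab : a ≤ b) (hce : c ≤ e) :
    ∫ x in a..b, ∫ y in c..e, F x y = ∫ y in c..e, ∫ x in a..b, F x y := by
  simp only [intervalIntegral.integral_of_le hab, intervalIntegral.integral_of_le hce]
  apply MeasureTheory.integral_integral_swap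
  rw [MeasureTheory.Measure.prod_restrict]
  have h1 : MeasureTheory.IntegrableOn (Function.uncurry F) (Set.Icc a b ×ˢ Set.Icc c e)
      (MeasureTheory.volume.prod MeasureTheory.volume) :=
    hF.continuousOn.integrableOn_compact (isCompact_Icc.prod isCompact_Icc)
  exact h1.mono_set (Set.prod_mono Set.Ioc_subset_Icc_self Set.Ioc_subset_Icc_self)

lemma int_param_cont (F : ℝ → ℝ → ℝ) (hF : Continuous (Function.uncurry F)) (a b : ℝ) :
    Continuous fun x => ∫ y in a..b, F x y :=
  intervalIntegral.continuous_parametric_intervalIntegral_of_continuous' hF a b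

/-- clipping to `[-1,1]` -/
noncomputable def cl (s : ℝ) : ℝ := max (-1) (min 1 s)

lemma cl_cont : Continuous cl := by unfold cl; fun_prop

lemma cl_abs_le_one (s : ℝ) : |cl s| ≤ 1 := by
  unfold cl
  rw [abs_le]
  constructor
  · exact le_max_left _ _
  · exact max_le (by norm_num) (min_le_left _ _)

lemma cl_abs_le (s : ℝ) : |cl s| ≤ |s| := by
  unfold cl
  rcases le_total s 1 with h1 | h1 <;> rcases le_total s (-1) with h2 | h2
  · rw [min_eq_right h1, max_eq_left h2, abs_of_nonpos (by linarith : s ≤ 0)]; norm_num; linarith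
  · rw [min_eq_right h1, max_eq_right h2]
  · linarith
  · rw [min_eq_left h1, max_eq_right (by norm_num), abs_one]; exact h1.trans (le_abs_self s)

lemma cl_lip (x y : ℝ) : |cl x - cl y| ≤ |x - y| := by
  unfold cl
  refine (abs_max_sub_max_le_max _ _ _ _).trans ?_
  refine max_le (by simp) ((abs_min_sub_min_le_max _ _ _ _).trans (max_le (by simp) le_rfl))

lemma cl_neg (s : ℝ) : cl (-s) = - cl s := by
  unfold cl
  rcases le_total s 1 with h1 | h1 <;> rcases le_total s (-1) with h2 | h2
  · rw [min_eq_right h1, max_eq_left h2, min_eq_left (by linarith), max_eq_right (by norm_num)]; norm_num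
  · rw [min_eq_right h1, max_eq_right h2, min_eq_right (by linarith), max_eq_right (by linarith)]
  · linarith
  · rw [min_eq_left h1, max_eq_right (by norm_num : (-1:ℝ) ≤ 1), min_eq_right (by linarith : -s ≤ 1),
      max_eq_left (by linarith : -s ≤ -1)]

lemma cl_lt_of {s t : ℝ} (h : cl s < t) (ht : t ≤ 1) : s < t := by
  unfold cl at h
  by_contra hc
  push Not at hc
  exact absurd h (not_lt.2 (le_max_of_le_right (le_min ht hc)))

lemma cross_aux (f : ℝ → ℝ) (hf : Continuous f) {a b L lam : ℝ} (hab : a ≤ b) (hlam : 0 < lam)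
    (hL : ∀ x ∈ Set.Icc a b, ∀ y ∈ Set.Icc a b, |f x - f y| ≤ L * |x - y|)
    (ha : f a < -(1/2)) (hb : 1/2 < f b) :
    2 ≤ lam * (∫ t in a..b, (1 - |cl (f t)|)) + 4 * L / lam := by
  obtain ⟨τ, hτ, hτ0⟩ : (0:ℝ) ∈ f '' Set.Icc a b :=
    intermediate_value_Icc hab hf.continuousOn ⟨by linarith, by linarith⟩
  have hbb := hL b ⟨hab, le_rfl⟩ τ hτ
  rw [hτ0, sub_zero, abs_of_pos (by linarith), abs_of_nonneg (by linarith [hτ.2])] at hbb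
  have hL0 : 0 < L := by
    by_contra hc
    push Not at hc
    have : L * (b - τ) ≤ 0 := mul_nonpos_of_nonpos_of_nonneg hc (by linarith [hτ.2])
    linarith
  have hend : τ + 1 / (2 * L) ≤ b := by
    have : 1 / (2 * L) ≤ b - τ := by
      rw [div_le_iff₀ (by positivity)]; nlinarith
    linarith
  have hg : Continuous fun t => 1 - |cl (f t)| := by
    have := cl_cont; fun_prop
  have h1 : ∫ t in τ..(τ + 1 / (2 * L)), (1/2 : ℝ) ≤ ∫ t in τ..(τ + 1 / (2 * L)), (1 - |cl (f t)|) := by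
    apply intervalIntegral.integral_mono_on (by linarith [show 0 < 1 / (2 * L) by positivity])
      (by simp) (hg.intervalIntegrable _ _)
    intro t ht
    have h2 := hL t ⟨by linarith [hτ.1, ht.1], by linarith [ht.2]⟩ τ hτ
    rw [hτ0, sub_zero, abs_of_nonneg (by linarith [ht.1] : 0 ≤ t - τ)] at h2
    have h3 : L * (t - τ) ≤ L * (1 / (2 * L)) := by
      apply mul_le_mul_of_nonneg_left _ hL0.le
      linarith [ht.2]
    rw [show L * (1 / (2 * L)) = 1 / 2 by field_simp] at h3
    have := cl_abs_le (f t)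
    linarith
  have h4 := int_sub_le _ hg (fun x => by linarith [cl_abs_le_one (f x)]) hτ.1
    (by linarith [show 0 < 1 / (2 * L) by positivity]) hend
  rw [intervalIntegral.integral_const, smul_eq_mul] at h1
  have h5 : 1 / (4 * L) ≤ ∫ t in a..b, (1 - |cl (f t)|) := by
    refine le_trans (le_of_eq ?_) (h1.trans h4)
    field_simp; norm_num
  have h6 : lam * (1 / (4 * L)) ≤ lam * (∫ t in a..b, (1 - |cl (f t)|)) := by gcongr
  have h7 : 2 ≤ lam * (1 / (4 * L)) + 4 * L / lam := by
    have e : lam * (1 / (4 * L)) + 4 * L / lam - 2 = (lam - 4 * L) ^ 2 / (4 * L * lam) := by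
      field_simp; ring
    have : 0 ≤ (lam - 4 * L) ^ 2 / (4 * L * lam) := by positivity
    linarith
  linarith

lemma crossing (f : ℝ → ℝ) (hf : Continuous f) {a b L lam : ℝ} (hab : a ≤ b) (hlam : 0 < lam)
    (hL0 : 0 ≤ L)
    (hL : ∀ x ∈ Set.Icc a b, ∀ y ∈ Set.Icc a b, |f x - f y| ≤ L * |x - y|) :
    |cl (f b) - cl (f a)| ≤ 4 * (1 - |cl (f a)|) + 4 * (1 - |cl (f b)|) +
      lam * (∫ t in a..b, (1 - |cl (f t)|)) + 4 * L / lam := by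
  have hI : 0 ≤ ∫ t in a..b, (1 - |cl (f t)|) :=
    int_nonneg _ (fun x => by linarith [cl_abs_le_one (f x)]) hab
  have hI' := mul_nonneg hlam.le hI
  have hq : 0 ≤ 4 * L / lam := by positivity
  have h1 := cl_abs_le_one (f a)
  have h2 := cl_abs_le_one (f b)
  have h3 : |cl (f b) - cl (f a)| ≤ 2 := (abs_sub _ _).trans (by linarith)
  by_cases hA : |cl (f a)| ≤ 1/2
  · linarith
  by_cases hB : |cl (f b)| ≤ 1/2
  · linarith
  push Not at hA hB
  rcases lt_abs.1 hA with pa | pa <;> rcases lt_abs.1 hB with pb | pb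
  · rw [abs_of_pos (by linarith : 0 < cl (f a))] at *
    rw [abs_of_pos (by linarith : 0 < cl (f b))] at *
    have : |cl (f b) - cl (f a)| ≤ (1 - cl (f a)) + (1 - cl (f b)) := by
      rw [abs_le]; constructor <;> linarith
    linarith
  · have := cross_aux (fun t => - f t) hf.neg hab hlam (L := L)
      (fun x hx y hy => by
        have := hL x hx y hy
        rw [show -f x - -f y = -(f x - f y) by ring, abs_neg]; exact this)
      (by
        have : cl (- f a) < -(1/2) := by rw [cl_neg]; linarith
        exact cl_lt_of this (by norm_num))
      (by
        have : - f b > 1 / 2 := by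
          have : f b < -(1/2) := cl_lt_of (by linarith) (by norm_num)
          linarith
        exact this)
    simp only [cl_neg, abs_neg] at this
    linarith
  · have := cross_aux f hf hab hlam hL (cl_lt_of (by linarith) (by norm_num))
      (by
        have : -f b < -(1/2) := cl_lt_of (by rw [cl_neg]; linarith) (by norm_num)
        linarith)
    linarith
  · rw [abs_of_neg (by linarith : cl (f a) < 0)] at *
    rw [abs_of_neg (by linarith : cl (f b) < 0)] at *
    have : |cl (f b) - cl (f a)| ≤ (1 - -cl (f a)) + (1 - -cl (f b)) := by
      rw [abs_le]; constructor <;> linarith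
    linarith

lemma sin_shift (θ u : ℝ) (hu : 0 ≤ u) : |Real.sin θ| ≤ |Real.sin (θ + u)| + u := by
  have h := Real.abs_sin_sub_sin_le θ (θ + u)
  have h2 := abs_sub_abs_le_abs_sub (Real.sin θ) (Real.sin (θ + u))
  rw [show θ - (θ + u) = -u by ring, abs_neg, abs_of_nonneg hu] at h
  linarith

lemma omega_bound (r : ℝ[X]) {h lam : ℝ} (hh : 0 ≤ h) (hlam : 0 < lam) :
    J (fun θ => |cl (R0 r (θ + h)) - cl (R0 r θ)| * |Real.sin θ|) ≤
      8 * J (fun θ => 1 - |cl (R0 r θ)|) + lam * (h * J (fun θ => 1 - |cl (R0 r θ)|)) +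
      4 / lam * (J (fun θ => |R1 r θ| * |Real.sin θ|) + h * (J (fun θ => |R2 r θ| * |Real.sin θ|)
        + h * J (fun θ => |R2 r θ|))) := by
  have hpi := Real.pi_pos
  have c0 := R0_cont r
  have c1 := R1_cont r
  have c2 := R2_cont r
  have ccl := cl_cont
  set g : ℝ → ℝ := fun θ => 1 - |cl (R0 r θ)| with hg
  have cg : Continuous g := by fun_prop
  have g0 : ∀ x, 0 ≤ g x := fun x => by simp only [hg]; linarith [cl_abs_le_one (R0 r x)]
  have per0 : Function.Periodic (R0 r) (2 * Real.pi) := fun t => by simp [R0]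
  have per2 : Function.Periodic (R2 r) (2 * Real.pi) := fun t => by simp [R2]
  have perg : Function.Periodic g (2 * Real.pi) := fun t => by simp only [hg, per0 t]
  have G1c : Continuous fun θ => ∫ u in (0:ℝ)..h, g (θ + u) :=
    int_param_cont (fun θ u => g (θ + u)) (by fun_prop) 0 h
  have G2c : Continuous fun θ => ∫ u in (0:ℝ)..h, |R2 r (θ + u)| :=
    int_param_cont (fun θ u => |R2 r (θ + u)|) (by fun_prop) 0 h
  have G3c : Continuous fun θ => ∫ u in (0:ℝ)..h, |R2 r (θ + u)| * (|Real.sin (θ + u)| + u) :=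
    int_param_cont (fun θ u => |R2 r (θ + u)| * (|Real.sin (θ + u)| + u)) (by fun_prop) 0 h
  have hpt : ∀ θ, |cl (R0 r (θ + h)) - cl (R0 r θ)| * |Real.sin θ| ≤
      4 * g θ + (4 * g (θ + h) + (lam * (∫ u in (0:ℝ)..h, g (θ + u)) +
      4 / lam * (|R1 r θ| * |Real.sin θ| +
        ∫ u in (0:ℝ)..h, |R2 r (θ + u)| * (|Real.sin (θ + u)| + u)))) := by
    intro θ
    have hI1 : ∀ F : ℝ → ℝ, ∫ t in θ..(θ + h), F t = ∫ u in (0:ℝ)..h, F (θ + u) := by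
      intro F
      rw [intervalIntegral.integral_comp_add_left (fun x => F x)]; simp
    set L := |R1 r θ| + ∫ u in (0:ℝ)..h, |R2 r (θ + u)| with hLd
    have hI0 : 0 ≤ ∫ u in (0:ℝ)..h, |R2 r (θ + u)| := int_nonneg _ (fun x => abs_nonneg _) hh
    have hR1L : ∀ x ∈ Set.Icc θ (θ + h), |R1 r x| ≤ L := by
      intro x hx
      have := ftc_bound' (R1 r) (R2 r) (R1_deriv r) c2 hx
        (⟨le_rfl, by linarith⟩ : θ ∈ Set.Icc θ (θ + h))
      rw [hI1 (fun t => |R2 r t|)] at this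
      have h3 := abs_sub_abs_le_abs_sub (R1 r x) (R1 r θ)
      linarith
    have hlip : ∀ x ∈ Set.Icc θ (θ + h), ∀ y ∈ Set.Icc θ (θ + h),
        |R0 r x - R0 r y| ≤ L * |x - y| := by
      intro x hx y hy
      have := (convex_Icc θ (θ + h)).norm_image_sub_le_of_norm_hasDerivWithin_le
        (f := R0 r) (f' := R1 r) (C := L)
        (fun z hz => (R0_deriv r z).hasDerivWithinAt) (fun z hz => hR1L z hz) hy hx
      simpa using this
    have key := crossing (R0 r) c0 (by linarith : θ ≤ θ + h) hlam (by positivity) hlip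
    rw [hI1 (fun t => 1 - |cl (R0 r t)|)] at key
    have hs1 := Real.abs_sin_le_one θ
    have hs0 := abs_nonneg (Real.sin θ)
    have hIg : 0 ≤ ∫ u in (0:ℝ)..h, g (θ + u) := int_nonneg _ (fun x => g0 _) hh
    have e1 : L * |Real.sin θ| ≤ |R1 r θ| * |Real.sin θ| +
        ∫ u in (0:ℝ)..h, |R2 r (θ + u)| * (|Real.sin (θ + u)| + u) := by
      rw [hLd, add_mul]
      gcongr
      rw [← intervalIntegral.integral_mul_const]
      apply intervalIntegral.integral_mono_on hh
        (Continuous.intervalIntegrable (by fun_prop) _ _)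
        (Continuous.intervalIntegrable (by fun_prop) _ _)
      intro u hu
      exact mul_le_mul_of_nonneg_left (sin_shift θ u hu.1) (abs_nonneg _)
    have e2 : |cl (R0 r (θ + h)) - cl (R0 r θ)| * |Real.sin θ| ≤
        (4 * g θ + 4 * g (θ + h) + lam * (∫ u in (0:ℝ)..h, g (θ + u))) * |Real.sin θ|
        + 4 / lam * (L * |Real.sin θ|) := by
      have := mul_le_mul_of_nonneg_right key hs0
      refine this.trans (le_of_eq ?_)
      simp only [hg]; ring
    have e3 : (4 * g θ + 4 * g (θ + h) + lam * (∫ u in (0:ℝ)..h, g (θ + u))) * |Real.sin θ| ≤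
        4 * g θ + 4 * g (θ + h) + lam * (∫ u in (0:ℝ)..h, g (θ + u)) := by
      apply mul_le_of_le_one_right _ hs1
      have := g0 θ
      have := g0 (θ + h)
      positivity
    have e4 := mul_le_mul_of_nonneg_left e1 (by positivity : 0 ≤ 4 / lam)
    linarith
  have hJ := J_mono (by fun_prop) (by fun_prop) hpt
  rw [J_add (by fun_prop) (by fun_prop), J_add (by fun_prop) (by fun_prop),
    J_add (by fun_prop) (by fun_prop), J_const_mul, J_const_mul, J_const_mul, J_const_mul,
    J_add (by fun_prop) (by fun_prop), J_shift g perg] at hJ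
  have f1 : J (fun θ => ∫ u in (0:ℝ)..h, g (θ + u)) = h * J g := by
    unfold J
    rw [int_swap (fun θ u => g (θ + u)) (by fun_prop) (by linarith) hh]
    have : ∀ u, ∫ θ in (-Real.pi)..Real.pi, g (θ + u) = J g := fun u => J_shift g perg u
    simp only [this]
    simp [J]
  have f2 : J (fun θ => ∫ u in (0:ℝ)..h, |R2 r (θ + u)| * (|Real.sin (θ + u)| + u)) ≤
      h * (J (fun θ => |R2 r θ| * |Real.sin θ|) + h * J (fun θ => |R2 r θ|)) := by
    have sw := int_swap (fun θ u => |R2 r (θ + u)| * (|Real.sin (θ + u)| + u)) (by fun_prop)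
      (by linarith : -Real.pi ≤ Real.pi) hh
    have hin : ∀ u, ∫ θ in (-Real.pi)..Real.pi, |R2 r (θ + u)| * (|Real.sin (θ + u)| + u)
        = J (fun θ => |R2 r θ| * |Real.sin θ|) + u * J (fun θ => |R2 r θ|) := by
      intro u
      have := J_shift (fun θ => |R2 r θ| * (|Real.sin θ| + u)) (fun t => by simp [per2 t]) u
      refine Eq.trans this ?_
      rw [← J_const_mul, ← J_add (by fun_prop) (by fun_prop)]
      congr 1; funext t; ring
    simp only [hin] at sw
    change J _ = _ at sw
    rw [sw]
    have hx : 0 ≤ J (fun θ => |R2 r θ|) := J_nonneg fun x => abs_nonneg _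
    have : ∫ u in (0:ℝ)..h, (J (fun θ => |R2 r θ| * |Real.sin θ|) + u * J (fun θ => |R2 r θ|)) ≤
        ∫ u in (0:ℝ)..h, (J (fun θ => |R2 r θ| * |Real.sin θ|) + h * J (fun θ => |R2 r θ|)) := by
      apply intervalIntegral.integral_mono_on hh
        (Continuous.intervalIntegrable (by fun_prop) _ _)
        (Continuous.intervalIntegrable (by fun_prop) _ _)
      intro u hu
      have := mul_le_mul_of_nonneg_right hu.2 hx
      linarith
    refine this.trans (le_of_eq ?_)
    simp
    ring
  rw [f1] at hJ
  have f3 := mul_le_mul_of_nonneg_left f2 (by positivity : 0 ≤ 4 / lam)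
  linarith

lemma omega_neg (r : ℝ[X]) (h : ℝ) :
    J (fun θ => |cl (R0 r (θ + -h)) - cl (R0 r θ)| * |Real.sin θ|) =
    J (fun θ => |cl (R0 r (θ + h)) - cl (R0 r θ)| * |Real.sin θ|) := by
  rw [← J_neg]
  congr 1; funext θ
  rw [show -θ + -h = -(θ + h) by ring, R0_even, R0_even]; simp

lemma core (d : ℕ) (hd : 1 ≤ d) (r : ℝ[X]) (hr : r.natDegree ≤ d)
    (hT : J (fun θ => |R0 r θ| * |Real.sin θ|) ≤ 10)
    (hk : J (fun θ => (1 - |cl (R0 r θ)|) * |Real.sin θ|) ≤ (1 / 10 ^ 18)) :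
    ∃ q : ℝ[X], q.natDegree ≤ d ∧ (∀ θ, |q.eval (Real.cos θ)| ≤ 1) ∧
      J (fun θ => |cl (R0 r θ) - R0 q θ| * |Real.sin θ|) ≤ 2 := by
  have hpi := Real.pi_pos
  have c0 := R0_cont r
  have ccl := cl_cont
  have ck := kk_cont d
  have hn : (1 : ℝ) ≤ d := by exact_mod_cast hd
  set T := J (fun θ => |R0 r θ| * |Real.sin θ|) with hTd
  obtain ⟨_, x2, y1, y2⟩ := bounds d hd r hr
  rw [← hTd] at x2 y1 y2
  -- unweighted smallness
  have hκ : J (fun θ => 1 - |cl (R0 r θ)|) ≤ 6 / 10 ^ 9 := by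
    have cg : Continuous fun θ => 1 - |cl (R0 r θ)| := by fun_prop
    have h1 := near_zero_bound (g := fun θ => 1 - |cl (R0 r θ)|) cg
      (fun x => by linarith [cl_abs_le_one (R0 r x)]) (M := 1)
      (fun x _ => by linarith [abs_nonneg (cl (R0 r x))]) (δ := 1 / 10 ^ 9) (by norm_num)
      (by norm_num)
    have e1 := even_int (fun θ => 1 - |cl (R0 r θ)|) cg (fun x => by simp [R0_even]) Real.pi
    have e2 := even_int (fun θ => (1 - |cl (R0 r θ)|) * |Real.sin θ|) (by fun_prop)
      (fun x => by simp [R0_even]) Real.pi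
    unfold J at hk ⊢
    rw [e1]
    rw [e2] at hk
    norm_num at h1 hk ⊢
    linarith
  have hκ0 : 0 ≤ J (fun θ => 1 - |cl (R0 r θ)|) :=
    J_nonneg fun x => by linarith [cl_abs_le_one (R0 r x)]
  set κ := J (fun θ => 1 - |cl (R0 r θ)|)
  set om : ℝ → ℝ := fun h => J (fun θ => |cl (R0 r (θ + h)) - cl (R0 r θ)| * |Real.sin θ|) with hom
  have hom1 : ∀ h, 0 ≤ h → om h ≤ 1 / 13 * (1 + d ^ 2 * h ^ 2) := by
    intro h hh
    have := omega_bound r hh (lam := 2000000 * d) (by positivity)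
    refine this.trans ?_
    have z1 : J (fun θ => |R1 r θ| * |Real.sin θ|) ≤ 12000 * d :=
      y1.trans (by nlinarith)
    have z2 : J (fun θ => |R2 r θ| * |Real.sin θ|) ≤ 12000 * d ^ 2 :=
      y2.trans (by nlinarith [sq_nonneg (d : ℝ)])
    have z3 : J (fun θ => |R2 r θ|) ≤ 12000 * d ^ 3 :=
      x2.trans (by nlinarith [pow_nonneg (by linarith : (0:ℝ) ≤ d) 3])
    have z4 : 4 / (2000000 * (d : ℝ)) * (J (fun θ => |R1 r θ| * |Real.sin θ|) +
        h * (J (fun θ => |R2 r θ| * |Real.sin θ|) + h * J (fun θ => |R2 r θ|))) ≤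
        4 / (2000000 * (d : ℝ)) * (12000 * d + h * (12000 * d ^ 2 + h * (12000 * d ^ 3))) := by
      gcongr
    have z5 : 4 / (2000000 * (d : ℝ)) * (12000 * d + h * (12000 * d ^ 2 + h * (12000 * d ^ 3)))
        = 48000 / 2000000 * (1 + d * h + d ^ 2 * h ^ 2) := by
      field_simp
      ring
    have z6 : (d : ℝ) * h ≤ (1 + d ^ 2 * h ^ 2) / 2 := by nlinarith [sq_nonneg ((d : ℝ) * h - 1)]
    have z7 : 2000000 * (d : ℝ) * (h * κ) ≤ 2000000 * ((1 + d ^ 2 * h ^ 2) / 2) * (6 / 10 ^ 9) := by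
      calc 2000000 * (d : ℝ) * (h * κ) = 2000000 * (d * h) * κ := by ring
        _ ≤ _ := by gcongr
    have z8 : (0 : ℝ) ≤ d ^ 2 * h ^ 2 := by positivity
    rw [z5] at z4
    nlinarith
  have hom2 : ∀ h, om h ≤ 1 / 13 * (1 + d ^ 2 * h ^ 2) := by
    intro h
    rcases le_total 0 h with hh | hh
    · exact hom1 h hh
    · have h1 := hom1 (-h) (by linarith)
      have h2 : om (-h) = om h := omega_neg r h
      rw [h2, neg_sq] at h1
      exact h1
  obtain ⟨q, hq, hqe⟩ := smooth_poly d (fun x => cl (r.eval x)) (by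
    have := r.continuous; fun_prop)
  have hqe' : ∀ θ, q.eval (Real.cos θ) =
      (1 / (2 * Real.pi)) * J (fun h => kk d h * cl (R0 r (θ + h))) := hqe
  have habs : ∀ F : ℝ → ℝ, |J F| ≤ J (fun θ => |F θ|) := fun F =>
    intervalIntegral.abs_integral_le_integral_abs (by linarith)
  have hJk := J_kk d
  refine ⟨q, hq, ?_, ?_⟩
  · intro θ
    rw [hqe', abs_mul, abs_of_pos (by positivity : 0 < 1 / (2 * Real.pi))]
    have : J (fun h => |kk d h * cl (R0 r (θ + h))|) ≤ J (fun h => kk d h) := by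
      apply J_mono (by fun_prop) (by fun_prop)
      intro h
      rw [abs_mul, abs_of_nonneg (kk_nonneg d h)]
      exact mul_le_of_le_one_right (kk_nonneg d h) (cl_abs_le_one _)
    have h2 := (habs (fun h => kk d h * cl (R0 r (θ + h)))).trans this
    change _ ≤ J (kk d) at h2
    rw [hJk] at h2
    calc _ ≤ 1 / (2 * Real.pi) * (2 * Real.pi) := by gcongr
      _ = 1 := by field_simp
  · have hpt : ∀ θ, |cl (R0 r θ) - R0 q θ| * |Real.sin θ| ≤ (1 / (2 * Real.pi)) *
        J (fun h => kk d h * (|cl (R0 r (θ + h)) - cl (R0 r θ)| * |Real.sin θ|)) := by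
      intro θ
      have e1 : R0 q θ - cl (R0 r θ) = (1 / (2 * Real.pi)) *
          J (fun h => kk d h * (cl (R0 r (θ + h)) - cl (R0 r θ))) := by
        have : (fun h => kk d h * (cl (R0 r (θ + h)) - cl (R0 r θ))) =
          fun h => kk d h * cl (R0 r (θ + h)) + (-cl (R0 r θ)) * kk d h := by
          funext h; ring
        rw [this, J_add (by fun_prop) (by fun_prop), J_const_mul]
        change _ = _ * (_ + _ * J (kk d))
        rw [hJk, mul_add, ← hqe']
        simp only [R0]
        field_simp
        ring
      rw [abs_sub_comm, e1, abs_mul, abs_of_pos (by positivity : 0 < 1 / (2 * Real.pi)), mul_assoc]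
      apply mul_le_mul_of_nonneg_left _ (by positivity)
      refine (mul_le_mul_of_nonneg_right (habs _) (abs_nonneg _)).trans (le_of_eq ?_)
      rw [mul_comm, ← J_const_mul]
      congr 1; funext h
      rw [abs_mul, abs_of_nonneg (kk_nonneg d h)]; ring
    have hF : Continuous (Function.uncurry fun θ h : ℝ =>
        kk d h * (|cl (R0 r (θ + h)) - cl (R0 r θ)| * |Real.sin θ|)) := by fun_prop
    have hqc := R0_cont q
    have hc1 : Continuous fun θ => (1 / (2 * Real.pi)) *
        J (fun h => kk d h * (|cl (R0 r (θ + h)) - cl (R0 r θ)| * |Real.sin θ|)) :=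
      continuous_const.mul (int_param_cont _ hF _ _)
    have h1 := J_mono (by fun_prop) hc1 hpt
    refine h1.trans ?_
    rw [J_const_mul]
    have sw := int_swap _ hF (by linarith : -Real.pi ≤ Real.pi) (by linarith : -Real.pi ≤ Real.pi)
    have sw' : J (fun θ => J (fun h => kk d h * (|cl (R0 r (θ + h)) - cl (R0 r θ)| * |Real.sin θ|)))
        = J (fun h => kk d h * om h) := by
      refine Eq.trans sw ?_
      unfold J
      congr 1; funext h
      rw [intervalIntegral.integral_const_mul]
      rfl
    rw [sw']
    have homc : Continuous om :=
      int_param_cont (fun h θ => |cl (R0 r (θ + h)) - cl (R0 r θ)| * |Real.sin θ|)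
        (by fun_prop) _ _
    have h2 : J (fun h => kk d h * om h) ≤
        J (fun h => 1 / 13 * (kk d h + d ^ 2 * (kk d h * h ^ 2))) := by
      apply J_mono (by fun_prop) (by fun_prop)
      intro h
      have := mul_le_mul_of_nonneg_left (hom2 h) (kk_nonneg d h)
      linarith
    rw [J_const_mul, J_add (by fun_prop) (by fun_prop), J_const_mul] at h2
    change _ ≤ _ * (J (kk d) + _) at h2
    rw [hJk] at h2
    have h3 := J_kk_sq d hd
    have h4 : (d : ℝ) ^ 2 * J (fun t => kk d t * t ^ 2) ≤ 2 * Real.pi * 25 := by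
      calc _ ≤ (d : ℝ) ^ 2 * (2 * Real.pi * (25 / d ^ 2)) := by gcongr
        _ = _ := by field_simp
    have h5 : J (fun h => kk d h * om h) ≤ 2 * Real.pi * 2 := by linarith
    calc _ ≤ 1 / (2 * Real.pi) * (2 * Real.pi * 2) := by gcongr
      _ = 2 := by field_simp

end L1Reg

namespace L1Reg

lemma subst_cos (u : ℝ → ℝ) (hu : Continuous u) (a b : ℝ) :
    ∫ θ in a..b, u (Real.cos θ) * Real.sin θ = ∫ t in (Real.cos b)..(Real.cos a), u t := by
  have h := intervalIntegral.integral_comp_mul_deriv (a := a) (b := b) (f := Real.cos)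
    (f' := fun θ => -Real.sin θ) (g := u) (fun x _ => Real.hasDerivAt_cos x)
    (by fun_prop) hu
  rw [intervalIntegral.integral_symm (Real.cos a), ← h, ← intervalIntegral.integral_neg]
  congr 1; funext θ; simp

lemma J_half (u : ℝ → ℝ) (hu : Continuous u) :
    J (fun θ => u (Real.cos θ) * |Real.sin θ|) = 2 * ∫ t in (-1:ℝ)..1, u t := by
  unfold J
  rw [even_int _ (by fun_prop) (by intro x; simp)]
  have := subst_cos u hu 0 Real.pi
  rw [Real.cos_pi, Real.cos_zero] at this
  rw [← this]
  congr 1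
  apply intervalIntegral.integral_congr
  intro θ hθ
  rw [Set.uIcc_of_le Real.pi_pos.le] at hθ
  simp only
  rw [abs_of_nonneg (Real.sin_nonneg_of_mem_Icc hθ)]

lemma sum_shift (m : ℕ) (F : ℕ → ℝ) :
    ∑ j ∈ Finset.Icc 1 m, F j = ∑ j ∈ Finset.range m, F (j + 1) := by
  induction m with
  | zero => simp
  | succ k ih => rw [Finset.sum_Icc_succ_top (by omega), ih, Finset.sum_range_succ]

lemma sum_th (m : ℕ) (hm : 0 < m) (u : ℝ → ℝ) (hu : Continuous u) :
    ∑ j ∈ Finset.Icc 1 m, ∫ θ in (Real.pi * ((j:ℝ) - 1) / m)..(Real.pi * j / m), u θ =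
      ∫ θ in (0:ℝ)..Real.pi, u θ := by
  rw [sum_shift]
  have h := intervalIntegral.sum_integral_adjacent_intervals (f := u) (n := m)
    (a := fun j : ℕ => Real.pi * j / m) (μ := MeasureTheory.volume)
    (fun k _ => hu.intervalIntegrable _ _)
  have hm' : (m:ℝ) ≠ 0 := by positivity
  simp only [Nat.cast_zero, mul_zero, zero_div] at h
  rw [mul_div_assoc, div_self hm', mul_one] at h
  rw [← h]
  apply Finset.sum_congr rfl
  intro j _
  push_cast
  simp

/-- integral over the j-th Chebyshev interval -/
noncomputable def Ij (m j : ℕ) (u : ℝ → ℝ) : ℝ :=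
  ∫ t in (Real.cos (Real.pi * j / m))..(Real.cos (Real.pi * ((j:ℝ) - 1) / m)), u t

lemma sum_Ij (m : ℕ) (hm : 0 < m) (u : ℝ → ℝ) (hu : Continuous u) :
    ∑ j ∈ Finset.Icc 1 m, Ij m j u = ∫ t in (-1:ℝ)..1, u t := by
  have h := sum_th m hm (fun θ => u (Real.cos θ) * Real.sin θ) (by fun_prop)
  simp only [subst_cos u hu] at h
  rw [Real.cos_pi, Real.cos_zero] at h
  exact h

lemma sum_chebLen (m : ℕ) (hm : 0 < m) : ∑ j ∈ Finset.Icc 1 m, chebLen m j = 2 := by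
  have h := sum_Ij m hm (fun _ => 1) continuous_const
  simp only [Ij, intervalIntegral.integral_const, smul_eq_mul, mul_one] at h
  unfold chebLen
  rw [h]; norm_num

lemma th_mem (m j : ℕ) (hj : j ∈ Finset.Icc 1 m) :
    0 ≤ Real.pi * ((j:ℝ) - 1) / m ∧ Real.pi * ((j:ℝ) - 1) / m ≤ Real.pi * j / m ∧
    Real.pi * j / m ≤ Real.pi ∧
    Real.pi * j / m - Real.pi * ((j:ℝ) - 1) / m = Real.pi / m := by
  rw [Finset.mem_Icc] at hj
  have h1 : (1:ℝ) ≤ j := by exact_mod_cast hj.1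
  have h2 : (j:ℝ) ≤ m := by exact_mod_cast hj.2
  have hm : (0:ℝ) < m := by linarith
  have hp := Real.pi_pos
  refine ⟨?_, ?_, ?_, ?_⟩
  · have : 0 ≤ (j:ℝ) - 1 := by linarith
    positivity
  · gcongr; linarith
  · rw [div_le_iff₀ hm]; gcongr
  · field_simp; ring

lemma cos_le (m j : ℕ) (hj : j ∈ Finset.Icc 1 m) :
    Real.cos (Real.pi * j / m) ≤ Real.cos (Real.pi * ((j:ℝ) - 1) / m) := by
  obtain ⟨a, b, c, _⟩ := th_mem m j hj
  exact Real.cos_le_cos_of_nonneg_of_le_pi a c b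

lemma chebLen_nonneg (m j : ℕ) (hj : j ∈ Finset.Icc 1 m) : 0 ≤ chebLen m j := by
  unfold chebLen; linarith [cos_le m j hj]

lemma disc (m j : ℕ) (hj : j ∈ Finset.Icc 1 m) (u : ℝ → ℝ) (hu : Continuous u) (W : ℝ)
    (hW : ∀ s ∈ chebInterval m j, ∀ t ∈ chebInterval m j, |u s - u t| ≤ W)
    (x : ℝ) (hx : x ∈ chebInterval m j) :
    |chebLen m j * u x - Ij m j u| ≤ chebLen m j * W := by
  have hc := cos_le m j hj
  have e : chebLen m j * u x - Ij m j u =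
      ∫ t in (Real.cos (Real.pi * j / m))..(Real.cos (Real.pi * ((j:ℝ) - 1) / m)), (u x - u t) := by
    rw [intervalIntegral.integral_sub (by simp) (hu.intervalIntegrable _ _)]
    simp [chebLen, Ij]
  rw [e]
  have := intervalIntegral.norm_integral_le_of_norm_le_const
    (a := Real.cos (Real.pi * j / m)) (b := Real.cos (Real.pi * ((j:ℝ) - 1) / m))
    (f := fun t => u x - u t) (C := W) (by
      intro t ht
      rw [Set.uIoc_of_le hc] at ht
      exact hW x hx t ⟨ht.1.le, ht.2⟩)
  rw [Real.norm_eq_abs] at this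
  refine this.trans (le_of_eq ?_)
  rw [abs_of_nonneg (by linarith), mul_comm]; rfl

/-- variation on the j-th interval -/
noncomputable def V (r : ℝ[X]) (m j : ℕ) : ℝ :=
  ∫ θ in (Real.pi * ((j:ℝ) - 1) / m)..(Real.pi * j / m), |R1 r θ|

lemma V_bound (r : ℝ[X]) (m j : ℕ) (hj : j ∈ Finset.Icc 1 m) (s t : ℝ)
    (hs : s ∈ chebInterval m j) (ht : t ∈ chebInterval m j) :
    |r.eval s - r.eval t| ≤ V r m j := by
  obtain ⟨a, b, c, _⟩ := th_mem m j hj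
  have key : ∀ s ∈ chebInterval m j, ∃ θ ∈ Set.Icc (Real.pi * ((j:ℝ) - 1) / m) (Real.pi * j / m),
      Real.cos θ = s := by
    intro s hs
    have h := intermediate_value_Icc' b (f := Real.cos) Real.continuous_cos.continuousOn hs
    exact h
  obtain ⟨θ, hθ, rfl⟩ := key s hs
  obtain ⟨φ, hφ, rfl⟩ := key t ht
  exact ftc_bound' (R0 r) (R1 r) (R0_deriv r) (R1_cont r) hθ hφ

lemma chebLen_le (m j : ℕ) (hj : j ∈ Finset.Icc 1 m) (θ : ℝ)
    (hθ : θ ∈ Set.Icc (Real.pi * ((j:ℝ) - 1) / m) (Real.pi * j / m)) :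
    chebLen m j ≤ (Real.pi / m) * (|Real.sin θ| + Real.pi / m) := by
  obtain ⟨a, b, c, e⟩ := th_mem m j hj
  unfold chebLen
  set A := Real.pi * ((j:ℝ) - 1) / m
  set B := Real.pi * j / m
  have hBA : 0 ≤ B - A := by linarith
  rw [← e]
  have h1 : Real.cos A - Real.cos B = 2 * Real.sin ((A + B) / 2) * Real.sin ((B - A) / 2) := by
    rw [Real.cos_sub_cos, show (A - B) / 2 = -((B - A) / 2) by ring, Real.sin_neg]; ring
  have h2 : |Real.sin ((B - A) / 2)| ≤ (B - A) / 2 := by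
    have := Real.abs_sin_le_abs (x := (B - A) / 2)
    rwa [abs_of_nonneg (by linarith : 0 ≤ (B - A) / 2)] at this
  have h3 : |Real.sin ((A + B) / 2)| ≤ |Real.sin θ| + (B - A) := by
    have h4 : |Real.sin ((A + B) / 2) - Real.sin θ| ≤ |(A + B) / 2 - θ| := by
      have := Real.abs_sin_sub_sin_le ((A + B) / 2) θ
      exact this
    have h5 : |(A + B) / 2 - θ| ≤ B - A := by
      rw [abs_le]; constructor <;> linarith [hθ.1, hθ.2]
    have h6 := abs_sub_abs_le_abs_sub (Real.sin ((A + B) / 2)) (Real.sin θ)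
    linarith
  calc Real.cos A - Real.cos B ≤ |Real.cos A - Real.cos B| := le_abs_self _
    _ = 2 * |Real.sin ((A + B) / 2)| * |Real.sin ((B - A) / 2)| := by
        rw [h1, abs_mul, abs_mul, abs_two]
    _ ≤ 2 * (|Real.sin θ| + (B - A)) * ((B - A) / 2) := by gcongr
    _ = _ := by ring

/-- total discretisation error -/
noncomputable def Dl (r : ℝ[X]) (m : ℕ) : ℝ := ∑ j ∈ Finset.Icc 1 m, chebLen m j * V r m j

lemma Dl_le (d : ℕ) (hd : 1 ≤ d) (r : ℝ[X]) (hr : r.natDegree ≤ d) (m : ℕ)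
    (hm : 4 * (d:ℝ) ≤ m) :
    Dl r m ≤ 10000 * (d / m) * ∫ t in (-1:ℝ)..1, |r.eval t| := by
  have hd1 : (1:ℝ) ≤ d := by exact_mod_cast hd
  have hm0 : (0:ℝ) < m := by linarith
  have hm1 : 0 < m := by exact_mod_cast hm0
  have c1 := R1_cont r
  have hp := Real.pi_pos
  set T := ∫ t in (-1:ℝ)..1, |r.eval t| with hT
  have hT2 : J (fun θ => |R0 r θ| * |Real.sin θ|) = 2 * T :=
    J_half (fun t => |r.eval t|) (by have := r.continuous; fun_prop)
  have hT0 : 0 ≤ T := int_nonneg _ (fun _ => abs_nonneg _) (by norm_num)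
  obtain ⟨b1, -, b3, -⟩ := bounds d hd r hr
  rw [hT2] at b1 b3
  set w : ℝ → ℝ := fun θ => (Real.pi / m) * (|Real.sin θ| + Real.pi / m) * |R1 r θ| with hw
  have hwc : Continuous w := by rw [hw]; fun_prop
  have s1 : Dl r m ≤ ∫ θ in (0:ℝ)..Real.pi, w θ := by
    rw [← sum_th m hm1 w hwc]
    unfold Dl
    apply Finset.sum_le_sum
    intro j hj
    unfold V
    rw [← intervalIntegral.integral_const_mul]
    apply intervalIntegral.integral_mono_on (th_mem m j hj).2.1
      (Continuous.intervalIntegrable (by fun_prop) _ _) (hwc.intervalIntegrable _ _)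
    intro θ hθ
    exact mul_le_mul_of_nonneg_right (chebLen_le m j hj θ hθ) (abs_nonneg _)
  have s2 : 2 * ∫ θ in (0:ℝ)..Real.pi, w θ = J w := by
    unfold J
    rw [even_int w hwc]
    intro x; simp [hw, R1]
  have s3 : J w = (Real.pi / m) * J (fun θ => |R1 r θ| * |Real.sin θ|) +
      (Real.pi / m) ^ 2 * J (fun θ => |R1 r θ|) := by
    rw [← J_const_mul, ← J_const_mul, ← J_add (by fun_prop) (by fun_prop)]
    congr 1; funext θ; simp only [hw]; ring
  have hpi : Real.pi ≤ 3.15 := Real.pi_lt_d2.le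
  have q0 : 0 ≤ (d:ℝ) / m := by positivity
  have q1 : (d:ℝ) / m ≤ 1/4 := by rw [div_le_iff₀ hm0]; linarith
  have s4 : J w ≤ (Real.pi / m) * (1200 * d * (2 * T)) + (Real.pi / m) ^ 2 * (1200 * d ^ 2 * (2 * T)) := by
    rw [s3]; gcongr
  have s5 : (Real.pi / m) * (1200 * d * (2 * T)) + (Real.pi / m) ^ 2 * (1200 * d ^ 2 * (2 * T))
      = 2400 * (Real.pi + Real.pi ^ 2 * (d / m)) * ((d / m) * T) := by
    field_simp
    ring
  have s6 : Real.pi + Real.pi ^ 2 * ((d:ℝ) / m) ≤ 3.15 + 3.15 ^ 2 * (1/4) := by gcongr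
  have s7 : 2400 * (Real.pi + Real.pi ^ 2 * ((d:ℝ) / m)) * ((d / m) * T) ≤
      20000 * ((d / m) * T) := by
    apply mul_le_mul_of_nonneg_right _ (by positivity)
    norm_num at s6 ⊢
    linarith
  linarith

end L1Reg

namespace L1Reg

/-- weighted mean over the samples -/
noncomputable def E {n : ℕ} (m : ℕ) (x : Fin n → ℝ) (g : Fin n → ℝ) : ℝ :=
  ∑ j ∈ Finset.Icc 1 m, chebLen m j *
    ((∑ i ∈ sampleSet m j x, g i) / ((sampleSet m j x).card : ℝ))

lemma mem_sample {n : ℕ} {m j : ℕ} {x : Fin n → ℝ} {i : Fin n} (h : i ∈ sampleSet m j x) :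
    x i ∈ chebInterval m j := by
  simpa [sampleSet] using h

section
variable {n : ℕ} {m : ℕ} {x : Fin n → ℝ}

lemma E_mono {f g : Fin n → ℝ} (h : ∀ i, f i ≤ g i) : E m x f ≤ E m x g := by
  unfold E
  apply Finset.sum_le_sum
  intro j hj
  apply mul_le_mul_of_nonneg_left _ (chebLen_nonneg m j hj)
  apply div_le_div_of_nonneg_right _ (by positivity)
  exact Finset.sum_le_sum fun i _ => h i

lemma E_add (f g : Fin n → ℝ) : E m x (fun i => f i + g i) = E m x f + E m x g := by
  unfold E
  rw [← Finset.sum_add_distrib]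
  apply Finset.sum_congr rfl
  intro j _
  rw [Finset.sum_add_distrib]; ring

lemma E_mul (c : ℝ) (f : Fin n → ℝ) : E m x (fun i => c * f i) = c * E m x f := by
  unfold E
  rw [Finset.mul_sum]
  apply Finset.sum_congr rfl
  intro j _
  rw [← Finset.mul_sum]; ring

lemma E_sub (f g : Fin n → ℝ) : E m x (fun i => f i - g i) = E m x f - E m x g := by
  have := E_add (m := m) (x := x) f (fun i => (-1) * g i)
  rw [E_mul] at this
  rw [show (fun i => f i - g i) = fun i => f i + (-1) * g i by funext i; ring, this]; ring

lemma E_disc (hm : 0 < m) (hne : ∀ j ∈ Finset.Icc 1 m, (sampleSet m j x).Nonempty)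
    (u : ℝ → ℝ) (hu : Continuous u) (W : ℕ → ℝ)
    (hW : ∀ j ∈ Finset.Icc 1 m, ∀ s ∈ chebInterval m j, ∀ t ∈ chebInterval m j,
      |u s - u t| ≤ W j) :
    |E m x (fun i => u (x i)) - ∫ t in (-1:ℝ)..1, u t| ≤
      ∑ j ∈ Finset.Icc 1 m, chebLen m j * W j := by
  rw [← sum_Ij m hm u hu]
  unfold E
  rw [← Finset.sum_sub_distrib]
  refine (Finset.abs_sum_le_sum_abs _ _).trans (Finset.sum_le_sum fun j hj => ?_)
  have hc : (0:ℝ) < ((sampleSet m j x).card : ℝ) := by exact_mod_cast (hne j hj).card_pos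
  have e : chebLen m j * ((∑ i ∈ sampleSet m j x, u (x i)) / ((sampleSet m j x).card : ℝ)) - Ij m j u
      = (∑ i ∈ sampleSet m j x, (chebLen m j * u (x i) - Ij m j u)) / ((sampleSet m j x).card : ℝ) := by
    rw [Finset.sum_sub_distrib, ← Finset.mul_sum, Finset.sum_const, nsmul_eq_mul]
    field_simp
  rw [e, abs_div, abs_of_pos hc, div_le_iff₀ hc]
  refine (Finset.abs_sum_le_sum_abs _ _).trans ?_
  refine (Finset.sum_le_sum fun i hi => disc m j hj u hu (W j) (hW j hj) (x i) (mem_sample hi)).trans ?_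
  rw [Finset.sum_const, nsmul_eq_mul, mul_comm]

lemma E_const (hm : 0 < m) (hne : ∀ j ∈ Finset.Icc 1 m, (sampleSet m j x).Nonempty) (c : ℝ) :
    E m x (fun _ => c) = 2 * c := by
  have h := E_disc hm hne (fun _ => c) continuous_const (fun _ => 0) (by simp)
  simp at h
  have := sub_eq_zero.1 h
  rw [this]; ring

lemma E_out (hm : 0 < m) (α : ℝ) (o : Fin n → ℝ) (ho : ∀ i, 0 ≤ o i)
    (hα : ∀ j ∈ Finset.Icc 1 m, (sampleSet m j x).Nonempty ∧
      ∑ i ∈ sampleSet m j x, o i ≤ α * ((sampleSet m j x).card : ℝ))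
    (hα0 : 0 ≤ α)
    (u : ℝ → ℝ) (hu : Continuous u) (hu0 : ∀ t, 0 ≤ u t) (W : ℕ → ℝ)
    (hW : ∀ j ∈ Finset.Icc 1 m, ∀ s ∈ chebInterval m j, ∀ t ∈ chebInterval m j,
      |u s - u t| ≤ W j) :
    E m x (fun i => o i * u (x i)) ≤ α * ((∫ t in (-1:ℝ)..1, u t) +
      ∑ j ∈ Finset.Icc 1 m, chebLen m j * W j) := by
  rw [← sum_Ij m hm u hu, ← Finset.sum_add_distrib, Finset.mul_sum]
  unfold E
  apply Finset.sum_le_sum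
  intro j hj
  obtain ⟨hne, hs⟩ := hα j hj
  have hc : (0:ℝ) < ((sampleSet m j x).card : ℝ) := by exact_mod_cast hne.card_pos
  have hl := chebLen_nonneg m j hj
  obtain ⟨k, hk, hmax⟩ := Finset.exists_max_image (sampleSet m j x) (fun i => u (x i)) hne
  have hd := (abs_le.1 (disc m j hj u hu (W j) (hW j hj) (x k) (mem_sample hk))).2
  have h1 : (∑ i ∈ sampleSet m j x, o i * u (x i)) / ((sampleSet m j x).card : ℝ) ≤ α * u (x k) := by
    rw [div_le_iff₀ hc]
    calc ∑ i ∈ sampleSet m j x, o i * u (x i) ≤ ∑ i ∈ sampleSet m j x, o i * u (x k) :=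
          Finset.sum_le_sum fun i hi => mul_le_mul_of_nonneg_left (hmax i hi) (ho i)
      _ = (∑ i ∈ sampleSet m j x, o i) * u (x k) := by rw [Finset.sum_mul]
      _ ≤ α * ((sampleSet m j x).card : ℝ) * u (x k) :=
          mul_le_mul_of_nonneg_right hs (hu0 _)
      _ = _ := by ring
  calc _ ≤ chebLen m j * (α * u (x k)) := mul_le_mul_of_nonneg_left h1 hl
    _ = α * (chebLen m j * u (x k)) := by ring
    _ ≤ _ := mul_le_mul_of_nonneg_left (by linarith) hα0

end

lemma sum_W (r : ℝ[X]) (m : ℕ) (c : ℝ) :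
    ∑ j ∈ Finset.Icc 1 m, chebLen m j * (c * V r m j) = c * Dl r m := by
  unfold Dl
  rw [Finset.mul_sum]
  exact Finset.sum_congr rfl fun j _ => by ring

/-- scaled clip inequality -/
lemma clip_ineq {σ e r s : ℝ} (hr : r = σ * s) (hσ : 0 < σ) (he : |e| ≤ σ) :
    |e - σ * cl s| ≤ σ + |e - r| - |r| := by
  rw [abs_le] at he
  unfold cl
  rcases le_total s 1 with h1 | h1 <;> rcases le_total s (-1) with h2 | h2
  · rw [min_eq_right h1, max_eq_left h2]
    have : r ≤ -σ := by rw [hr]; nlinarith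
    rw [abs_of_nonneg (by linarith : 0 ≤ e - r), abs_of_nonpos (by linarith : r ≤ 0),
      abs_of_nonneg (by linarith)]; linarith
  · rw [min_eq_right h1, max_eq_right h2, ← hr]
    have : |r| ≤ σ := by
      rw [hr, abs_le]; constructor <;> nlinarith
    linarith
  · linarith
  · rw [min_eq_left h1, max_eq_right (by norm_num)]
    have : σ ≤ r := by rw [hr]; nlinarith
    rw [abs_of_nonpos (by linarith : e - r ≤ 0), abs_of_nonneg (by linarith : 0 ≤ r),
      abs_of_nonpos (by linarith)]; linarith

lemma g_lip (σ a b : ℝ) : |(|(|a| - σ)| - σ) - (|(|b| - σ)| - σ)| ≤ |a - b| := by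
  have h1 := abs_abs_sub_abs_le (|a| - σ) (|b| - σ)
  have h2 := abs_abs_sub_abs_le a b
  rw [show (|a| - σ) - (|b| - σ) = |a| - |b| by ring] at h1
  rw [show (|(|a| - σ)| - σ) - (|(|b| - σ)| - σ) = |(|a| - σ)| - |(|b| - σ)| by ring]
  exact h1.trans h2

lemma base {n : ℕ} {m : ℕ} {x : Fin n → ℝ} (hm : 0 < m) (α σ : ℝ) (hσ : 0 ≤ σ) (hα0 : 0 ≤ α)
    (hα1 : α ≤ 1/2)
    (e o : Fin n → ℝ) (ho : ∀ i, (o i = 0 ∧ |e i| ≤ σ) ∨ o i = 1)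
    (hα : ∀ j ∈ Finset.Icc 1 m, (sampleSet m j x).Nonempty ∧
      ∑ i ∈ sampleSet m j x, o i ≤ α * ((sampleSet m j x).card : ℝ))
    (r : ℝ[X])
    (hopt : E m x (fun i => |e i - r.eval (x i)|) ≤ E m x (fun i => |e i|)) :
    (1 - 2 * α) * (∫ t in (-1:ℝ)..1, |r.eval t|) ≤ 4 * σ * (1 - α) + 2 * Dl r m := by
  have hne := fun j hj => (hα j hj).1
  have ho0 : ∀ i, 0 ≤ o i := fun i => by rcases ho i with h | h <;> simp [h]
  have cr := r.continuous
  set g : ℝ → ℝ := fun t => |(|r.eval t| - σ)| - σ with hg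
  have cg : Continuous g := by rw [hg]; fun_prop
  have hgr : ∀ t, 0 ≤ g t + |r.eval t| := fun t => by
    have := neg_abs_le (|r.eval t| - σ); simp only [hg]; linarith
  have pt : ∀ i, g (x i) - o i * (g (x i) + |r.eval (x i)|) ≤ |e i - r.eval (x i)| - |e i| := by
    intro i
    rcases ho i with ⟨h, h'⟩ | h
    · rw [h, zero_mul, sub_zero]
      have a1 := abs_sub_abs_le_abs_sub (r.eval (x i)) (e i)
      rw [abs_sub_comm (r.eval (x i))] at a1
      have a2 := abs_sub_abs_le_abs_sub (e i) (e i - r.eval (x i))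
      rw [sub_sub_cancel] at a2
      simp only [hg]
      rcases abs_cases (|r.eval (x i)| - σ) with ⟨h1, _⟩ | ⟨h1, _⟩ <;> rw [h1] <;> linarith
    · rw [h]
      have a2 := abs_sub_abs_le_abs_sub (e i) (e i - r.eval (x i))
      rw [sub_sub_cancel] at a2
      linarith
  have h1 := E_mono (m := m) (x := x) pt
  rw [E_sub (fun i => g (x i)) (fun i => o i * (g (x i) + |r.eval (x i)|)),
    E_sub (fun i => |e i - r.eval (x i)|) (fun i => |e i|)] at h1
  have h2 := (abs_le.1 (E_disc hm hne g cg (fun j => 1 * V r m j) (by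
    intro j hj s hs t ht
    rw [one_mul]
    exact (g_lip σ _ _).trans (V_bound r m j hj s t hs ht)))).1
  have h3 := E_out hm α o ho0 hα hα0 (fun t => g t + |r.eval t|) (by fun_prop) hgr
    (fun j => 2 * V r m j) (by
    intro j hj s hs t ht
    have a1 := (g_lip σ _ _).trans (V_bound r m j hj s t hs ht)
    have a2 := (abs_abs_sub_abs_le _ _).trans (V_bound r m j hj s t hs ht)
    have a3 := abs_add_le (g s - g t) (|r.eval s| - |r.eval t|)
    rw [show g s + |r.eval s| - (g t + |r.eval t|) = (g s - g t) + (|r.eval s| - |r.eval t|) by ring]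
    have a4 : |g s - g t| ≤ V r m j := a1
    linarith)
  rw [sum_W] at h2 h3
  have h4 : ∫ t in (-1:ℝ)..1, (g t + |r.eval t|) = (∫ t in (-1:ℝ)..1, g t) +
      ∫ t in (-1:ℝ)..1, |r.eval t| :=
    intervalIntegral.integral_add (cg.intervalIntegrable _ _) (cr.abs.intervalIntegrable _ _)
  have h5 : (∫ t in (-1:ℝ)..1, |r.eval t|) - 4 * σ ≤ ∫ t in (-1:ℝ)..1, g t := by
    have : ∫ t in (-1:ℝ)..1, (|r.eval t| - 2 * σ) ≤ ∫ t in (-1:ℝ)..1, g t := by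
      apply intervalIntegral.integral_mono (by norm_num)
        (Continuous.intervalIntegrable (by fun_prop) _ _) (cg.intervalIntegrable _ _)
      intro t
      simp only [hg]
      linarith [le_abs_self (|r.eval t| - σ)]
    rw [intervalIntegral.integral_sub (cr.abs.intervalIntegrable _ _) (by simp)] at this
    simp at this
    linarith
  rw [h4] at h3
  have hD : 0 ≤ Dl r m := by
    unfold Dl
    apply Finset.sum_nonneg
    intro j hj
    exact mul_nonneg (chebLen_nonneg m j hj) (int_nonneg _ (fun _ => abs_nonneg _) (th_mem m j hj).2.1)
  have h6 := mul_le_mul_of_nonneg_left h5 (by linarith : 0 ≤ 1 - α)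
  have h7 : α * Dl r m ≤ 1/2 * Dl r m := mul_le_mul_of_nonneg_right hα1 hD
  nlinarith

lemma Dl_nonneg (r : ℝ[X]) (m : ℕ) : 0 ≤ Dl r m := by
  unfold Dl
  apply Finset.sum_nonneg
  intro j hj
  exact mul_nonneg (chebLen_nonneg m j hj) (int_nonneg _ (fun _ => abs_nonneg _) (th_mem m j hj).2.1)

end L1Reg

namespace L1Reg

lemma hard {n : ℕ} {m : ℕ} {x : Fin n → ℝ} (hm : 0 < m) (α σ : ℝ) (hσ : 0 < σ) (hα0 : 0 ≤ α)
    (hα1 : α ≤ 1 / 10 ^ 21)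
    (e o : Fin n → ℝ) (ho : ∀ i, (o i = 0 ∧ |e i| ≤ σ) ∨ o i = 1)
    (hα : ∀ j ∈ Finset.Icc 1 m, (sampleSet m j x).Nonempty ∧
      ∑ i ∈ sampleSet m j x, o i ≤ α * ((sampleSet m j x).card : ℝ))
    (d : ℕ) (hd : 1 ≤ d) (r : ℝ[X]) (hr : r.natDegree ≤ d)
    (hDl : ∀ q : ℝ[X], q.natDegree ≤ d →
      Dl q m ≤ 1 / 10 ^ 21 * ∫ t in (-1:ℝ)..1, |q.eval t|)
    (hT5 : (∫ t in (-1:ℝ)..1, |r.eval t|) ≤ 5 * σ)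
    (hT4 : 4 * σ ≤ (∫ t in (-1:ℝ)..1, |r.eval t|))
    (hx : ∀ i, x i ∈ Set.Icc (-1:ℝ) 1)
    (hopt : ∀ q : ℝ[X], q.natDegree ≤ d →
      E m x (fun i => |e i - r.eval (x i)|) ≤ E m x (fun i => |e i - q.eval (x i)|)) :
    False := by
  have hne := fun j hj => (hα j hj).1
  have ho0 : ∀ i, 0 ≤ o i := fun i => by rcases ho i with h | h <;> simp [h]
  have cr := r.continuous
  have ccl := cl_cont
  set T := ∫ t in (-1:ℝ)..1, |r.eval t| with hTdef
  have hD := hDl r hr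
  rw [← hTdef] at hD
  have hD5 : Dl r m ≤ 5 / 10 ^ 21 * σ := by linarith
  have hD0 := Dl_nonneg r m
  set s : ℝ[X] := Polynomial.C σ⁻¹ * r with hs
  have hse : ∀ t, r.eval t = σ * s.eval t := fun t => by
    rw [hs, eval_mul, eval_C]; field_simp
  have hsd : s.natDegree ≤ d := (natDegree_C_mul_le _ _).trans hr
  set c : ℝ → ℝ := fun t => σ * cl (s.eval t) with hc
  have cs := s.continuous
  have cc : Continuous c := by rw [hc]; fun_prop
  have hclip : ∀ t f, |f| ≤ σ → |f - c t| ≤ σ + |f - r.eval t| - |r.eval t| :=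
    fun t f hf => clip_ineq (hse t) hσ hf
  have hc1 : ∀ t, |c t| ≤ σ := fun t => by
    simp only [hc]; rw [abs_mul, abs_of_pos hσ]
    have := cl_abs_le_one (s.eval t)
    nlinarith
  have hcl : ∀ a b, |c a - c b| ≤ |r.eval a - r.eval b| := fun a b => by
    simp only [hc]
    rw [hse, hse, ← mul_sub, ← mul_sub, abs_mul, abs_mul]
    exact mul_le_mul_of_nonneg_left (cl_lip _ _) (abs_nonneg _)
  -- outlier masses
  have a1 : E m x o ≤ 2 * α := by
    have := E_out hm α o ho0 hα hα0 (fun _ => 1) continuous_const (fun _ => by norm_num)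
      (fun _ => 0) (by simp)
    simp only [mul_one, mul_zero, Finset.sum_const_zero, add_zero,
      intervalIntegral.integral_const, smul_eq_mul] at this
    linarith
  have a0 : 0 ≤ E m x o := by
    have := E_mono (m := m) (x := x) (f := fun _ => 0) (g := o) ho0
    rw [E_const hm hne] at this; linarith
  have a2 : E m x (fun i => o i * |r.eval (x i)|) ≤ 6 / 10 ^ 21 * σ := by
    have := E_out hm α o ho0 hα hα0 (fun t => |r.eval t|) (by fun_prop) (fun _ => abs_nonneg _)
      (fun j => 1 * V r m j) (by
        intro j hj s hs t ht
        rw [one_mul]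
        exact (abs_abs_sub_abs_le _ _).trans (V_bound r m j hj s t hs ht))
    rw [sum_W, ← hTdef] at this
    refine this.trans ?_
    calc α * (T + 1 * Dl r m) ≤ 1 / 10 ^ 21 * (5 * σ + 1 * σ) := by
          gcongr <;> linarith
      _ = _ := by ring
  have a3 : T - Dl r m ≤ E m x (fun i => |r.eval (x i)|) := by
    have := (abs_le.1 (E_disc hm hne (fun t => |r.eval t|) (by fun_prop) (fun j => 1 * V r m j) (by
        intro j hj s hs t ht
        rw [one_mul]
        exact (abs_abs_sub_abs_le _ _).trans (V_bound r m j hj s t hs ht)))).1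
    rw [sum_W, ← hTdef] at this
    linarith
  set a := E m x (fun i => o i * |r.eval (x i)|) with ha
  set Er := E m x (fun i => (1 - o i) * |r.eval (x i)|) with hEr
  set Ee := E m x (fun i => (1 - o i) * |e i|) with hEe
  set X := E m x (fun i => (1 - o i) * |e i - r.eval (x i)|) with hX
  set Ec := E m x (fun i => (1 - o i) * |e i - c (x i)|) with hEc
  have b1 : Er = E m x (fun i => |r.eval (x i)|) - a := by
    rw [hEr, ha, ← E_sub]; congr 1; funext i; ring
  have b2 : 4 * σ - 20 / 10 ^ 21 * σ ≤ Er := by rw [b1]; linarith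
  have ew : E m x (fun i => 1 - o i) ≤ 2 := by
    rw [E_sub (fun _ => 1) o, E_const hm hne]; linarith
  have ewσ : E m x (fun i => σ * (1 - o i)) ≤ 2 * σ := by
    rw [E_mul]; nlinarith
  have b3 : Ee ≤ 2 * σ := by
    refine le_trans (E_mono ?_) ewσ
    intro i
    rcases ho i with ⟨h, h'⟩ | h <;> rw [h] <;> simp
    exact h'
  have b4 : X ≤ Ee + a := by
    have h0 := hopt 0 (by simp)
    simp only [eval_zero, sub_zero] at h0
    have h1 : E m x (fun i => (1 - o i) * |e i - r.eval (x i)| - (1 - o i) * |e i|) ≤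
      E m x (fun i => (|e i - r.eval (x i)| - |e i|) + o i * |r.eval (x i)|) := by
      apply E_mono
      intro i
      rcases ho i with ⟨h, h'⟩ | h <;> rw [h]
      · linarith
      · have a2 := abs_sub_abs_le_abs_sub (e i) (e i - r.eval (x i))
        rw [sub_sub_cancel] at a2
        linarith
    rw [E_sub, E_add, E_sub (fun i => |e i - r.eval (x i)|) (fun i => |e i|)] at h1
    linarith
  have b5 : Er - Ee ≤ X := by
    rw [hEr, hEe, hX, ← E_sub]
    apply E_mono
    intro i
    rcases ho i with ⟨h, h'⟩ | h <;> rw [h]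
    · have a1 := abs_sub_abs_le_abs_sub (r.eval (x i)) (e i)
      rw [abs_sub_comm (r.eval (x i))] at a1
      linarith
    · simp
  have b6 : Ec ≤ 2 * σ + X - Er := by
    have h1 : Ec ≤ E m x (fun i => (σ * (1 - o i) + (1 - o i) * |e i - r.eval (x i)|) -
        (1 - o i) * |r.eval (x i)|) := by
      apply E_mono
      intro i
      rcases ho i with ⟨h, h'⟩ | h <;> rw [h]
      · have := hclip (x i) (e i) h'
        linarith
      · simp
    rw [E_sub (fun i => σ * (1 - o i) + (1 - o i) * |e i - r.eval (x i)|), E_add] at h1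
    linarith
  have b7 : Ec ≤ 26 / 10 ^ 21 * σ := by linarith
  have b8 : E m x (fun i => σ - |c (x i)|) ≤ 41 / 10 ^ 21 * σ := by
    have h1 : E m x (fun i => σ - |c (x i)|) ≤ E m x (fun i => ((σ * (1 - o i) - (1 - o i) * |e i|) +
        (1 - o i) * |e i - c (x i)|) + σ * o i) := by
      apply E_mono
      intro i
      rcases ho i with ⟨h, h'⟩ | h <;> rw [h]
      · have := abs_sub_abs_le_abs_sub (e i) (c (x i))
        linarith
      · have := abs_nonneg (c (x i))
        linarith
    rw [E_add, E_add, E_sub (fun i => σ * (1 - o i)), E_mul σ o] at h1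
    have h2 : σ * E m x o ≤ σ * (2 / 10 ^ 21) := by
      apply mul_le_mul_of_nonneg_left _ hσ.le
      linarith
    linarith
  have b9 : ∫ t in (-1:ℝ)..1, (σ - |c t|) ≤ 46 / 10 ^ 21 * σ := by
    have := (abs_le.1 (E_disc hm hne (fun t => σ - |c t|) (by fun_prop) (fun j => 1 * V r m j) (by
        intro j hj s hs t ht
        rw [one_mul, sub_sub_sub_cancel_left]
        refine (abs_abs_sub_abs_le _ _).trans ?_
        rw [abs_sub_comm]
        exact (hcl s t).trans (V_bound r m j hj s t hs ht)))).1
    rw [sum_W] at this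
    linarith
  -- apply core
  have k1 : J (fun θ => |R0 s θ| * |Real.sin θ|) ≤ 10 := by
    have h := J_half (fun t => |s.eval t|) (by fun_prop)
    have h2 : ∫ t in (-1:ℝ)..1, |r.eval t| = σ * ∫ t in (-1:ℝ)..1, |s.eval t| := by
      rw [← intervalIntegral.integral_const_mul]
      congr 1; funext t; rw [hse, abs_mul, abs_of_pos hσ]
    have h3 : σ * ∫ t in (-1:ℝ)..1, |s.eval t| ≤ σ * 5 := by rw [← h2]; linarith
    have h4 := le_of_mul_le_mul_left h3 hσ
    change J (fun θ => |s.eval (Real.cos θ)| * |Real.sin θ|) ≤ 10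
    linarith
  have k2 : J (fun θ => (1 - |cl (R0 s θ)|) * |Real.sin θ|) ≤ 1 / 10 ^ 18 := by
    have h := J_half (fun t => 1 - |cl (s.eval t)|) (by fun_prop)
    have h2 : ∫ t in (-1:ℝ)..1, (σ - |c t|) = σ * ∫ t in (-1:ℝ)..1, (1 - |cl (s.eval t)|) := by
      rw [← intervalIntegral.integral_const_mul]
      congr 1; funext t; simp only [hc]; rw [abs_mul, abs_of_pos hσ]; ring
    have h3 : σ * ∫ t in (-1:ℝ)..1, (1 - |cl (s.eval t)|) ≤ σ * (46 / 10 ^ 21) := by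
      rw [← h2]; linarith
    have h4 := le_of_mul_le_mul_left h3 hσ
    change J (fun θ => (1 - |cl (s.eval (Real.cos θ))|) * |Real.sin θ|) ≤ _
    rw [h]
    norm_num at h4 ⊢
    linarith
  obtain ⟨q0, hq0, hq1, hq2⟩ := core d hd s hsd k1 k2
  set q : ℝ[X] := Polynomial.C σ * q0 with hq
  have hqd : q.natDegree ≤ d := (natDegree_C_mul_le _ _).trans hq0
  have hqe : ∀ t, q.eval t = σ * q0.eval t := fun t => by rw [hq, eval_mul, eval_C]
  have cq := q.continuous
  have cq0 := q0.continuous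
  have hqb : ∀ t ∈ Set.Icc (-1:ℝ) 1, |q.eval t| ≤ σ := by
    intro t ht
    have := hq1 (Real.arccos t)
    rw [Real.cos_arccos ht.1 ht.2] at this
    rw [hqe, abs_mul, abs_of_pos hσ]
    nlinarith
  have k3 : ∫ t in (-1:ℝ)..1, |c t - q.eval t| ≤ σ := by
    have h := J_half (fun t => |cl (s.eval t) - q0.eval t|) (by fun_prop)
    have h2 : ∫ t in (-1:ℝ)..1, |c t - q.eval t| =
        σ * ∫ t in (-1:ℝ)..1, |cl (s.eval t) - q0.eval t| := by
      rw [← intervalIntegral.integral_const_mul]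
      congr 1; funext t; simp only [hc]; rw [hqe, ← mul_sub, abs_mul, abs_of_pos hσ]
    have h3 : J (fun θ => |cl (s.eval (Real.cos θ)) - q0.eval (Real.cos θ)| * |Real.sin θ|) ≤ 2 := hq2
    rw [h] at h3
    rw [h2]
    nlinarith
  have k4 : ∫ t in (-1:ℝ)..1, |q.eval t| ≤ 2 * σ := by
    have : ∫ t in (-1:ℝ)..1, |q.eval t| ≤ ∫ t in (-1:ℝ)..1, σ := by
      apply intervalIntegral.integral_mono_on (by norm_num)
        (cq.abs.intervalIntegrable _ _) (by simp)
      exact hqb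
    simp at this
    linarith
  have k5 := hDl q hqd
  have k6 : E m x (fun i => |c (x i) - q.eval (x i)|) ≤ σ + 7 / 10 ^ 21 * σ := by
    have := (abs_le.1 (E_disc hm hne (fun t => |c t - q.eval t|) (by fun_prop)
      (fun j => V r m j + V q m j) (by
        intro j hj s hs t ht
        refine (abs_abs_sub_abs_le _ _).trans ?_
        have h1 := (hcl s t).trans (V_bound r m j hj s t hs ht)
        have h2 := V_bound q m j hj t s ht hs
        have h3 := abs_add_le (c s - c t) (q.eval t - q.eval s)
        rw [show c s - q.eval s - (c t - q.eval t) = (c s - c t) + (q.eval t - q.eval s) by ring]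
        linarith))).2
    simp only [mul_add, Finset.sum_add_distrib] at this
    change _ ≤ Dl r m + Dl q m at this
    linarith
  set Eq' := E m x (fun i => (1 - o i) * |e i - q.eval (x i)|) with hEq
  have b10 : X ≤ Eq' + a + σ * E m x o := by
    have h0 := hopt q hqd
    have h1 : E m x (fun i => (1 - o i) * |e i - r.eval (x i)| - (1 - o i) * |e i - q.eval (x i)|) ≤
      E m x (fun i => ((|e i - r.eval (x i)| - |e i - q.eval (x i)|) + o i * |r.eval (x i)|) + σ * o i) := by
      apply E_mono
      intro i
      rcases ho i with ⟨h, h'⟩ | h <;> rw [h]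
      · linarith
      · have a2 := abs_sub_abs_le_abs_sub (e i - q.eval (x i)) (e i - r.eval (x i))
        rw [sub_sub_sub_cancel_left] at a2
        have a3 := abs_sub (r.eval (x i)) (q.eval (x i))
        have a4 := hqb (x i) (hx i)
        linarith
    rw [E_sub, E_add, E_add, E_mul σ o,
      E_sub (fun i => |e i - r.eval (x i)|) (fun i => |e i - q.eval (x i)|)] at h1
    linarith
  have b11 : Eq' ≤ Ec + E m x (fun i => |c (x i) - q.eval (x i)|) := by
    rw [hEq, hEc, ← E_add]
    apply E_mono
    intro i
    have := abs_sub_le (e i) (c (x i)) (q.eval (x i))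
    rcases ho i with ⟨h, h'⟩ | h <;> rw [h]
    · linarith
    · simp
  have b12 : σ * E m x o ≤ σ * (2 / 10 ^ 21) := by
    apply mul_le_mul_of_nonneg_left _ hσ.le
    linarith
  norm_num at *
  linarith

end L1Reg

theorem l1_regression_good_samples :
    ∃ C : ℝ, 0 < C ∧
      ∀ (α : ℝ), α < 1 / 2 → ∀ (d : ℕ), 0 < d → ∀ (σ : ℝ), 0 ≤ σ →
      ∀ (p : Polynomial ℝ), p.natDegree ≤ d →
      ∀ (m : ℕ), 0 < m → C * d / (1 - 2 * α) ≤ (m : ℝ) →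
      ∀ (n : ℕ) (x y : Fin n → ℝ), (∀ i, x i ∈ Set.Icc (-1 : ℝ) 1) →
      AlphaGood m x y p σ α →
      ∀ phat : Polynomial ℝ, phat.natDegree ≤ d →
      (∀ q : Polynomial ℝ, q.natDegree ≤ d → l1Obj m x y phat ≤ l1Obj m x y q) →
      (∫ t in (-1 : ℝ)..1, |phat.eval t - p.eval t|) ≤ 4 * σ / (1 - 2 * α) := by
  classical
  refine ⟨2 * 10 ^ 25, by norm_num, ?_⟩
  intro α hα d hd σ hσ p hp m hm hmC n x y hx hgood phat hphat hopt
  have hα0 : 0 < α := by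
    obtain ⟨h1, h2⟩ := hgood 1 (Finset.mem_Icc.2 ⟨le_rfl, hm⟩)
    by_contra hc
    push Not at hc
    have : α * ((sampleSet m 1 x).card : ℝ) ≤ 0 := mul_nonpos_of_nonpos_of_nonneg hc (by positivity)
    have h3 := h2.trans_le this
    exact absurd h3 (not_lt.2 (by positivity))
  have hδ : 0 < 1 - 2 * α := by linarith
  have hd1 : (1:ℝ) ≤ d := by exact_mod_cast hd
  have hm0 : (0:ℝ) < m := by exact_mod_cast hm
  rw [div_le_iff₀ hδ] at hmC
  have hdm : (d:ℝ) / m ≤ (1 - 2 * α) / (2 * 10 ^ 25) := by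
    rw [div_le_div_iff₀ hm0 (by norm_num)]; linarith
  have hm4 : 4 * (d:ℝ) ≤ m := by nlinarith
  set r : ℝ[X] := phat - p with hr
  have hrd : r.natDegree ≤ d := (natDegree_sub_le _ _).trans (max_le hphat hp)
  set e : Fin n → ℝ := fun i => y i - p.eval (x i) with he
  set o : Fin n → ℝ := fun i => if σ < |e i| then 1 else 0 with ho
  have hre : ∀ t, phat.eval t - p.eval t = r.eval t := fun t => by rw [hr, eval_sub]
  simp only [hre]
  have hO : ∀ i, (o i = 0 ∧ |e i| ≤ σ) ∨ o i = 1 := by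
    intro i
    simp only [ho]
    by_cases h : σ < |e i|
    · right; rw [if_pos h]
    · left; rw [if_neg h]; exact ⟨rfl, not_lt.1 h⟩
  have hA : ∀ j ∈ Finset.Icc 1 m, (sampleSet m j x).Nonempty ∧
      ∑ i ∈ sampleSet m j x, o i ≤ α * ((sampleSet m j x).card : ℝ) := by
    intro j hj
    obtain ⟨h1, h2⟩ := hgood j hj
    refine ⟨h1, le_trans (le_of_eq ?_) h2.le⟩
    simp only [ho]
    rw [Finset.sum_boole]
  have hE : ∀ q : ℝ[X], q.natDegree ≤ d →
      L1Reg.E m x (fun i => |e i - r.eval (x i)|) ≤ L1Reg.E m x (fun i => |e i - q.eval (x i)|) := by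
    intro q hq
    have h := hopt (p + q) ((natDegree_add_le _ _).trans (max_le hp hq))
    have e1 : l1Obj m x y phat = L1Reg.E m x (fun i => |e i - r.eval (x i)|) := by
      unfold l1Obj L1Reg.E
      simp only [he, hr, eval_sub, sub_sub_sub_cancel_right]
    have e2 : l1Obj m x y (p + q) = L1Reg.E m x (fun i => |e i - q.eval (x i)|) := by
      unfold l1Obj L1Reg.E
      simp only [he, eval_add, sub_sub]
    rwa [e1, e2] at h
  have hDl : ∀ q : ℝ[X], q.natDegree ≤ d →
      L1Reg.Dl q m ≤ (1 - 2 * α) * (1 / (2 * 10 ^ 21)) * ∫ t in (-1:ℝ)..1, |q.eval t| := by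
    intro q hq
    refine (L1Reg.Dl_le d hd q hq m hm4).trans ?_
    apply mul_le_mul_of_nonneg_right _ (L1Reg.int_nonneg _ (fun _ => abs_nonneg _) (by norm_num))
    calc 10000 * ((d:ℝ) / m) ≤ 10000 * ((1 - 2 * α) / (2 * 10 ^ 25)) := by gcongr
      _ = _ := by ring
  have hb := L1Reg.base hm α σ hσ hα0.le hα.le e o hO hA r (by simpa using hE 0 (by simp))
  set T := ∫ t in (-1:ℝ)..1, |r.eval t| with hT
  have hT0 : 0 ≤ T := L1Reg.int_nonneg _ (fun _ => abs_nonneg _) (by norm_num)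
  have hDr := hDl r hrd
  rw [← hT] at hDr
  have hb2 : (1 - 1 / 10 ^ 21) * ((1 - 2 * α) * T) ≤ 4 * σ * (1 - α) := by nlinarith
  rw [le_div_iff₀ hδ, mul_comm T]
  rcases le_total (1 / 10 ^ 21) α with hc | hc
  · have h1 : 4 * σ * (1 - α) ≤ (1 - 1 / 10 ^ 21) * (4 * σ) := by nlinarith
    exact le_of_mul_le_mul_left (hb2.trans h1) (by norm_num)
  · by_contra hcon
    push Not at hcon
    have hT4 : 4 * σ ≤ T := by nlinarith
    have hT5 : T ≤ 5 * σ := by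
      have h1 : (1 - 1 / 10 ^ 21) * ((1 - 2 / 10 ^ 21) * T) ≤ (1 - 1 / 10 ^ 21) * ((1 - 2 * α) * T) := by
        apply mul_le_mul_of_nonneg_left _ (by norm_num)
        apply mul_le_mul_of_nonneg_right _ hT0
        linarith
      have h2 : 4 * σ * (1 - α) ≤ 4 * σ := by nlinarith
      have h3 := (h1.trans hb2).trans h2
      norm_num at h3
      linarith
    have hσ' : 0 < σ := by
      rcases hσ.lt_or_eq with h | h
      · exact h
      · exfalso
        rw [← h] at hT5 hcon
        have : T = 0 := le_antisymm (by linarith) hT0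
        rw [this] at hcon
        linarith
    refine L1Reg.hard hm α σ hσ' hα0.le hc e o hO hA d hd r hrd ?_ hT5 hT4 hx hE
    intro q hq
    refine (hDl q hq).trans ?_
    apply mul_le_mul_of_nonneg_right _ (L1Reg.int_nonneg _ (fun _ => abs_nonneg _) (by norm_num))
    norm_num
    linarith
end

section
/- There is a universal constant C such that the following holds. Let ε < 1/2 and α < 1/2 be positive, let d be a positive integer, σ ≥ 0, let p be a polynomial of degree at most d, and let m ≥ C·d/ε be a positive integer. Suppose the samples (x_1,y_1),…,(x_n,y_n) are α-good for the size-m Chebyshev partition with respect to p and σ. For each j ∈ {1,…,m} let x̃_j ∈ I_j be arbitrary and let ỹ_j be a median of the multiset {y_i : x_i ∈ I_j}. Then any polynomial p̂ of degree at most d minimizing max_{j∈[m]} |q(x̃_j) − ỹ_j| over degree-d polynomials q satisfies ‖p̂ − p‖_∞ ≤ (2+ε)σ + ε·‖p‖_∞. -/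
open Polynomial

open Classical in
/-- `t` is a median of the multiset `{v i : i ∈ s}`. -/
def IsMedian {n : ℕ} (s : Finset (Fin n)) (v : Fin n → ℝ) (t : ℝ) : Prop :=
  s.card ≤ 2 * (s.filter (fun i => v i ≤ t)).card ∧
  s.card ≤ 2 * (s.filter (fun i => t ≤ v i)).card

/-- The sup-norm of `f` over `[-1, 1]`. -/
noncomputable def supNorm (f : ℝ → ℝ) : ℝ := ⨆ x : Set.Icc (-1 : ℝ) 1, |f x|

lemma supNorm_bdd (p : Polynomial ℝ) :
    BddAbove (Set.range fun x : Set.Icc (-1 : ℝ) 1 => |p.eval (x : ℝ)|) := by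
  have h : Continuous fun x : Set.Icc (-1 : ℝ) 1 => |p.eval (x : ℝ)| := by fun_prop
  exact (isCompact_range h).bddAbove

lemma le_supNorm (p : Polynomial ℝ) (t : ℝ) (ht : t ∈ Set.Icc (-1 : ℝ) 1) :
    |p.eval t| ≤ supNorm (fun t => p.eval t) :=
  le_ciSup (supNorm_bdd p) ⟨t, ht⟩

lemma supNorm_nn (p : Polynomial ℝ) : 0 ≤ supNorm (fun t => p.eval t) :=
  (abs_nonneg _).trans (le_supNorm p 0 (by norm_num))

/-- the auxiliary polynomial `z^d p((z+1/z)/2)`. -/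
noncomputable def auxQ (p : Polynomial ℝ) (d : ℕ) (z : ℂ) : ℂ :=
  ∑ k ∈ Finset.range (d + 1), (p.coeff k : ℂ) * (z ^ (d - k) * ((z ^ 2 + 1) / 2) ^ k)

lemma auxQ_eq (p : Polynomial ℝ) (d : ℕ) (hp : p.natDegree ≤ d) (w : ℂ) :
    auxQ p d (Complex.exp (w * Complex.I)) =
      Complex.exp (w * Complex.I) ^ d * Polynomial.aeval (Complex.cos w) p := by
  rw [Polynomial.aeval_eq_sum_range' (Nat.lt_succ_of_le hp), auxQ, Finset.mul_sum]
  refine Finset.sum_congr rfl fun k hk => ?_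
  have hk' : k ≤ d := Nat.lt_succ_iff.mp (Finset.mem_range.mp hk)
  have h1 : Complex.exp (w * Complex.I) * Complex.cos w
      = (Complex.exp (w * Complex.I) ^ 2 + 1) / 2 := by
    rw [Complex.cos, neg_mul, Complex.exp_neg]
    have := Complex.exp_ne_zero (w * Complex.I)
    field_simp
  rw [← h1, mul_pow, ← mul_assoc (_ ^ (d - k)), ← pow_add, Nat.sub_add_cancel hk',
    Complex.real_smul]
  ring

lemma aeval_ofReal (p : Polynomial ℝ) (t : ℝ) :
    Polynomial.aeval (t : ℂ) p = ((p.eval t : ℝ) : ℂ) := by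
  rw [← Polynomial.coe_aeval_eq_eval]
  exact Polynomial.aeval_algebraMap_apply ℂ t p

lemma auxQ_le (p : Polynomial ℝ) (d : ℕ) (hp : p.natDegree ≤ d) (z : ℂ) (hz : ‖z‖ ≤ 1) :
    ‖auxQ p d z‖ ≤ supNorm (fun t => p.eval t) := by
  have hd : Differentiable ℂ (auxQ p d) := by unfold auxQ; fun_prop
  refine Complex.norm_le_of_forall_mem_frontier_norm_le (U := Metric.ball (0 : ℂ) 1)
    Metric.isBounded_ball hd.diffContOnCl ?_ ?_
  · intro u hu
    rw [frontier_ball _ one_ne_zero] at hu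
    have hu1 : ‖u‖ = 1 := by simpa using hu
    have hu2 : u = Complex.exp ((u.arg : ℂ) * Complex.I) := by
      have := Complex.norm_mul_exp_arg_mul_I u
      rw [hu1] at this
      simpa using this.symm
    rw [hu2, auxQ_eq p d hp, norm_mul, norm_pow, Complex.norm_exp_ofReal_mul_I, one_pow, one_mul,
      ← Complex.ofReal_cos, aeval_ofReal, Complex.norm_real]
    exact le_supNorm p _ ⟨Real.neg_one_le_cos _, Real.cos_le_one _⟩
  · rw [closure_ball _ one_ne_zero]; simpa using hz

lemma growth_nonneg (p : Polynomial ℝ) (d : ℕ) (hp : p.natDegree ≤ d) (w : ℂ) (hw : 0 ≤ w.im) :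
    ‖Polynomial.aeval (Complex.cos w) p‖ ≤
      Real.exp (d * |w.im|) * supNorm (fun t => p.eval t) := by
  have hn : ‖Complex.exp (w * Complex.I)‖ = Real.exp (-w.im) := by
    rw [Complex.norm_exp]; simp
  have h := auxQ_le p d hp (Complex.exp (w * Complex.I)) (by rw [hn]; simpa using hw)
  rw [auxQ_eq p d hp, norm_mul, norm_pow, hn, ← Real.exp_nat_mul] at h
  rw [abs_of_nonneg hw]
  calc ‖Polynomial.aeval (Complex.cos w) p‖
      = Real.exp (d * w.im) * (Real.exp (d * -w.im) * ‖Polynomial.aeval (Complex.cos w) p‖) := by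
        rw [← mul_assoc, ← Real.exp_add]; simp
    _ ≤ _ := by gcongr

lemma growth (p : Polynomial ℝ) (d : ℕ) (hp : p.natDegree ≤ d) (w : ℂ) :
    ‖Polynomial.aeval (Complex.cos w) p‖ ≤
      Real.exp (d * |w.im|) * supNorm (fun t => p.eval t) := by
  rcases le_total 0 w.im with h | h
  · exact growth_nonneg p d hp w h
  · have := growth_nonneg p d hp (-w) (by simpa using h)
    simpa using this

lemma lip (p : Polynomial ℝ) (d : ℕ) (hd : 0 < d) (hp : p.natDegree ≤ d) (a b : ℝ) :
    |p.eval (Real.cos a) - p.eval (Real.cos b)| ≤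
      3 * d * supNorm (fun t => p.eval t) * |a - b| := by
  set M := supNorm (fun t => p.eval t) with hM
  have hM0 : 0 ≤ M := supNorm_nn p
  have hd' : (0 : ℝ) < d := by exact_mod_cast hd
  let g : ℂ → ℂ := fun w => Polynomial.aeval (Complex.cos w) p
  have hg : Differentiable ℂ g := by
    have h1 : Differentiable ℂ fun z : ℂ => Polynomial.aeval z p := p.differentiable_aeval
    exact h1.comp Complex.differentiable_cos
  have hder : ∀ θ : ℝ, ‖deriv g θ‖ ≤ 3 * d * M := by
    intro θ
    have h := Complex.norm_deriv_le_of_forall_mem_sphere_norm_le (f := g) (c := (θ : ℂ))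
      (R := 1 / d) (C := Real.exp 1 * M) (by positivity) hg.diffContOnCl (by
        intro z hz
        refine (growth p d hp z).trans ?_
        have hz' : |z.im| ≤ 1 / d := by
          have h1 := Complex.abs_im_le_norm (z - θ)
          rw [mem_sphere_iff_norm] at hz
          rw [hz] at h1
          simpa using h1
        have : d * |z.im| ≤ 1 := by
          calc d * |z.im| ≤ d * (1 / d) := by gcongr
            _ = 1 := by field_simp
        gcongr)
    refine h.trans ?_
    have he := Real.exp_one_lt_d9
    have : Real.exp 1 * M / (1 / d) = Real.exp 1 * d * M := by field_simp
    rw [this]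
    gcongr
    linarith
  have hmv := Convex.norm_image_sub_le_of_norm_hasDerivWithin_le (𝕜 := ℝ)
    (f := fun θ : ℝ => g θ) (f' := fun θ : ℝ => deriv g θ) (s := Set.univ) (x := b) (y := a)
    (C := 3 * d * M)
    (fun θ _ => ((hg (θ : ℂ)).hasDerivAt.comp_ofReal).hasDerivWithinAt)
    (fun θ _ => hder θ) convex_univ trivial trivial
  simp only [g, ← Complex.ofReal_cos, aeval_ofReal, ← Complex.ofReal_sub,
    Complex.norm_real] at hmv
  exact hmv

lemma cheb_arccos (m j : ℕ) (hj : j ∈ Finset.Icc 1 m) (t : ℝ) (ht : t ∈ chebInterval m j) :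
    t ∈ Set.Icc (-1 : ℝ) 1 ∧
      Real.arccos t ∈ Set.Icc (Real.pi * ((j : ℝ) - 1) / m) (Real.pi * j / m) := by
  rw [Finset.mem_Icc] at hj
  have hm : (0 : ℝ) < m := by exact_mod_cast (by omega : 0 < m)
  have hj1 : (1 : ℝ) ≤ j := by exact_mod_cast hj.1
  have hj2 : (j : ℝ) ≤ m := by exact_mod_cast hj.2
  have hpi := Real.pi_pos
  have h1 : 0 ≤ Real.pi * ((j : ℝ) - 1) / m :=
    div_nonneg (mul_nonneg hpi.le (by linarith)) hm.le
  have h2 : Real.pi * j / m ≤ Real.pi := by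
    rw [div_le_iff₀ hm]; gcongr
  have h3 : Real.pi * ((j : ℝ) - 1) / m ≤ Real.pi * j / m := by
    gcongr; linarith
  refine ⟨⟨(Real.neg_one_le_cos _).trans ht.1, ht.2.trans (Real.cos_le_one _)⟩, ?_, ?_⟩
  · have := Real.arccos_le_arccos ht.2
    rwa [Real.arccos_cos h1 (h3.trans h2)] at this
  · have := Real.arccos_le_arccos ht.1
    rwa [Real.arccos_cos (h1.trans h3) h2] at this

lemma osc (p : Polynomial ℝ) (d : ℕ) (hd : 0 < d) (hp : p.natDegree ≤ d) (m j : ℕ)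
    (hj : j ∈ Finset.Icc 1 m) (s t : ℝ) (hs : s ∈ chebInterval m j) (ht : t ∈ chebInterval m j) :
    |p.eval s - p.eval t| ≤ (3 * d * (Real.pi / m)) * supNorm (fun t => p.eval t) := by
  obtain ⟨hs1, hs2⟩ := cheb_arccos m j hj s hs
  obtain ⟨ht1, ht2⟩ := cheb_arccos m j hj t ht
  have h := lip p d hd hp (Real.arccos s) (Real.arccos t)
  rw [Real.cos_arccos hs1.1 hs1.2, Real.cos_arccos ht1.1 ht1.2] at h
  have hM0 := supNorm_nn p
  have hab : |Real.arccos s - Real.arccos t| ≤ Real.pi / m := by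
    have e : Real.pi * j / m - Real.pi * ((j : ℝ) - 1) / m = Real.pi / m := by ring
    rw [abs_le]
    constructor <;> linarith [hs2.1, hs2.2, ht2.1, ht2.2]
  refine h.trans ?_
  calc _ ≤ 3 * d * supNorm (fun t => p.eval t) * (Real.pi / m) := by gcongr
    _ = _ := by ring

lemma exists_cheb (m : ℕ) (hm : 0 < m) (t : ℝ) (ht : t ∈ Set.Icc (-1 : ℝ) 1) :
    ∃ j ∈ Finset.Icc 1 m, t ∈ chebInterval m j := by
  have hpi := Real.pi_pos
  have hm' : (0 : ℝ) < m := by exact_mod_cast hm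
  have hθ0 := Real.arccos_nonneg t
  have hθ1 := Real.arccos_le_pi t
  have hcos := Real.cos_arccos ht.1 ht.2
  set θ := Real.arccos t
  rcases eq_or_lt_of_le hθ0 with h0 | h0
  · refine ⟨1, Finset.mem_Icc.mpr ⟨le_rfl, hm⟩, ?_⟩
    rw [← h0, Real.cos_zero] at hcos
    subst hcos
    simp [chebInterval, Real.cos_le_one]
  · have hpos : 0 < θ * m / Real.pi := by positivity
    have hc1 := Nat.le_ceil (θ * m / Real.pi)
    have hc2 := Nat.ceil_lt_add_one hpos.le
    have hle : ⌈θ * m / Real.pi⌉₊ ≤ m := by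
      apply Nat.ceil_le.mpr
      rw [div_le_iff₀ hpi, mul_comm]
      gcongr
    have hge : 1 ≤ ⌈θ * m / Real.pi⌉₊ := Nat.ceil_pos.mpr hpos
    set j := ⌈θ * m / Real.pi⌉₊
    have hj1 : (1 : ℝ) ≤ j := by exact_mod_cast hge
    have hj2 : (j : ℝ) ≤ m := by exact_mod_cast hle
    have a1 : θ ≤ Real.pi * j / m := by
      rw [le_div_iff₀ hm']; rw [div_le_iff₀ hpi] at hc1; linarith
    have a2 : Real.pi * ((j : ℝ) - 1) / m ≤ θ := by
      rw [div_le_iff₀ hm']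
      have : (j : ℝ) - 1 ≤ θ * m / Real.pi := by linarith
      rw [le_div_iff₀ hpi] at this; linarith
    refine ⟨j, Finset.mem_Icc.mpr ⟨hge, hle⟩, ?_, ?_⟩
    · rw [← hcos]
      refine Real.cos_le_cos_of_nonneg_of_le_pi hθ0 ?_ a1
      rw [div_le_iff₀ hm']; gcongr
    · rw [← hcos]
      exact Real.cos_le_cos_of_nonneg_of_le_pi
        (div_nonneg (mul_nonneg hpi.le (by linarith)) hm'.le) hθ1 a2

open Classical in
lemma exists_inlier {n : ℕ} (s : Finset (Fin n)) (P O : Fin n → Prop) (α : ℝ) (hα : α < 1 / 2)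
    (hO : ((s.filter O).card : ℝ) < α * (s.card : ℝ)) (hP : s.card ≤ 2 * (s.filter P).card) :
    ∃ i ∈ s, P i ∧ ¬ O i := by
  by_contra! hcon
  have hsub : s.filter P ⊆ s.filter O := by
    intro i hi
    rw [Finset.mem_filter] at hi ⊢
    exact ⟨hi.1, hcon i hi.1 hi.2⟩
  have h1 := Finset.card_le_card hsub
  have h2 : (s.card : ℝ) ≤ 2 * ((s.filter O).card : ℝ) := by exact_mod_cast (by omega)
  have h3 : (0 : ℝ) ≤ s.card := by positivity
  nlinarith

theorem median_recovery :
    ∃ C : ℝ, 0 < C ∧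
      ∀ (ε α : ℝ), 0 < ε → ε < 1 / 2 → 0 < α → α < 1 / 2 →
      ∀ (d : ℕ), 0 < d → ∀ (σ : ℝ), 0 ≤ σ →
      ∀ (p : Polynomial ℝ), p.natDegree ≤ d →
      ∀ (m : ℕ) (hm : 0 < m), C * d / ε ≤ (m : ℝ) →
      ∀ (n : ℕ) (x y : Fin n → ℝ), (∀ i, x i ∈ Set.Icc (-1 : ℝ) 1) →
      AlphaGood m x y p σ α →
      ∀ (xt yt : ℕ → ℝ),
      (∀ j ∈ Finset.Icc 1 m, xt j ∈ chebInterval m j) →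
      (∀ j ∈ Finset.Icc 1 m, IsMedian (sampleSet m j x) y (yt j)) →
      ∀ phat : Polynomial ℝ, phat.natDegree ≤ d →
      (∀ q : Polynomial ℝ, q.natDegree ≤ d →
        (Finset.Icc 1 m).sup' (Finset.nonempty_Icc.mpr hm)
            (fun j => |phat.eval (xt j) - yt j|) ≤
          (Finset.Icc 1 m).sup' (Finset.nonempty_Icc.mpr hm)
            (fun j => |q.eval (xt j) - yt j|)) →
      supNorm (fun t => phat.eval t - p.eval t) ≤
        (2 + ε) * σ + ε * supNorm (fun t => p.eval t) := by
  refine ⟨40, by norm_num, ?_⟩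
  intro ε α hε hε2 _ hα d hd σ hσ p hp m hm hmC n x y _ hgood xt yt hxt hyt phat hphat hmin
  have hm' : (0 : ℝ) < m := by exact_mod_cast hm
  have hd' : (0 : ℝ) < d := by exact_mod_cast hd
  obtain ⟨δ, hδ⟩ : ∃ δ, δ = 3 * d * (Real.pi / m) := ⟨_, rfl⟩
  have hpi := Real.pi_pos
  have hpi2 := Real.pi_lt_d2
  have hδ0 : 0 ≤ δ := by rw [hδ]; positivity
  have hδε : δ ≤ ε / 4 := by
    rw [div_le_iff₀ hε] at hmC
    rw [hδ, ← mul_div_assoc, div_le_iff₀ hm']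
    nlinarith
  have hM0 := supNorm_nn p
  obtain ⟨M, hM⟩ : ∃ M, M = supNorm (fun t => p.eval t) := ⟨_, rfl⟩
  have hp1 : ∀ j ∈ Finset.Icc 1 m, |p.eval (xt j) - yt j| ≤ σ + δ * M := by
    intro j hj
    obtain ⟨-, hO⟩ := hgood j hj
    obtain ⟨hm1, hm2⟩ := hyt j hj
    obtain ⟨i, hi, hi1, hi2⟩ := exists_inlier _ _ _ α hα hO hm1
    obtain ⟨k, hk, hk1, hk2⟩ := exists_inlier _ _ _ α hα hO hm2
    have hi3 : x i ∈ chebInterval m j := by simpa [sampleSet] using hi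
    have hk3 : x k ∈ chebInterval m j := by simpa [sampleSet] using hk
    have oi := osc p d hd hp m j hj _ _ (hxt j hj) hi3
    have ok := osc p d hd hp m j hj _ _ (hxt j hj) hk3
    rw [← hδ, ← hM] at oi ok
    rw [not_lt] at hi2 hk2
    rw [abs_le] at *
    constructor <;> linarith [oi.1, oi.2, ok.1, ok.2, hi2.1, hi2.2, hk2.1, hk2.2]
  have hph : ∀ j ∈ Finset.Icc 1 m, |phat.eval (xt j) - yt j| ≤ σ + δ * M := by
    intro j hj
    refine (Finset.le_sup' (fun j => |phat.eval (xt j) - yt j|) hj).trans ?_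
    exact (hmin p hp).trans (Finset.sup'_le _ _ hp1)
  have hdeg : (phat - p).natDegree ≤ d := (Polynomial.natDegree_sub_le _ _).trans (max_le hphat hp)
  have heq : (fun t => phat.eval t - p.eval t) = fun t => (phat - p).eval t := by
    funext t; simp
  rw [heq, ← hM]
  rw [← hM] at hM0
  obtain ⟨E, hE⟩ : ∃ E, E = supNorm (fun t => (phat - p).eval t) := ⟨_, rfl⟩
  have hE0 := supNorm_nn (phat - p)
  have hbound : E ≤ 2 * σ + 2 * δ * M + δ * E := by
    conv_lhs => rw [hE]
    haveI : Nonempty (Set.Icc (-1 : ℝ) 1) := ⟨⟨0, by norm_num⟩⟩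
    refine ciSup_le fun t => ?_
    obtain ⟨j, hj, htj⟩ := exists_cheb m hm t t.2
    have o := osc (phat - p) d hd hdeg m j hj _ _ htj (hxt j hj)
    rw [← hδ, ← hE] at o
    have h1 := hp1 j hj
    have h2 := hph j hj
    have h3 : (phat - p).eval (xt j) = phat.eval (xt j) - p.eval (xt j) := by simp
    rw [h3] at o
    rw [abs_le] at *
    constructor <;> linarith [o.1, o.2, h1.1, h1.2, h2.1, h2.2]
  rw [← hE] at hE0 ⊢
  have h1δ : 0 < 1 - δ := by linarith
  have key : (1 - δ) * E ≤ (1 - δ) * ((2 + ε) * σ + ε * M) := by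
    have k1 : 2 ≤ (1 - δ) * (2 + ε) := by nlinarith
    have k2 : 2 * δ ≤ (1 - δ) * ε := by nlinarith
    have := mul_le_mul_of_nonneg_right k1 hσ
    have := mul_le_mul_of_nonneg_right k2 hM0
    linarith
  exact le_of_mul_le_mul_left key h1δ
end

section
/- For every polynomial e of degree at most d, one has max_{x∈[-1,1]} |e(x)| ≤ (d+1)² · ∫_{-1}^1 |e(x)| dx. -/
open Polynomial

lemma aux_markov_one {n : ℕ} {P : ℝ[X]} (hP : P.degree ≤ n) {M : ℝ} (hM : 0 < M)
    (hb : ∀ x ∈ Set.Icc (-1 : ℝ) 1, |P.eval x| ≤ M) :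
    (derivative P).eval 1 ≤ (n : ℝ) ^ 2 * M := by
  have h := Polynomial.Chebyshev.eval_iterate_derivative_le_of_forall_abs_le_one
    (n := n) (P := C M⁻¹ * P) (k := 1) (x := 1) le_rfl
    ((degree_C_mul (inv_ne_zero hM.ne')).le.trans hP) (by
      intro x hx
      have := hb x hx
      rw [eval_mul, eval_C, abs_mul, abs_of_pos (inv_pos.mpr hM), inv_mul_le_iff₀ hM]
      linarith)
  simp only [Function.iterate_one, derivative_C_mul, eval_mul, eval_C,
    Polynomial.Chebyshev.derivative_T_eval_one, Int.cast_natCast] at h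
  rw [inv_mul_le_iff₀ hM] at h
  linarith

lemma aux_antideriv (d : ℕ) (e : ℝ[X]) (he : e.natDegree ≤ d) :
    ∃ F : ℝ[X], derivative F = e ∧ F.degree ≤ ((d + 1 : ℕ) : WithBot ℕ) := by
  refine ⟨∑ k ∈ Finset.range (d + 1), monomial (k + 1) (e.coeff k / ((k : ℝ) + 1)), ?_, ?_⟩
  · rw [derivative_sum, e.as_sum_range' (d + 1) (by omega)]
    refine Finset.sum_congr rfl fun k hk => ?_
    have h : ((k : ℝ) + 1) ≠ 0 := by positivity
    rw [← e.as_sum_range' (d + 1) (by omega), derivative_monomial]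
    congr 1
    push_cast
    field_simp
  · refine (degree_sum_le _ _).trans (Finset.sup_le fun k hk => ?_)
    refine (degree_monomial_le _ _).trans ?_
    have := Finset.mem_range.mp hk
    exact_mod_cast (by omega : k + 1 ≤ d + 1)

lemma aux_int (e : ℝ[X]) (a b : ℝ) :
    IntervalIntegrable (fun x => |e.eval x|) MeasureTheory.volume a b :=
  (e.continuous.abs).intervalIntegrable a b

lemma aux_diff (F : ℝ[X]) {a b : ℝ} (hab : a ≤ b) :
    |F.eval b - F.eval a| ≤ ∫ x in a..b, |(derivative F).eval x| := by
  have h := intervalIntegral.integral_eq_sub_of_hasDerivAt (a := a) (b := b)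
    (fun x _ => F.hasDerivAt x) ((derivative F).continuous.intervalIntegrable a b)
  rw [← h]
  exact intervalIntegral.abs_integral_le_integral_abs hab

lemma aux_end (d : ℕ) (e : ℝ[X]) (he : e.natDegree ≤ d) :
    e.eval 1 ≤ ((d : ℝ) + 1) ^ 2 * ((∫ x in (-1 : ℝ)..1, |e.eval x|) / 2) := by
  obtain ⟨F, hF, hd⟩ := aux_antideriv d e he
  have hJ : 0 ≤ ∫ x in (-1 : ℝ)..1, |e.eval x| :=
    intervalIntegral.integral_nonneg (by norm_num) fun _ _ => abs_nonneg _
  set J := ∫ x in (-1 : ℝ)..1, |e.eval x| with hJdef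
  have key : ∀ ε : ℝ, 0 < ε → e.eval 1 ≤ ((d : ℝ) + 1) ^ 2 * (J / 2 + ε) := by
    intro ε hε
    have h := aux_markov_one (n := d + 1) (P := F - C ((F.eval 1 + F.eval (-1)) / 2))
      (M := J / 2 + ε) ?_ (by positivity) ?_
    · simpa [hF] using h
    · refine (degree_sub_le _ _).trans (max_le hd (degree_C_le.trans ?_))
      exact_mod_cast Nat.zero_le _
    · intro x hx
      have h1 := aux_diff F hx.1
      have h2 := aux_diff F hx.2
      rw [hF] at h1 h2
      have h3 := intervalIntegral.integral_add_adjacent_intervals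
        (aux_int e (-1) x) (aux_int e x 1)
      rw [← hJdef] at h3
      rw [eval_sub, eval_C]
      rw [abs_le] at *
      constructor <;> linarith [h1.1, h1.2, h2.1, h2.2]
  have hD : 0 < ((d : ℝ) + 1) ^ 2 := by positivity
  refine le_of_forall_pos_le_add fun δ hδ => ?_
  have := key (δ / ((d : ℝ) + 1) ^ 2) (by positivity)
  rw [mul_add, mul_div_cancel₀ _ hD.ne'] at this
  exact this

lemma aux_abs_end (d : ℕ) (e : ℝ[X]) (he : e.natDegree ≤ d) :
    |e.eval 1| ≤ ((d : ℝ) + 1) ^ 2 * ((∫ x in (-1 : ℝ)..1, |e.eval x|) / 2) := by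
  refine abs_le'.mpr ⟨aux_end d e he, ?_⟩
  have := aux_end d (-e) (by simpa using he)
  simpa using this

lemma aux_nonneg (d : ℕ) (e : ℝ[X]) (he : e.natDegree ≤ d) {x : ℝ} (h0 : 0 ≤ x) (h1 : x ≤ 1) :
    |e.eval x| ≤ ((d : ℝ) + 1) ^ 2 * ∫ x in (-1 : ℝ)..1, |e.eval x| := by
  set a : ℝ := (1 + x) / 2 with ha
  have ha0 : 1 / 2 ≤ a := by rw [ha]; linarith
  have hdeg : (e.comp (C a * X + C ((x - 1) / 2))).natDegree ≤ d := by
    refine natDegree_comp_le.trans ?_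
    calc _ ≤ e.natDegree * 1 := Nat.mul_le_mul_left _ natDegree_linear_le
      _ ≤ d := by omega
  have h := aux_abs_end d _ hdeg
  have hs : ∫ t in (-1 : ℝ)..1, |(e.comp (C a * X + C ((x - 1) / 2))).eval t|
      = a⁻¹ * ∫ t in (-1 : ℝ)..x, |e.eval t| := by
    have := intervalIntegral.integral_comp_mul_add (a := -1) (b := 1) (c := a)
      (fun t => |e.eval t|) (by positivity) ((x - 1) / 2)
    simp only [eval_comp, eval_add, eval_mul, eval_C, eval_X]
    rw [this, smul_eq_mul]
    congr 2 <;> rw [ha] <;> ring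
  have hx : a * 1 + (x - 1) / 2 = x := by rw [ha]; ring
  rw [hs] at h
  simp only [eval_comp, eval_add, eval_mul, eval_C, eval_X, hx] at h
  refine h.trans (mul_le_mul_of_nonneg_left ?_ (by positivity))
  have h3 := intervalIntegral.integral_add_adjacent_intervals (aux_int e (-1) x) (aux_int e x 1)
  have h4 : 0 ≤ ∫ t in x..1, |e.eval t| :=
    intervalIntegral.integral_nonneg h1 fun _ _ => abs_nonneg _
  have h5 : 0 ≤ ∫ t in (-1 : ℝ)..x, |e.eval t| :=
    intervalIntegral.integral_nonneg (by linarith) fun _ _ => abs_nonneg _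
  have h6 : a⁻¹ ≤ 2 := by
    rw [inv_le_comm₀ (by linarith) (by norm_num)]
    linarith
  nlinarith [mul_le_mul_of_nonneg_right h6 h5]

/-- Markov-brothers' style bound: for a polynomial `e` of degree at most `d`,
`max_{x ∈ [-1,1]} |e(x)| ≤ (d+1)² ∫_{-1}^1 |e(x)| dx`. -/
theorem sup_le_sq_deg_mul_l1 (d : ℕ) (e : Polynomial ℝ) (he : e.natDegree ≤ d) :
    (⨆ x : Set.Icc (-1 : ℝ) 1, |e.eval (x : ℝ)|) ≤
      ((d : ℝ) + 1) ^ 2 * ∫ x in (-1 : ℝ)..1, |e.eval x| := by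
  haveI : Nonempty (Set.Icc (-1 : ℝ) 1) := ⟨⟨0, by norm_num, by norm_num⟩⟩
  refine ciSup_le fun ⟨x, hx⟩ => ?_
  rcases le_total 0 x with h | h
  · exact aux_nonneg d e he h hx.2
  · have hdeg : (e.comp (-X)).natDegree ≤ d := by
      rw [natDegree_comp]; simpa using he
    have := aux_nonneg d (e.comp (-X)) hdeg (x := -x) (by linarith) (by linarith [hx.1])
    have hs := intervalIntegral.integral_comp_neg (a := -1) (b := 1) (fun t => |e.eval t|)
    simp only [eval_comp, eval_neg, eval_X, neg_neg] at this
    rw [hs] at this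
    simpa using this
end

section
/- For every polynomial p of degree at most d (with d ≥ 1) and every q > 0, one has ∫_{-1}^1 |p(x)|^q dx ≥ (max_{x∈[-1,1]} |p(x)|)^q / (2^{q+1}·d²). -/
open Polynomial

/-- If `|p| ≤ M` on `[-1,1]` and `p 1 = M`, then `p ≥ M T_n` to the right of the first node. -/
lemma cheb_compare (n : ℕ) (hn : 1 ≤ n) (p : Polynomial ℝ) (hp : p.natDegree ≤ n) (M : ℝ)
    (hM : ∀ x ∈ Set.Icc (-1 : ℝ) 1, |p.eval x| ≤ M) (h1 : p.eval 1 = M) (y : ℝ)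
    (hy1 : y ≤ 1) (hy : Polynomial.Chebyshev.node n 1 ≤ y) :
    M * (Chebyshev.T ℝ n).eval y ≤ p.eval y := by
  set r : Polynomial ℝ := p - C M * Chebyshev.T ℝ n with hr
  have hdeg : r.degree < (Finset.range (n + 1)).card := by
    rw [Finset.card_range]
    have h2 : r.degree ≤ n := by
      refine (degree_sub_le _ _).trans (max_le (natDegree_le_iff_degree_le.mp hp) ?_)
      refine (degree_mul_le _ _).trans ?_
      calc (C M).degree + (Chebyshev.T ℝ n).degree ≤ 0 + (Chebyshev.T ℝ n).degree := by
            gcongr; exact degree_C_le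
        _ ≤ n := by simp
    exact lt_of_le_of_lt h2 (by exact_mod_cast Nat.lt_succ_self n)
  have key := Lagrange.eq_interpolate (Chebyshev.strictAntiOn_node n).injOn hdeg
  have key2 := congrArg (eval y) key
  rw [Lagrange.interpolate_eq_sum, eval_finsetSum] at key2
  suffices h : 0 ≤ r.eval y by
    simp [hr] at h
    linarith
  rw [key2]
  apply Finset.sum_nonneg
  intro i hi
  have hin : i ≤ n := by simpa [Nat.lt_succ_iff] using hi
  simp only [eval_mul, eval_C, eval_prod, eval_sub, eval_X]
  have hT := Chebyshev.eval_T_real_node (n := n) (i := i) (by simpa using hin)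
  rcases Nat.eq_zero_or_pos i with rfl | hipos
  · have : r.eval (Chebyshev.node n 0) = 0 := by
      rw [Chebyshev.node_eq_one] at *
      simp [hr, h1]
    simp [this]
  have hre : (-1 : ℝ) ^ i * r.eval (Chebyshev.node n i) ≤ 0 := by
    simp only [hr, eval_sub, eval_mul, eval_C, hT]
    have hb := abs_le.mp (hM _ (Chebyshev.node_mem_Icc (n := n) (i := i)))
    rcases neg_one_pow_eq_or ℝ i with h | h <;> rw [h] <;> linarith [hb.1, hb.2]
  have hden := Chebyshev.zero_lt_prod_node_sub_node hin
  have hnum : ∏ j ∈ (Finset.range (n + 1)).erase i, (y - Chebyshev.node n j) ≤ 0 := by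
    have h0 : 0 ∈ (Finset.range (n + 1)).erase i := by simp; omega
    rw [← Finset.mul_prod_erase _ _ h0]
    apply mul_nonpos_of_nonpos_of_nonneg
    · rw [Chebyshev.node_eq_one]; linarith
    · apply Finset.prod_nonneg
      intro j hj
      simp only [Finset.mem_erase, Finset.mem_range] at hj
      have : Chebyshev.node n j ≤ Chebyshev.node n 1 := by
        rcases Nat.lt_or_ge 1 j with h | h
        · exact (Chebyshev.node_lt (by omega) h).le
        · have : j = 1 := by omega
          rw [this]
      linarith
  set D := ∏ j ∈ (Finset.range (n + 1)).erase i, (Chebyshev.node n i - Chebyshev.node n j)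
  have hq : r.eval (Chebyshev.node n i) / D ≤ 0 := by
    rcases neg_one_pow_eq_or ℝ i with h | h <;> rw [h] at hre hden
    · exact div_nonpos_of_nonpos_of_nonneg (by linarith) (by linarith)
    · exact div_nonpos_of_nonneg_of_nonpos (by linarith) (by linarith)
  exact mul_nonneg_of_nonpos_of_nonpos hq hnum

lemma cos_bound (n : ℕ) (hn : 1 ≤ n) :
    Real.cos (Real.pi / (3 * n)) ≤ 1 - 1 / (2 * (n : ℝ) ^ 2) := by
  have hn' : (1 : ℝ) ≤ n := by exact_mod_cast hn
  have hpi := Real.pi_pos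
  have hs : 1 / (2 * (n : ℝ)) ≤ Real.sin (Real.pi / (6 * n)) := by
    have hconc := strictConcaveOn_sin_Icc.concaveOn.2
    have := @hconc 0 ⟨le_rfl, hpi.le⟩ (Real.pi / 6) ⟨by positivity, by linarith⟩
      (1 - 1 / (n : ℝ)) (1 / (n : ℝ)) (by rw [sub_nonneg, div_le_one (by linarith)]; exact hn') (by positivity) (by ring)
    simp only [smul_eq_mul, Real.sin_zero, mul_zero, zero_add, Real.sin_pi_div_six] at this
    calc 1 / (2 * (n : ℝ)) = 1 / n * (1 / 2) := by field_simp
      _ ≤ _ := this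
      _ = _ := by congr 1; field_simp
  have hc : Real.cos (Real.pi / (3 * n)) = 1 - 2 * Real.sin (Real.pi / (6 * n)) ^ 2 := by
    have : Real.pi / (3 * n) = 2 * (Real.pi / (6 * n)) := by field_simp; norm_num
    rw [this, Real.cos_two_mul, Real.cos_sq']; ring
  have : (1 / (2 * (n : ℝ))) ^ 2 ≤ Real.sin (Real.pi / (6 * n)) ^ 2 := by gcongr
  have e : (1 / (2 * (n : ℝ))) ^ 2 * 2 = 1 / (2 * (n : ℝ) ^ 2) := by field_simp
  rw [hc]; linarith

lemma endpoint_bound (n : ℕ) (hn : 1 ≤ n) (p : Polynomial ℝ) (hp : p.natDegree ≤ n) (M : ℝ)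
    (hM : ∀ x ∈ Set.Icc (-1 : ℝ) 1, |p.eval x| ≤ M) (h1 : p.eval 1 = M) (y : ℝ)
    (hy1 : y ≤ 1) (hy : 1 - 1 / (2 * (n : ℝ) ^ 2) ≤ y) : M / 2 ≤ p.eval y := by
  have hn' : (1 : ℝ) ≤ n := by exact_mod_cast hn
  have hpi := Real.pi_pos
  have hM0 : 0 ≤ M := (abs_nonneg _).trans (hM 1 (by simp))
  have hcy := (cos_bound n hn).trans hy
  have hnode : Chebyshev.node n 1 ≤ y := by
    refine le_trans ?_ hcy
    rw [Chebyshev.node]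
    apply Real.cos_le_cos_of_nonneg_of_le_pi (by positivity)
    · rw [div_le_iff₀ (by positivity)]; push_cast; nlinarith
    · push_cast
      rw [one_mul]
      gcongr
      linarith
  have hc := cheb_compare n hn p hp M hM h1 y hy1 hnode
  have hym : -1 ≤ y := (Real.neg_one_le_cos _).trans hcy
  have hT : 1 / 2 ≤ (Chebyshev.T ℝ n).eval y := by
    have e := Chebyshev.T_real_cos (Real.arccos y) n
    rw [Real.cos_arccos hym hy1] at e
    rw [e, ← Real.cos_pi_div_three]
    have ha : Real.arccos y ≤ Real.pi / (3 * n) := by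
      have := Real.arccos_le_arccos hcy
      rwa [Real.arccos_cos (by positivity)] at this
      rw [div_le_iff₀ (by positivity)]; nlinarith
    apply Real.cos_le_cos_of_nonneg_of_le_pi
    · have := Real.arccos_nonneg y
      positivity
    · linarith
    · push_cast
      calc (n : ℝ) * Real.arccos y ≤ n * (Real.pi / (3 * n)) := by gcongr
        _ = _ := by field_simp
  nlinarith

lemma segment_bound (n : ℕ) (hn : 1 ≤ n) (p : Polynomial ℝ) (hp : p.natDegree ≤ n) (M a b : ℝ)
    (ha : a ∈ Set.Icc (-1 : ℝ) 1) (hb : b ∈ Set.Icc (-1 : ℝ) 1)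
    (hM : ∀ x ∈ Set.Icc (-1 : ℝ) 1, |p.eval x| ≤ M) (h1 : |p.eval a| = M) (s : ℝ)
    (hs0 : 0 ≤ s) (hs : s ≤ 1 / (4 * (n : ℝ) ^ 2)) : M / 2 ≤ |p.eval (a + s * (b - a))| := by
  have main : ∀ p : Polynomial ℝ, p.natDegree ≤ n →
      (∀ x ∈ Set.Icc (-1 : ℝ) 1, |p.eval x| ≤ M) → p.eval a = M →
      M / 2 ≤ p.eval (a + s * (b - a)) := by
    intro p hp hM h1
    have := endpoint_bound n hn (p.comp (C ((a - b) / 2) * X + C ((a + b) / 2))) ?_ M ?_ ?_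
      (1 - 2 * s) (by linarith) ?_
    · simp only [eval_comp, eval_add, eval_mul, eval_C, eval_X] at this
      have e : a + s * (b - a) = (a - b) / 2 * (1 - 2 * s) + (a + b) / 2 := by ring
      rw [e]; exact this
    · refine natDegree_comp_le.trans ?_
      calc _ ≤ p.natDegree * 1 := by gcongr; exact natDegree_linear_le
        _ ≤ n := by omega
    · intro x hx
      simp only [eval_comp, eval_add, eval_mul, eval_C, eval_X]
      apply hM
      obtain ⟨h1, h2⟩ := hx
      obtain ⟨h3, h4⟩ := ha
      obtain ⟨h5, h6⟩ := hb
      constructor <;> nlinarith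
    · simp only [eval_comp, eval_add, eval_mul, eval_C, eval_X]
      rw [← h1]; congr 1; ring
    · have : 1 / (2 * (n : ℝ) ^ 2) = 2 * (1 / (4 * (n : ℝ) ^ 2)) := by
        have hn' : (1 : ℝ) ≤ n := by exact_mod_cast hn
        field_simp; norm_num
      linarith
  rcases abs_choice (p.eval a) with h | h
  · exact (main p hp hM (h ▸ h1)).trans (le_abs_self _)
  · have := main (-p) (by simpa using hp) (by simpa using hM) (by rw [eval_neg, ← h, h1])
    rw [eval_neg] at this
    exact this.trans (neg_le_abs _)

/-- For a polynomial `p` of degree at most `d` (`d ≥ 1`) and `q > 0`,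
`∫_{-1}^1 |p(x)|^q dx ≥ (max_{x ∈ [-1,1]} |p(x)|)^q / (2^{q+1} d²)`. -/
theorem lq_lower_bound (d : ℕ) (hd : 1 ≤ d) (p : Polynomial ℝ) (hp : p.natDegree ≤ d)
    (q : ℝ) (hq : 0 < q) :
    (⨆ x : Set.Icc (-1 : ℝ) 1, |p.eval (x : ℝ)|) ^ q / ((2 : ℝ) ^ (q + 1) * (d : ℝ) ^ 2) ≤
      ∫ x in (-1 : ℝ)..1, |p.eval x| ^ q := by
  have hd' : (1 : ℝ) ≤ d := by exact_mod_cast hd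
  have hcont : Continuous fun x : ℝ => |p.eval x| := by fun_prop
  have hcq : Continuous fun x : ℝ => |p.eval x| ^ q :=
    hcont.rpow_const (fun _ => Or.inr hq.le)
  obtain ⟨a, ha, hmax⟩ := isCompact_Icc.exists_isMaxOn (Set.nonempty_Icc.mpr (by norm_num))
    (hcont.continuousOn (s := Set.Icc (-1 : ℝ) 1))
  have hmax' : ∀ x ∈ Set.Icc (-1 : ℝ) 1, |p.eval x| ≤ |p.eval a| := fun x hx => hmax hx
  have hsup : (⨆ x : Set.Icc (-1 : ℝ) 1, |p.eval (x : ℝ)|) = |p.eval a| := by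
    have : Nonempty (Set.Icc (-1 : ℝ) 1) := ⟨⟨a, ha⟩⟩
    apply le_antisymm
    · exact ciSup_le fun x => hmax' x x.2
    · exact le_ciSup (f := fun x : Set.Icc (-1 : ℝ) 1 => |p.eval (x : ℝ)|)
        ⟨|p.eval a|, by rintro _ ⟨x, rfl⟩; exact hmax' x x.2⟩ ⟨a, ha⟩
  rw [hsup]
  set M := |p.eval a| with hMdef
  have hM0 : 0 ≤ M := abs_nonneg _
  set t : ℝ := 1 / (4 * (d : ℝ) ^ 2) with ht
  have ht0 : 0 < t := by positivity
  have ht1 : t ≤ 1 := by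
    rw [ht, div_le_one (by positivity)]; nlinarith
  obtain ⟨ha1, ha2⟩ := ha
  set u := a + t * (-1 - a) with hu
  set v := a + t * (1 - a) with hv
  have huv : v - u = 2 * t := by rw [hu, hv]; ring
  have hlow : ∀ x ∈ Set.Icc u v, (M / 2) ^ q ≤ |p.eval x| ^ q := by
    intro x hx
    apply Real.rpow_le_rpow (by positivity) _ hq.le
    rcases le_total a x with h | h
    · rcases eq_or_lt_of_le ha2 with h1 | h1
      · have : x = a := le_antisymm (by have := hx.2; rw [hv, h1] at this; linarith) h
        rw [this]; linarith
      · have := segment_bound d hd p hp M a 1 ⟨ha1, ha2⟩ (by simp) hmax' rfl ((x - a) / (1 - a))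
          (div_nonneg (by linarith) (by linarith))
          (by rw [div_le_iff₀ (by linarith)]; linarith [hx.2])
        rwa [div_mul_cancel₀ _ (by linarith), add_sub_cancel] at this
    · rcases eq_or_lt_of_le ha1 with h1 | h1
      · have : x = a := le_antisymm h (by have := hx.1; rw [hu, ← h1] at this; linarith)
        rw [this]; linarith
      · have := segment_bound d hd p hp M a (-1) ⟨ha1, ha2⟩ (by simp) hmax' rfl
          ((a - x) / (a + 1)) (div_nonneg (by linarith) (by linarith))
          (by rw [div_le_iff₀ (by linarith)]; linarith [hx.1])
        have e : a + (a - x) / (a + 1) * (-1 - a) = x := by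
          have : a + 1 ≠ 0 := by linarith
          field_simp; ring
        rwa [e] at this
  calc M ^ q / ((2 : ℝ) ^ (q + 1) * (d : ℝ) ^ 2) = ∫ x in u..v, (M / 2) ^ q := by
        rw [intervalIntegral.integral_const, huv, smul_eq_mul, Real.div_rpow hM0 (by norm_num),
          Real.rpow_add (by norm_num), Real.rpow_one, ht]
        field_simp; norm_num
    _ ≤ ∫ x in u..v, |p.eval x| ^ q :=
        intervalIntegral.integral_mono_on (by linarith) (by simp) (hcq.intervalIntegrable _ _) hlow
    _ ≤ ∫ x in (-1 : ℝ)..1, |p.eval x| ^ q := by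
        apply intervalIntegral.integral_mono_interval (by nlinarith) (by linarith) (by nlinarith)
        · exact Filter.Eventually.of_forall fun x => by positivity
        · exact hcq.intervalIntegrable _ _
end

section
/- Let d ≥ 1 be an integer. For every point b ∈ [-1,1] there exists a polynomial p_b of degree at most d such that p_b(b) = 1, sup_{x∈[-1,1]} |p_b(x)| = 1, and |p_b(x)| ≤ 2/(d·|x − b|) for every x ∈ [-1,1] with x ≠ b. -/
open Polynomial

lemma aux_kernel (m : ℕ) : ∃ W : Polynomial ℝ, W.natDegree ≤ 2 * m ∧ W.eval 0 = 2 * m + 1 ∧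
    (∀ t : ℝ, Real.sin t * W.eval (Real.sin t) = Real.sin ((2 * m + 1) * t)) ∧
    (∀ t : ℝ, |W.eval (Real.sin t)| ≤ 2 * m + 1) := by
  induction m with
  | zero => exact ⟨1, by simp, by simp, by simp, by simp⟩
  | succ m ih =>
    obtain ⟨W, h1, h2, h3, h4⟩ := ih
    have key : ∀ t : ℝ, (Chebyshev.T ℝ ((m + 1 : ℕ) : ℤ)).eval (1 - 2 * Real.sin t ^ 2)
        = Real.cos ((2 * m + 2) * t) := by
      intro t
      have e : 1 - 2 * Real.sin t ^ 2 = Real.cos (2 * t) := by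
        rw [Real.cos_two_mul, Real.cos_sq']; ring
      rw [e, Chebyshev.T_real_cos]
      congr 1
      push_cast
      ring
    refine ⟨W + C 2 * (Chebyshev.T ℝ ((m + 1 : ℕ) : ℤ)).comp (1 - C 2 * X ^ 2), ?_, ?_, ?_, ?_⟩
    · refine natDegree_add_le_of_degree_le (by omega) ?_
      refine (natDegree_C_mul_le _ _).trans ?_
      refine natDegree_comp_le.trans ?_
      have a : (Chebyshev.T ℝ ((m + 1 : ℕ) : ℤ)).natDegree = m + 1 := by
        rw [Chebyshev.natDegree_T]; exact Int.natAbs_natCast _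
      have b : (1 - C 2 * X ^ 2 : ℝ[X]).natDegree ≤ 2 := by compute_degree
      rw [a]
      nlinarith
    · simp [h2]
      ring
    · intro t
      simp only [eval_add, eval_mul, eval_C, eval_comp, eval_sub, eval_one, eval_pow, eval_X, key]
      rw [mul_add, h3]
      have e1 : (2 * (m + 1 : ℕ) + 1 : ℝ) * t = (2 * m + 2) * t + t := by push_cast; ring
      have e2 : (2 * m + 1 : ℝ) * t = (2 * m + 2) * t - t := by ring
      rw [e1, e2, Real.sin_add, Real.sin_sub]
      ring
    · intro t
      simp only [eval_add, eval_mul, eval_C, eval_comp, eval_sub, eval_one, eval_pow, eval_X, key]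
      have := abs_le.1 (h4 t)
      have c1 := Real.cos_le_one ((2 * m + 2) * t)
      have c2 := Real.neg_one_le_cos ((2 * m + 2) * t)
      push_cast
      rw [abs_le]
      constructor <;> linarith

/-- For every `b ∈ [-1,1]` there is a degree-`d` polynomial `p_b` with `p_b(b) = 1`,
`‖p_b‖_∞ = 1` on `[-1,1]`, and `|p_b(x)| ≤ 2/(d |x−b|)` for all `x ∈ [-1,1]`. -/
theorem exists_indicator_polynomial (d : ℕ) (hd : 1 ≤ d) (b : ℝ)
    (hb : b ∈ Set.Icc (-1 : ℝ) 1) :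
    ∃ p : Polynomial ℝ, p.natDegree ≤ d ∧ p.eval b = 1 ∧
      (⨆ x : Set.Icc (-1 : ℝ) 1, |p.eval (x : ℝ)|) = 1 ∧
      ∀ x ∈ Set.Icc (-1 : ℝ) 1, x ≠ b → |p.eval x| ≤ 2 / ((d : ℝ) * |x - b|) := by
  obtain ⟨W, h1, h2, h3, h4⟩ := aux_kernel (d / 2)
  set m := d / 2 with hm
  have hmd : 2 * m ≤ d := by omega
  have hdm : (d : ℝ) ≤ 2 * m + 1 := by
    have : d ≤ 2 * m + 1 := by omega
    exact_mod_cast this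
  have hn : (0 : ℝ) < 2 * m + 1 := by positivity
  have hd0 : (0 : ℝ) < d := by exact_mod_cast hd
  let p : ℝ[X] := C ((2 * m + 1 : ℝ)⁻¹) * W.comp (C (1 / 2) * (X - C b))
  have hev : ∀ x, p.eval x = (2 * m + 1 : ℝ)⁻¹ * W.eval (1 / 2 * (x - b)) := by
    intro x; simp [p]
  have hpb : p.eval b = 1 := by
    rw [hev, sub_self, mul_zero, h2]
    field_simp
  have hsin : ∀ x ∈ Set.Icc (-1 : ℝ) 1, Real.sin (Real.arcsin (1 / 2 * (x - b))) = 1 / 2 * (x - b) := by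
    intro x hx
    exact Real.sin_arcsin (by linarith [hx.1, hb.2]) (by linarith [hx.2, hb.1])
  have hle : ∀ x ∈ Set.Icc (-1 : ℝ) 1, |p.eval x| ≤ 1 := by
    intro x hx
    have := h4 (Real.arcsin (1 / 2 * (x - b)))
    rw [hsin x hx] at this
    rw [hev, abs_mul, abs_inv, abs_of_pos hn, inv_mul_le_iff₀ hn]
    linarith
  refine ⟨p, ?_, hpb, ?_, ?_⟩
  · refine (natDegree_C_mul_le _ _).trans (natDegree_comp_le.trans ?_)
    have : (C (1 / 2) * (X - C b) : ℝ[X]).natDegree ≤ 1 := by compute_degree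
    nlinarith
  · haveI : Nonempty (Set.Icc (-1 : ℝ) 1) := ⟨⟨b, hb⟩⟩
    apply le_antisymm
    · exact ciSup_le fun x => hle x x.2
    · have hbd : BddAbove (Set.range fun x : Set.Icc (-1 : ℝ) 1 => |p.eval (x : ℝ)|) :=
        ⟨1, by rintro _ ⟨x, rfl⟩; exact hle x x.2⟩
      have := le_ciSup hbd ⟨b, hb⟩
      simpa [hpb] using this
  · intro x hx hxb
    have hpos : 0 < |x - b| := abs_pos.2 (sub_ne_zero.2 hxb)
    have h := h3 (Real.arcsin (1 / 2 * (x - b)))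
    rw [hsin x hx] at h
    have h5 : |1 / 2 * (x - b) * W.eval (1 / 2 * (x - b))| ≤ 1 := by
      rw [h]; exact Real.abs_sin_le_one _
    rw [abs_mul, abs_mul, abs_of_pos (by norm_num : (0 : ℝ) < 1 / 2)] at h5
    rw [hev, abs_mul, abs_inv, abs_of_pos hn, inv_mul_le_iff₀ hn, mul_div_assoc', le_div_iff₀ (by positivity)]
    nlinarith [abs_nonneg (W.eval (1 / 2 * (x - b)))]
end

section
/- Let d be an even positive integer and define p(x) = (−1)^{d/2} · T_{d+1}(x)/((d+1)·x), which is a polynomial of degree d since T_{d+1} is an odd polynomial divisible by x. Then p(0) = 1, sup_{x∈[-1,1]} |p(x)| = 1, and |p(x)| ≤ 1/((d+1)·|x|) for every x ∈ [-1,1] with x ≠ 0. -/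
open Polynomial

lemma abs_cos_odd_mul_le (k : ℕ) (t : ℝ) :
    |Real.cos ((2 * k + 1) * t)| ≤ (2 * k + 1) * |Real.cos t| := by
  induction k with
  | zero => simp
  | succ k ih =>
    have e : Real.cos ((2 * ((k + 1 : ℕ) : ℝ) + 1) * t) =
        Real.cos ((2 * k + 1) * t) * Real.cos (2 * t)
          - Real.sin ((2 * k + 1) * t) * (2 * Real.sin t * Real.cos t) := by
      rw [← Real.sin_two_mul, ← Real.cos_add]
      congr 1
      push_cast
      ring
    rw [e]
    have h1 : |Real.cos ((2 * k + 1) * t) * Real.cos (2 * t)| ≤ |Real.cos ((2 * k + 1) * t)| := by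
      rw [abs_mul]
      exact mul_le_of_le_one_right (abs_nonneg _) (Real.abs_cos_le_one _)
    have h2 : |Real.sin ((2 * k + 1) * t) * (2 * Real.sin t * Real.cos t)| ≤ 2 * |Real.cos t| := by
      have h3 : |Real.sin ((2 * k + 1) * t)| * |Real.sin t| ≤ 1 :=
        mul_le_one₀ (Real.abs_sin_le_one _) (abs_nonneg _) (Real.abs_sin_le_one _)
      rw [abs_mul, abs_mul, abs_mul, abs_two]
      nlinarith [abs_nonneg (Real.cos t)]
    have h4 := abs_sub (Real.cos ((2 * k + 1) * t) * Real.cos (2 * t))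
      (Real.sin ((2 * k + 1) * t) * (2 * Real.sin t * Real.cos t))
    push_cast
    linarith

/-- For even `d > 0`, the polynomial `p(x) = (−1)^{d/2} T_{d+1}(x) / ((d+1) x)`
(a genuine polynomial of degree `d`, since the Chebyshev polynomial `T_{d+1}` is odd and
hence divisible by `X`) satisfies `p(0) = 1`, `‖p‖_∞ = 1` on `[-1,1]`, and
`|p(x)| ≤ 1/((d+1)|x|)` for `x ∈ [-1,1]`, `x ≠ 0`. -/
theorem chebyshev_indicator_polynomial (d : ℕ) (hd : 0 < d) (hdeven : Even d)
    (p : Polynomial ℝ)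
    (hp : C ((d : ℝ) + 1) * X * p =
      C ((-1 : ℝ) ^ (d / 2)) * Polynomial.Chebyshev.T ℝ ((d : ℤ) + 1)) :
    p.natDegree = d ∧ p.eval 0 = 1 ∧
      (⨆ x : Set.Icc (-1 : ℝ) 1, |p.eval (x : ℝ)|) = 1 ∧
      ∀ x ∈ Set.Icc (-1 : ℝ) 1, x ≠ 0 → |p.eval x| ≤ 1 / (((d : ℝ) + 1) * |x|) := by
  have hd1 : (0 : ℝ) < (d : ℝ) + 1 := by positivity
  have hev : ∀ x, ((d : ℝ) + 1) * x * p.eval x =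
      (-1 : ℝ) ^ (d / 2) * (Polynomial.Chebyshev.T ℝ ((d : ℤ) + 1)).eval x := by
    intro x
    simpa using congrArg (eval x) hp
  have habs : ∀ x, ((d : ℝ) + 1) * |x| * |p.eval x| =
      |(Polynomial.Chebyshev.T ℝ ((d : ℤ) + 1)).eval x| := by
    intro x
    have := congrArg abs (hev x)
    simpa [abs_mul, abs_of_pos hd1] using this
  have h0 : p.eval 0 = 1 := by
    have h := congrArg (fun q => eval 0 (derivative q)) hp
    simp only [derivative_mul, derivative_C, derivative_X, Polynomial.Chebyshev.T_derivative_eq_U,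
      eval_add, eval_mul, eval_C, eval_X] at h
    obtain ⟨m, rfl⟩ := hdeven
    have hm : (m + m) / 2 = m := by omega
    have hm2 : (((m + m : ℕ) : ℤ) + 1 - 1) = 2 * (m : ℤ) := by push_cast; ring
    rw [hm2, Polynomial.Chebyshev.U_eval_two_mul_zero, hm] at h
    have h5 : (-1 : ℝ) ^ m * (-1 : ℝ) ^ m = 1 := by
      rw [← mul_pow]; simp
    have h6 : ((((m : ℤ).negOnePow : ℤˣ) : ℤ) : ℝ) = (-1 : ℝ) ^ m := by
      simp [Int.negOnePow_def]
    rw [h6] at h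
    simp at h
    push_cast at hd1
    apply mul_left_cancel₀ hd1.ne'
    linear_combination h + ((m : ℝ) + m + 1) * h5
  have hle : ∀ x ∈ Set.Icc (-1 : ℝ) 1, |p.eval x| ≤ 1 := by
    intro x hx
    by_cases hx0 : x = 0
    · subst hx0; simp [h0]
    have hT : |(Polynomial.Chebyshev.T ℝ ((d : ℤ) + 1)).eval x| ≤ ((d : ℝ) + 1) * |x| := by
      obtain ⟨m, rfl⟩ := hdeven
      have := abs_cos_odd_mul_le m (Real.arccos x)
      rw [Real.cos_arccos hx.1 hx.2] at this
      rw [← Real.cos_arccos hx.1 hx.2, Polynomial.Chebyshev.T_real_cos,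
        Real.cos_arccos hx.1 hx.2]
      push_cast
      rwa [← two_mul]
    rw [← habs] at hT
    have : 0 < ((d : ℝ) + 1) * |x| := mul_pos hd1 (abs_pos.mpr hx0)
    exact le_of_mul_le_mul_left (by simpa using hT) this
  refine ⟨?_, h0, ?_, ?_⟩
  · have hp0 : p ≠ 0 := by
      rintro rfl
      simp at h0
    have h := congrArg natDegree hp
    rw [mul_assoc, natDegree_C_mul hd1.ne', natDegree_X_mul hp0,
      natDegree_C_mul (by simp), Polynomial.Chebyshev.natDegree_T] at h
    omega
  · haveI : Nonempty (Set.Icc (-1 : ℝ) 1) := ⟨⟨0, by norm_num⟩⟩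
    apply le_antisymm
    · exact ciSup_le fun x => hle x x.2
    · refine le_ciSup_of_le ⟨1, ?_⟩ (⟨0, by norm_num⟩ : Set.Icc (-1 : ℝ) 1) (by simp [h0])
      rintro _ ⟨x, rfl⟩
      exact hle x x.2
  · intro x hx hx0
    have : 0 < ((d : ℝ) + 1) * |x| := mul_pos hd1 (abs_pos.mpr hx0)
    rw [le_div_iff₀ this, mul_comm, habs]
    exact Polynomial.Chebyshev.abs_eval_T_real_le_one _ (abs_le.mpr hx)
end

section
/- Let d ≥ 1 be an integer, 0 < α < 1, and let m be a positive integer with m ≤ d·√α/2. Define b_j = −1 + 2j/m for j ∈ [m] = {1,…,m}, let p_{b_j} be a polynomial of degree at most d with p_{b_j}(b_j) = 1, sup_{[-1,1]}|p_{b_j}| = 1, and |p_{b_j}(x)| ≤ 2/(d·|x − b_j|) for x ≠ b_j, and for S ⊆ [m] define f_S(x) = Σ_{j∈S} p_{b_j}(x)². Then for every pair of distinct subsets S, S' ⊆ [m], one has sup_{x∈[-1,1]} |f_S(x) − f_{S'}(x)| ≥ 1 − α. In particular, no single polynomial can lie within ℓ∞ distance (1−α)/2 of both f_S and f_{S'}.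 -/
open Polynomial

theorem sum_inv_sq_aux (n : ℕ) :
    ∑ i ∈ Finset.range (n + 1), 1 / ((i : ℝ) + 1) ^ 2 ≤ 2 - 1 / ((n : ℝ) + 1) := by
  induction n with
  | zero => norm_num
  | succ n ih =>
    rw [Finset.sum_range_succ]
    have h : 1 / (((n + 1 : ℕ) : ℝ) + 1) ^ 2 ≤
        1 / ((n : ℝ) + 1) - 1 / (((n + 1 : ℕ) : ℝ) + 1) := by
      push_cast
      have hn : (0 : ℝ) ≤ n := Nat.cast_nonneg n
      rw [div_sub_div _ _ (by positivity) (by positivity),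
        div_le_div_iff₀ (by positivity) (by positivity)]
      nlinarith
    linarith

theorem sum_inv_sq_lt (n : ℕ) :
    ∑ i ∈ Finset.range n, 1 / ((i : ℝ) + 1) ^ 2 < 2 := by
  cases n with
  | zero => norm_num
  | succ n =>
    have h := sum_inv_sq_aux n
    have : 0 < 1 / ((n : ℝ) + 1) := by positivity
    linarith

theorem sum_inv_sq_dist_lt (m k : ℕ) (T : Finset ℕ) (hT : T ⊆ Finset.Icc 1 m) (hk : k ∉ T) :
    ∑ j ∈ T, 1 / ((k : ℝ) - j) ^ 2 < 4 := by
  have hsub : T ⊆ Finset.range k ∪ Finset.Ico (k + 1) (m + 1) := by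
    intro j hj
    have h1 := Finset.mem_Icc.mp (hT hj)
    have h2 : j ≠ k := fun h => hk (h ▸ hj)
    simp only [Finset.mem_union, Finset.mem_range, Finset.mem_Ico]
    omega
  have hdis : Disjoint (Finset.range k) (Finset.Ico (k + 1) (m + 1)) := by
    rw [Finset.disjoint_left]
    intro j h1 h2
    simp only [Finset.mem_range, Finset.mem_Ico] at h1 h2
    omega
  have h1 := Finset.sum_le_sum_of_subset_of_nonneg (f := fun j : ℕ => 1 / ((k : ℝ) - j) ^ 2) hsub
    (fun j _ _ => by positivity)
  rw [Finset.sum_union hdis] at h1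
  have h2 : ∑ j ∈ Finset.range k, 1 / ((k : ℝ) - j) ^ 2
      = ∑ i ∈ Finset.range k, 1 / ((i : ℝ) + 1) ^ 2 := by
    rw [← Finset.sum_range_reflect]
    apply Finset.sum_congr rfl
    intro j hj
    have hj := Finset.mem_range.mp hj
    have : ((k - 1 - j : ℕ) : ℝ) = (k : ℝ) - 1 - j := by
      rw [Nat.cast_sub (by omega), Nat.cast_sub (by omega)]
      simp
    rw [this]
    congr 2
    ring
  have h3 : ∑ j ∈ Finset.Ico (k + 1) (m + 1), 1 / ((k : ℝ) - j) ^ 2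
      = ∑ i ∈ Finset.range (m + 1 - (k + 1)), 1 / ((i : ℝ) + 1) ^ 2 := by
    rw [Finset.sum_Ico_eq_sum_range]
    apply Finset.sum_congr rfl
    intro j _
    push_cast
    congr 1
    ring
  have h4 := sum_inv_sq_lt k
  have h5 := sum_inv_sq_lt (m + 1 - (k + 1))
  linarith

theorem le_supNorm_s15 (f : ℝ → ℝ) (hf : Continuous f) (x : ℝ) (hx : x ∈ Set.Icc (-1 : ℝ) 1) :
    |f x| ≤ supNorm f := by
  have hb : BddAbove (Set.range fun x : Set.Icc (-1 : ℝ) 1 => |f x|) :=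
    (isCompact_range (by fun_prop)).bddAbove
  exact le_ciSup hb ⟨x, hx⟩

theorem indicator_sums_far_apart (d : ℕ) (hd : 1 ≤ d) (α : ℝ) (hα0 : 0 < α) (hα1 : α < 1)
    (m : ℕ) (hm : 0 < m) (hmd : (m : ℝ) ≤ (d : ℝ) * Real.sqrt α / 2)
    (b : ℕ → ℝ) (hb : ∀ j ∈ Finset.Icc 1 m, b j = -1 + 2 * (j : ℝ) / m)
    (p : ℕ → Polynomial ℝ)
    (hdeg : ∀ j ∈ Finset.Icc 1 m, (p j).natDegree ≤ d)
    (hval : ∀ j ∈ Finset.Icc 1 m, (p j).eval (b j) = 1)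
    (hsup : ∀ j ∈ Finset.Icc 1 m, (⨆ x : Set.Icc (-1 : ℝ) 1, |(p j).eval (x : ℝ)|) = 1)
    (hbound : ∀ j ∈ Finset.Icc 1 m, ∀ x ∈ Set.Icc (-1 : ℝ) 1, x ≠ b j →
      |(p j).eval x| ≤ 2 / ((d : ℝ) * |x - b j|)) :
    ∀ S ⊆ Finset.Icc 1 m, ∀ S' ⊆ Finset.Icc 1 m, S ≠ S' →
      1 - α ≤ supNorm (fun x => (∑ j ∈ S, ((p j).eval x) ^ 2) -
          ∑ j ∈ S', ((p j).eval x) ^ 2) ∧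
      ∀ q : Polynomial ℝ,
        ¬(supNorm (fun x => q.eval x - ∑ j ∈ S, ((p j).eval x) ^ 2) ≤ (1 - α) / 2 ∧
          supNorm (fun x => q.eval x - ∑ j ∈ S', ((p j).eval x) ^ 2) ≤ (1 - α) / 2) := by
  have hm0 : (0 : ℝ) < m := by exact_mod_cast hm
  have hd0 : (0 : ℝ) < d := by exact_mod_cast hd
  have hmem : ∀ k ∈ Finset.Icc 1 m, b k ∈ Set.Icc (-1 : ℝ) 1 := by
    intro k hk
    rw [hb k hk]
    have h2 : (k : ℝ) ≤ m := by exact_mod_cast (Finset.mem_Icc.mp hk).2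
    have h3 : 2 * (k : ℝ) / m ≤ 2 := by
      rw [div_le_iff₀ hm0]
      linarith
    have h4 : 0 ≤ 2 * (k : ℝ) / m := by positivity
    constructor <;> linarith
  have hsq : (m : ℝ) ^ 2 ≤ d ^ 2 * α / 4 := by
    have h := pow_le_pow_left₀ hm0.le hmd 2
    rw [div_pow, mul_pow, Real.sq_sqrt hα0.le] at h
    linarith
  have hterm : ∀ k ∈ Finset.Icc 1 m, ∀ j ∈ Finset.Icc 1 m, j ≠ k →
      ((p j).eval (b k)) ^ 2 ≤ α / 4 * (1 / ((k : ℝ) - j) ^ 2) := by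
    intro k hk j hj hjk
    have hkj : (k : ℝ) - j ≠ 0 := by
      rw [sub_ne_zero]
      exact_mod_cast hjk.symm
    have hdiff : b k - b j = 2 * ((k : ℝ) - j) / m := by
      rw [hb k hk, hb j hj]
      ring
    have hne : b k ≠ b j := by
      rw [← sub_ne_zero, hdiff]
      positivity
    have h := pow_le_pow_left₀ (abs_nonneg _) (hbound j hj (b k) (hmem k hk) hne) 2
    rw [sq_abs, div_pow, mul_pow, sq_abs, hdiff] at h
    refine h.trans ?_
    have hp : 0 < ((k : ℝ) - j) ^ 2 := by positivity
    have e : (2 : ℝ) ^ 2 / (d ^ 2 * (2 * ((k : ℝ) - j) / m) ^ 2)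
        = (m : ℝ) ^ 2 / d ^ 2 * (1 / ((k : ℝ) - j) ^ 2) := by
      field_simp
    rw [e]
    apply mul_le_mul_of_nonneg_right _ (by positivity)
    rw [div_le_iff₀ (by positivity)]
    linarith
  have key : ∀ S ⊆ Finset.Icc 1 m, ∀ S' ⊆ Finset.Icc 1 m, ∀ k ∈ S, k ∉ S' →
      1 - α < (∑ j ∈ S, ((p j).eval (b k)) ^ 2) - ∑ j ∈ S', ((p j).eval (b k)) ^ 2 := by
    intro S hS S' hS' k hk hk'
    have h1 : (1 : ℝ) ≤ ∑ j ∈ S, ((p j).eval (b k)) ^ 2 := by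
      have := Finset.single_le_sum (f := fun j => ((p j).eval (b k)) ^ 2)
        (fun j _ => sq_nonneg _) hk
      simpa [hval k (hS hk)] using this
    have h2 : ∑ j ∈ S', ((p j).eval (b k)) ^ 2 ≤ ∑ j ∈ S', α / 4 * (1 / ((k : ℝ) - j) ^ 2) :=
      Finset.sum_le_sum fun j hj =>
        hterm k (hS hk) j (hS' hj) (fun h => hk' (h ▸ hj))
    rw [← Finset.mul_sum] at h2
    have h3 := sum_inv_sq_dist_lt m k S' hS' hk'
    have h4 := mul_lt_mul_of_pos_left h3 (show 0 < α / 4 by positivity)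
    linarith
  intro S hS S' hS' hne
  have hx : ∃ x ∈ Set.Icc (-1 : ℝ) 1,
      1 - α < |(∑ j ∈ S, ((p j).eval x) ^ 2) - ∑ j ∈ S', ((p j).eval x) ^ 2| := by
    by_cases h : S ⊆ S'
    · have h' : ¬ S' ⊆ S := fun h' => hne (h.antisymm h')
      obtain ⟨k, hk, hk'⟩ := Finset.not_subset.mp h'
      refine ⟨b k, hmem k (hS' hk), ?_⟩
      rw [abs_sub_comm]
      exact (key S' hS' S hS k hk hk').trans_le (le_abs_self _)
    · obtain ⟨k, hk, hk'⟩ := Finset.not_subset.mp h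
      exact ⟨b k, hmem k (hS hk), (key S hS S' hS' k hk hk').trans_le (le_abs_self _)⟩
  obtain ⟨x, hx, hlt⟩ := hx
  refine ⟨hlt.le.trans (le_supNorm_s15 (fun x => (∑ j ∈ S, ((p j).eval x) ^ 2) -
          ∑ j ∈ S', ((p j).eval x) ^ 2) (by fun_prop) x hx), ?_⟩
  rintro q ⟨h1, h2⟩
  have h3 := (le_supNorm_s15 (fun x => q.eval x - ∑ j ∈ S, ((p j).eval x) ^ 2)
    (by fun_prop) x hx).trans h1
  have h4 := (le_supNorm_s15 (fun x => q.eval x - ∑ j ∈ S', ((p j).eval x) ^ 2)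
    (by fun_prop) x hx).trans h2
  simp only [abs_le] at h3 h4
  rcases lt_abs.mp hlt with h | h <;> linarith [h3.1, h3.2, h4.1, h4.2]
end

section
/- Let p_1(x) = x + 1, p_2(x) = 1 − x, and p_3(x) = ((3 + 2√2)/2)·(1 − x²). Then sup_{x∈[-1,1]} |p_i(x) − p_j(x)| ≤ 2 for all i, j ∈ {1,2,3}, yet for every polynomial q of degree at most 2 there exists i ∈ {1,2,3} with sup_{x∈[-1,1]} |q(x) − p_i(x)| > 1.09. -/
open Polynomial

lemma supNorm_le_aux {f : ℝ → ℝ} {M : ℝ} (h : ∀ x, -1 ≤ x → x ≤ 1 → |f x| ≤ M) :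
    supNorm f ≤ M := by
  haveI : Nonempty (Set.Icc (-1 : ℝ) 1) := ⟨⟨0, by norm_num, by norm_num⟩⟩
  exact ciSup_le fun x => h x x.2.1 x.2.2

lemma le_supNorm_aux {f : ℝ → ℝ} (hf : Continuous f) {x : ℝ} (h1 : -1 ≤ x) (h2 : x ≤ 1) :
    |f x| ≤ supNorm f := by
  have hb : BddAbove (Set.range fun x : Set.Icc (-1 : ℝ) 1 => |f x|) :=
    (isCompact_range (by fun_prop)).bddAbove
  exact le_ciSup hb ⟨x, h1, h2⟩

lemma one_three_aux {s x : ℝ} (hs : s ^ 2 = 2) (h0 : 0 ≤ s) (h1 : -1 ≤ x) (h2 : x ≤ 1) :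
    |x + 1 - (3 + 2 * s) / 2 * (1 - x ^ 2)| ≤ 2 := by
  rw [abs_le]
  constructor
  · have h : x + 1 - (3 + 2 * s) / 2 * (1 - x ^ 2) + 2
        = (3 + 2 * s) / 2 * (x + (3 - 2 * s)) ^ 2 := by
      linear_combination (4 * x - 2 * (3 + 2 * s) + 12 ) * hs
    have : 0 ≤ (3 + 2 * s) / 2 * (x + (3 - 2 * s)) ^ 2 := by positivity
    linarith
  · have : 0 ≤ (3 + 2 * s) / 2 * (1 - x ^ 2) :=
      mul_nonneg (by positivity) (by nlinarith)
    linarith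

/-- Three quadratics within `ℓ∞` distance 2 of each other on `[-1,1]`, yet no degree-2
polynomial is within `ℓ∞` distance `1.09` of all three. -/
theorem three_quadratics_lower_bound :
    (∀ i j : Fin 3,
      supNorm (fun x =>
          (![fun x : ℝ => x + 1, fun x => 1 - x,
              fun x => (3 + 2 * Real.sqrt 2) / 2 * (1 - x ^ 2)] i) x -
          (![fun x : ℝ => x + 1, fun x => 1 - x,
              fun x => (3 + 2 * Real.sqrt 2) / 2 * (1 - x ^ 2)] j) x) ≤ 2) ∧
    ∀ q : Polynomial ℝ, q.natDegree ≤ 2 →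
      ∃ i : Fin 3,
        1.09 < supNorm (fun x => q.eval x -
          (![fun x : ℝ => x + 1, fun x => 1 - x,
              fun x => (3 + 2 * Real.sqrt 2) / 2 * (1 - x ^ 2)] i) x) := by
  have hs : Real.sqrt 2 ^ 2 = 2 := Real.sq_sqrt (by norm_num)
  have h0 : 0 ≤ Real.sqrt 2 := Real.sqrt_nonneg 2
  have hs' : 1.41 ≤ Real.sqrt 2 := Real.le_sqrt_of_sq_le (by norm_num)
  generalize Real.sqrt 2 = s at *
  constructor
  · intro i j
    apply supNorm_le_aux
    intro x h1 h2
    have a1 := one_three_aux hs h0 h1 h2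
    have a2 := one_three_aux (x := -x) hs h0 (by linarith) (by linarith)
    rw [abs_le] at *
    fin_cases i <;> fin_cases j <;> simp <;> constructor <;> nlinarith [a1.1, a1.2, a2.1, a2.2]
  · intro q hq
    by_contra! H
    have e := fun x : ℝ => q.eval_eq_sum_range' (n := 3) (by omega) x
    simp only [Finset.sum_range_succ, Finset.sum_range_zero] at e
    have H1 := H 0
    have H2 := H 1
    have H3 := H 2
    simp at H1 H2 H3
    have c1 := (le_supNorm_aux (by fun_prop) (x := 1) (by norm_num) (by norm_num)).trans H1
    have c2 := (le_supNorm_aux (by fun_prop) (x := -1) (by norm_num) (by norm_num)).trans H2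
    have c3 := (le_supNorm_aux (by fun_prop) (x := 0) (by norm_num) (by norm_num)).trans H3
    have c4 := (le_supNorm_aux (by fun_prop) (x := -1/2) (by norm_num) (by norm_num)).trans H1
    have c5 := (le_supNorm_aux (by fun_prop) (x := 1/2) (by norm_num) (by norm_num)).trans H2
    simp only [e, abs_le] at c1 c2 c3 c4 c5
    obtain ⟨c1, -⟩ := c1
    obtain ⟨c2, -⟩ := c2
    obtain ⟨c3, -⟩ := c3
    obtain ⟨-, c4⟩ := c4
    obtain ⟨-, c5⟩ := c5
    norm_num at c1 c2 c3 c4 c5 hs'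
    linarith
end
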